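/- arXiv:2509.03197 — 2 statements merged into one kernel-verified Lean document; each statement's English description precedes it below -/
import Mathlib

section
/- For all σ, t ∈ ℝ and every ε > 0 there is a constant C > 0 such that for all X ≥ 2: Σ_{1 ≤ d ≤ X, d odd squarefree} |L(σ+it, χ_{8d})| ≤ C·X^{max(1, 3/2−σ)+ε}. -/
open Complex

/-!
For odd `n` the Jacobi symbol `(D/n)` makes sense for every integer `D`, so the mean square of a sum
`∑ₙ cₙ (D/n)` may be taken over all integers `|D| ≤ Z`, with the smooth weight `exp(-π D² / Z²)`.
Opening the square leaves the sums `∑_D (D/mn) exp(-π D² / Z²)`. If `mn` is a square, such a sum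
is `O(Z)`. Otherwise `(·/mn)` has mean zero, so its discrete Fourier transform vanishes at `0` and
Poisson summation leaves only dual frequencies of size at least `1 / mn`: the sum is
`O(Z (mn / Z) ^ κ)` for every `κ > 1`. With `cₙ = exp(-π n² y)` and `Z = X ^ (1 + η)` this gives
`∑_D |θ_D(y)|² ≪ X ^ (1 + η) y ^ (-B)` for `y ≥ 1 / X` and `B > 1 / 2`, hence a bound for
`∑_D |θ_D(y)|` by Cauchy–Schwarz.

On the other hand, `L(s, χ)` is up to a Gamma factor the Mellin transform of the theta function of
`χ`. The functional equation folds the Mellin integral at `y = 1 / q`, where `q` is the conductor,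
at the cost of a factor `q ^ ((b - Re s) / 2)` with `b = max (Re s) (1 - Re s)`. Summing over the
family inside the integral gives the exponent `(b - Re s) / 2 + 1 = max 1 (3/2 - Re s)`.
-/

section Theta

open ZMod HurwitzZeta
open scoped Real

lemma exp_neg_le_rpow_neg {B u : ℝ} (hB : 0 < B) (hu : 0 < u) :
    Real.exp (-u) ≤ B ^ B * u ^ (-B) := by
  have h : (u / B) ^ B ≤ Real.exp u := calc
    (u / B) ^ B ≤ Real.exp (u / B) ^ B := by gcongr; linarith [Real.add_one_le_exp (u / B)]
    _ = Real.exp u := by rw [← Real.exp_mul, div_mul_cancel₀ u hB.ne']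
  rw [Real.div_rpow hu.le hB.le, div_le_iff₀ (by positivity)] at h
  rw [Real.exp_neg, Real.rpow_neg hu.le, ← div_eq_mul_inv, le_div_iff₀ (by positivity),
    inv_mul_le_iff₀ (Real.exp_pos u)]
  exact h

lemma exp_neg_pi_sq_mul_le {A x y : ℝ} (hA : 0 < A) (hx : x ≠ 0) (hy : 0 < y) :
    Real.exp (-π * x ^ 2 * y) ≤ A ^ A * |x| ^ (-(2 * A)) * y ^ (-A) := by
  have hx' : 0 < |x| := abs_pos.mpr hx
  calc Real.exp (-π * x ^ 2 * y) ≤ Real.exp (-(|x| ^ 2 * y)) := by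
        rw [sq_abs, Real.exp_le_exp]
        nlinarith [Real.pi_gt_three, mul_nonneg (sq_nonneg x) hy.le]
    _ ≤ A ^ A * (|x| ^ 2 * y) ^ (-A) := exp_neg_le_rpow_neg hA (by positivity)
    _ = A ^ A * |x| ^ (-(2 * A)) * y ^ (-A) := by
        rw [Real.mul_rpow (by positivity) hy.le, ← Real.rpow_natCast, ← Real.rpow_mul hx'.le,
          mul_assoc, Nat.cast_ofNat, mul_neg]

lemma summable_exp_neg_pi_int_sq_mul {y : ℝ} (hy : 0 < y) :
    Summable fun n : ℤ ↦ Real.exp (-π * n ^ 2 * y) := by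
  simpa only [add_zero] using (hasSum_int_evenKernel 0 hy).summable

/-- The constant in the power decay `θ_Φ(y) ≪ y ^ (-A)` of a theta function without constant term.
The term `n = 0` vanishes, as `0 ^ r = 0` for real `r ≠ 0`. -/
noncomputable def thetaDecayConst (A : ℝ) : ℝ := A ^ A * ∑' n : ℤ, |(n : ℝ)| ^ (-(2 * A))

lemma thetaDecayConst_nonneg {A : ℝ} (hA : 0 ≤ A) : 0 ≤ thetaDecayConst A :=
  mul_nonneg (by positivity) (tsum_nonneg fun _ ↦ by positivity)

variable {q : ℕ}

/-- The theta function `θ_Φ(y) = ∑ₙ Φ(n) exp(-π n² y)` of a function `Φ` on `ℤ/q`, summed over all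
integers `n`. -/
noncomputable def theta (Φ : ZMod q → ℂ) (y : ℝ) : ℂ :=
  ∑' n : ℤ, Φ n * Real.exp (-π * n ^ 2 * y)

lemma norm_theta_le {Φ : ZMod q → ℂ} (h0 : Φ 0 = 0) {M : ℝ} (hM : ∀ a, ‖Φ a‖ ≤ M) {A y : ℝ}
    (hA : 1 / 2 < A) (hy : 0 < y) : ‖theta Φ y‖ ≤ M * thetaDecayConst A * y ^ (-A) := by
  have hM0 : 0 ≤ M := (norm_nonneg _).trans (hM 0)
  have hsum : Summable fun n : ℤ ↦ |(n : ℝ)| ^ (-(2 * A)) :=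
    Real.summable_abs_int_rpow (by linarith)
  have hbound := (hsum.hasSum.mul_left (M * A ^ A)).mul_right (y ^ (-A))
  rw [thetaDecayConst, ← mul_assoc]
  refine tsum_of_norm_bounded hbound fun n ↦ ?_
  rw [norm_mul, norm_real, Real.norm_eq_abs, Real.abs_exp]
  rcases eq_or_ne n 0 with rfl | hn
  · rw [Int.cast_zero, h0, norm_zero, zero_mul]
    positivity
  · calc ‖Φ n‖ * Real.exp (-π * n ^ 2 * y)
        ≤ M * (A ^ A * |(n : ℝ)| ^ (-(2 * A)) * y ^ (-A)) := by
          gcongr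
          exacts [hM n, exp_neg_pi_sq_mul_le (by linarith) (Int.cast_ne_zero.mpr hn) hy]
      _ = M * A ^ A * |(n : ℝ)| ^ (-(2 * A)) * y ^ (-A) := by ring

variable [NeZero q] (Φ : ZMod q → ℂ)

lemma summable_theta {y : ℝ} (hy : 0 < y) :
    Summable fun n : ℤ ↦ Φ n * (Real.exp (-π * n ^ 2 * y) : ℂ) := by
  obtain ⟨M, hM⟩ := Finite.exists_le fun a ↦ ‖Φ a‖
  refine ((summable_exp_neg_pi_int_sq_mul hy).mul_left M).of_norm_bounded fun n ↦ ?_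
  rw [norm_mul, norm_real, Real.norm_eq_abs, Real.abs_exp]
  gcongr
  exact hM n

lemma exists_zmod_prod_int_equiv_int (q : ℕ) [NeZero q] :
    ∃ e : ZMod q × ℤ ≃ ℤ, ∀ a m, e (a, m) = m * q + a.val := by
  refine ⟨((Equiv.prodComm _ _).trans ((Equiv.refl ℤ).prodCongr
    (ZMod.finEquiv q).symm.toEquiv)).trans (Int.divModEquiv q).symm, fun a m ↦ ?_⟩
  cases q with
  | zero => exact absurd rfl (NeZero.ne 0)
  | succ => rfl

lemma theta_eq_sum_evenKernel {y : ℝ} (hy : 0 < y) :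
    theta Φ y = ∑ a : ZMod q, Φ a * evenKernel ((a.val / q : ℝ) : UnitAddCircle) (q ^ 2 * y) := by
  have hq : (q : ℝ) ≠ 0 := Nat.cast_ne_zero.mpr (NeZero.ne q)
  obtain ⟨e, he⟩ := exists_zmod_prod_int_equiv_int q
  have hsum := (summable_theta Φ hy).hasSum
  rw [← e.hasSum_iff] at hsum
  refine (hsum.prod_fiberwise fun a ↦ ?_).unique (hasSum_fintype _)
  have hker := hasSum_int_evenKernel (a.val / q : ℝ) (t := q ^ 2 * y) (by positivity)
  refine ((hasSum_ofReal.mpr hker).mul_left (Φ a)).congr_fun fun m ↦ ?_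
  have hexp : -π * ((m * q + a.val : ℤ) : ℝ) ^ 2 * y =
      -π * (m + a.val / q : ℝ) ^ 2 * (q ^ 2 * y) := by
    push_cast
    field_simp
  simp only [Function.comp_apply, he, hexp]
  congr 2
  simp

lemma continuousOn_theta : ContinuousOn (theta Φ) (Set.Ioi 0) := by
  have hq : (0 : ℝ) < q := Nat.cast_pos.mpr (NeZero.pos q)
  refine ContinuousOn.congr (continuousOn_finsetSum _ fun a _ ↦ continuousOn_const.mul
    (continuous_ofReal.comp_continuousOn ?_)) fun y hy ↦ theta_eq_sum_evenKernel Φ hy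
  exact (continuousOn_evenKernel _).comp (by fun_prop) fun y (hy : 0 < y) ↦
    show 0 < (q : ℝ) ^ 2 * y by positivity

lemma stdAddChar_neg_mul_intCast (a : ZMod q) (n : ℤ) :
    stdAddChar (-(a * (n : ZMod q))) = cexp (2 * π * I * ((-(a.val / q) : ℝ) : ℂ) * n) := by
  have h : -(a * (n : ZMod q)) = ((-(a.val * n) : ℤ) : ZMod q) := by simp
  rw [h, stdAddChar_coe]
  congr 1
  push_cast
  ring

lemma theta_eq_theta_dft {y : ℝ} (hy : 0 < y) :
    theta Φ y =
      ((q : ℝ)⁻¹ * y ^ (-(1 / 2) : ℝ) : ℝ) * theta (ZMod.dft Φ) (1 / (q ^ 2 * y)) := by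
  have hq : (0 : ℝ) < q := Nat.cast_pos.mpr (NeZero.pos q)
  have hz : 0 < 1 / (q ^ 2 * y) := by positivity
  have hcoeff : 1 / (q ^ 2 * y) ^ (1 / 2 : ℝ) = (q : ℝ)⁻¹ * y ^ (-(1 / 2) : ℝ) := by
    rw [Real.mul_rpow (by positivity) hy.le, ← Real.sqrt_eq_rpow, Real.sqrt_sq hq.le,
      Real.rpow_neg hy.le, one_div, mul_inv]
  have hcos : HasSum
      (fun n : ℤ ↦ ∑ a : ZMod q, Φ a * (cexp (2 * π * I * ((-(a.val / q) : ℝ) : ℂ) * n) *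
        Real.exp (-π * n ^ 2 * (1 / (q ^ 2 * y)))))
      (∑ a : ZMod q, Φ a * cosKernel ((a.val / q : ℝ) : UnitAddCircle) (1 / (q ^ 2 * y))) := by
    refine hasSum_sum fun a _ ↦ HasSum.mul_left (Φ a) ?_
    rw [← cosKernel_neg, ← QuotientAddGroup.mk_neg]
    exact hasSum_int_cosKernel (-(a.val / q)) hz
  have htheta : theta (ZMod.dft Φ) (1 / (q ^ 2 * y)) =
      ∑ a : ZMod q, Φ a * cosKernel ((a.val / q : ℝ) : UnitAddCircle) (1 / (q ^ 2 * y)) := by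
    refine (summable_theta _ hz).hasSum.unique (hcos.congr_fun fun n ↦ ?_)
    simp only [ZMod.dft_apply, stdAddChar_neg_mul_intCast, smul_eq_mul, Finset.sum_mul]
    exact Finset.sum_congr rfl fun a _ ↦ by ring
  rw [theta_eq_sum_evenKernel Φ hy, htheta, Finset.mul_sum, ← hcoeff]
  refine Finset.sum_congr rfl fun a _ ↦ ?_
  rw [evenKernel_functional_equation]
  push_cast
  ring

end Theta

section MellinTheta

open ZMod Set Filter Asymptotics Topology MeasureTheory
open scoped Real

variable {q : ℕ} [NeZero q] {Φ : ZMod q → ℂ}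

lemma norm_dft_le {M : ℝ} (hM : ∀ a, ‖Φ a‖ ≤ M) (k : ZMod q) : ‖ZMod.dft Φ k‖ ≤ q * M := by
  rw [ZMod.dft_apply]
  refine (norm_sum_le_of_le _ fun j _ ↦ ?_).trans_eq
    (b := ∑ _j : ZMod q, M) (by rw [Finset.sum_const, Finset.card_univ, ZMod.card, nsmul_eq_mul])
  rw [norm_smul, AddChar.norm_apply, one_mul]
  exact hM j

lemma norm_theta_le_of_sum_eq_zero (hsum : ∑ a, Φ a = 0) {M : ℝ} (hM : ∀ a, ‖Φ a‖ ≤ M)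
    {A y : ℝ} (hA : 1 / 2 < A) (hy : 0 < y) :
    ‖theta Φ y‖ ≤ M * thetaDecayConst A * (q ^ 2) ^ A * y ^ (A - 1 / 2) := by
  have hq : (0 : ℝ) < q := Nat.cast_pos.mpr (NeZero.pos q)
  have hdft : ‖theta (ZMod.dft Φ) (1 / (q ^ 2 * y))‖ ≤
      q * M * thetaDecayConst A * (1 / (q ^ 2 * y)) ^ (-A) :=
    norm_theta_le (by rw [ZMod.dft_apply_zero, hsum]) (norm_dft_le hM) hA (by positivity)
  rw [theta_eq_theta_dft Φ hy, norm_mul, norm_real, Real.norm_of_nonneg (by positivity)]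
  calc (q : ℝ)⁻¹ * y ^ (-(1 / 2) : ℝ) * ‖theta (ZMod.dft Φ) (1 / (q ^ 2 * y))‖
      ≤ (q : ℝ)⁻¹ * y ^ (-(1 / 2) : ℝ) *
          (q * M * thetaDecayConst A * (1 / (q ^ 2 * y)) ^ (-A)) := by gcongr
    _ = M * thetaDecayConst A * (q ^ 2) ^ A * (y ^ A * y ^ (-(1 / 2) : ℝ)) := by
        rw [one_div (_ * _), Real.inv_rpow (by positivity), ← Real.rpow_neg (by positivity),
          neg_neg, Real.mul_rpow (by positivity) hy.le]
        field_simp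
    _ = M * thetaDecayConst A * (q ^ 2) ^ A * y ^ (A - 1 / 2) := by
        rw [← Real.rpow_add hy, sub_eq_add_neg]

lemma isBigO_atTop_theta (h0 : Φ 0 = 0) {A : ℝ} (hA : 1 / 2 < A) :
    theta Φ =O[atTop] (· ^ (-A)) := by
  obtain ⟨M, hM⟩ := Finite.exists_le fun a ↦ ‖Φ a‖
  refine .of_bound (M * thetaDecayConst A) ?_
  filter_upwards [eventually_gt_atTop 0] with y hy
  rw [Real.norm_of_nonneg (by positivity : 0 ≤ y ^ (-A))]
  exact norm_theta_le h0 hM hA hy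

lemma isBigO_nhdsGT_zero_theta (hsum : ∑ a, Φ a = 0) {A : ℝ} (hA : 1 / 2 < A) :
    theta Φ =O[𝓝[>] 0] (· ^ (A - 1 / 2)) := by
  obtain ⟨M, hM⟩ := Finite.exists_le fun a ↦ ‖Φ a‖
  refine .of_bound (M * thetaDecayConst A * (q ^ 2) ^ A) ?_
  filter_upwards [self_mem_nhdsWithin] with y (hy : 0 < y)
  rw [Real.norm_of_nonneg (by positivity : 0 ≤ y ^ (A - 1 / 2))]
  exact norm_theta_le_of_sum_eq_zero hsum hM hA hy

lemma isBigO_nhdsGT_zero_theta_neg_abs (hsum : ∑ a, Φ a = 0) (r : ℝ) :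
    theta Φ =O[𝓝[>] 0] (· ^ (-(-(|r| + 1)))) := by
  have h := isBigO_nhdsGT_zero_theta hsum (A := |r| + 1 + 1 / 2) (by linarith [abs_nonneg r])
  simpa only [add_sub_cancel_right, neg_neg] using h

lemma locallyIntegrableOn_theta : LocallyIntegrableOn (theta Φ) (Ioi 0) :=
  (continuousOn_theta Φ).locallyIntegrableOn measurableSet_Ioi

lemma mellinConvergent_theta (h0 : Φ 0 = 0) (hsum : ∑ a, Φ a = 0) (s : ℂ) :
    MellinConvergent (theta Φ) s :=
  mellinConvergent_of_isBigO_rpow locallyIntegrableOn_theta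
    (isBigO_atTop_theta h0 (A := |s.re| + 1) (by linarith [abs_nonneg s.re]))
    (by linarith [le_abs_self s.re]) (isBigO_nhdsGT_zero_theta_neg_abs hsum s.re)
    (by linarith [neg_abs_le s.re])

lemma differentiable_mellin_theta (h0 : Φ 0 = 0) (hsum : ∑ a, Φ a = 0) :
    Differentiable ℂ (mellin (theta Φ)) := fun s ↦
  mellin_differentiableAt_of_isBigO_rpow locallyIntegrableOn_theta
    (isBigO_atTop_theta h0 (A := |s.re| + 1) (by linarith [abs_nonneg s.re]))
    (by linarith [le_abs_self s.re]) (isBigO_nhdsGT_zero_theta_neg_abs hsum s.re)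
    (by linarith [neg_abs_le s.re])

lemma mellin_theta_of_one_lt_re (hΦ : Φ.Even) (h0 : Φ 0 = 0) {s : ℂ} (hs : 1 < s.re) :
    mellin (theta Φ) (s / 2) = 2 * Gammaℝ s * LFunction Φ s := by
  obtain ⟨M, hM⟩ := Finite.exists_le fun a ↦ ‖Φ a‖
  have htheta (y : ℝ) (hy : y ∈ Ioi 0) : HasSum (fun n : ℤ ↦ if (n : ℝ) = 0 then 0 else
      Φ n * (Real.exp (-π * (n : ℝ) ^ 2 * y) : ℂ)) (theta Φ y) := by
    refine (summable_theta Φ hy).hasSum.congr_fun fun n ↦ ?_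
    rcases eq_or_ne n 0 with rfl | hn
    · simp [h0]
    · exact if_neg (Int.cast_ne_zero.mpr hn)
  have hsummable : Summable fun n : ℤ ↦ ‖Φ n‖ / |(n : ℝ)| ^ s.re := by
    refine .of_nonneg_of_le (fun n ↦ by positivity) (fun n ↦ ?_)
      ((Real.summable_abs_int_rpow hs).mul_left M)
    rw [Real.rpow_neg (abs_nonneg _), div_eq_mul_inv]
    gcongr
    exact hM n
  have hmellin := (hasSum_mellin_pi_mul_sq (by linarith) htheta hsummable).nat_add_neg
  simp only [Int.cast_zero, h0, mul_zero, zero_div, add_zero] at hmellin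
  have hL := (LSeriesSummable_of_one_lt_re Φ hs).hasSum.mul_left (2 * Gammaℝ s)
  rw [LFunction_eq_LSeries Φ hs]
  refine hmellin.unique (hL.congr_fun fun n ↦ ?_)
  rcases eq_or_ne n 0 with rfl | hn
  · simp [h0]
  · rw [LSeries.term_of_ne_zero hn, Int.cast_neg, Int.cast_natCast, hΦ n, Int.cast_neg, abs_neg,
      Int.cast_natCast, Nat.abs_cast, ofReal_natCast]
    ring

lemma mellin_theta (hΦ : Φ.Even) (h0 : Φ 0 = 0) (hsum : ∑ a, Φ a = 0) (s : ℂ) :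
    mellin (theta Φ) (s / 2) = 2 * completedLFunction Φ s := by
  have hmellin : Differentiable ℂ fun s ↦ mellin (theta Φ) (s / 2) :=
    (differentiable_mellin_theta h0 hsum).comp (by fun_prop)
  have hcompleted : Differentiable ℂ fun s ↦ 2 * completedLFunction Φ s :=
    (differentiable_completedLFunction h0 hsum).const_mul 2
  refine congrFun (AnalyticOnNhd.eq_of_eventuallyEq (z₀ := 2)
    (analyticOnNhd_univ_iff_differentiable.mpr hmellin)
    (analyticOnNhd_univ_iff_differentiable.mpr hcompleted) ?_) s
  have hhalf : {z : ℂ | 1 < z.re} ∈ 𝓝 2 :=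
    (continuous_re.isOpen_preimage _ isOpen_Ioi).mem_nhds (by simp)
  filter_upwards [hhalf] with z (hz : 1 < z.re)
  rw [mellin_theta_of_one_lt_re hΦ h0 hz,
    LFunction_eq_completed_div_gammaFactor_even hΦ z (.inr h0), mul_assoc,
    mul_div_cancel₀ _ (Gammaℝ_ne_zero_of_re_pos (by linarith))]

end MellinTheta

section Folding

open Set MeasureTheory

lemma norm_mellin_le (F : ℝ → ℂ) (s : ℂ) :
    ‖mellin F s‖ ≤ ∫ x in Ioi 0, ‖F x‖ * x ^ (s.re - 1) := by
  refine (norm_integral_le_integral_norm _).trans_eq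
    (setIntegral_congr_fun measurableSet_Ioi fun x hx ↦ ?_)
  simp only [norm_smul, norm_cpow_eq_rpow_re_of_pos hx, sub_re, one_re, mul_comm]

lemma integrableOn_norm_mul_rpow_of_mellinConvergent {F : ℝ → ℂ} {a : ℝ}
    (h : MellinConvergent F a) : IntegrableOn (fun x ↦ ‖F x‖ * x ^ (a - 1)) (Ioi 0) := by
  refine IntegrableOn.congr_fun h.norm (fun x hx ↦ ?_) measurableSet_Ioi
  simp only [norm_smul, norm_cpow_eq_rpow_re_of_pos hx, sub_re, one_re, ofReal_re, mul_comm]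

lemma integral_Ioo_mul_rpow_of_inv {f : ℝ → ℝ} {k : ℝ} (hf : ∀ x, 0 < x → f x⁻¹ = x ^ k * f x)
    (a : ℝ) :
    ∫ x in Ioo 0 1, f x * x ^ (a - 1) = ∫ x in Ioi 1, f x * x ^ (k - a - 1) := by
  have hsubst := integral_comp_rpow_Ioi ((Ioo 0 1).indicator fun x ↦ f x * x ^ (a - 1))
    (p := -1) (by norm_num)
  rw [setIntegral_indicator measurableSet_Ioo, inter_eq_right.mpr Ioo_subset_Ioi_self] at hsubst
  rw [← hsubst, ← inter_eq_right.mpr (Ioi_subset_Ioi (zero_le_one' ℝ)),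
    ← setIntegral_indicator measurableSet_Ioi]
  refine setIntegral_congr_fun measurableSet_Ioi fun x (hx : 0 < x) ↦ ?_
  simp only [smul_eq_mul, abs_neg, abs_one, one_mul, Real.rpow_neg_one]
  by_cases h1 : 1 < x
  · rw [indicator_of_mem (by exact ⟨by positivity, inv_lt_one_of_one_lt₀ h1⟩),
      indicator_of_mem (by exact h1), hf x hx, Real.inv_rpow hx.le, ← Real.rpow_neg hx.le]
    calc x ^ (-1 - 1 : ℝ) * (x ^ k * f x * x ^ (-(a - 1)))
        = f x * (x ^ (-1 - 1 : ℝ) * x ^ k * x ^ (-(a - 1))) := by ring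
      _ = f x * x ^ (k - a - 1) := by
          rw [← Real.rpow_add hx, ← Real.rpow_add hx]
          ring_nf
  · rw [indicator_of_notMem fun h ↦ h1 ((inv_lt_one₀ hx).mp h.2), indicator_of_notMem (by exact h1),
      mul_zero]

lemma norm_mellin_le_of_inv {F : ℝ → ℂ} {k : ℝ} (hF : ∀ x, 0 < x → ‖F x⁻¹‖ = x ^ k * ‖F x‖)
    (hconv : ∀ a : ℝ, MellinConvergent F a) {s : ℂ} {b : ℝ} (hs : s.re ≤ b)
    (hs' : k - s.re ≤ b) : ‖mellin F s‖ ≤ 2 * ∫ x in Ioi 1, ‖F x‖ * x ^ (b - 1) := by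
  have hint (a : ℝ) := integrableOn_norm_mul_rpow_of_mellinConvergent (hconv a)
  have hsub : Ioi (1 : ℝ) ⊆ Ioi 0 := Ioi_subset_Ioi zero_le_one
  have hmono (a : ℝ) (ha : a ≤ b) :
      ∫ x in Ioi 1, ‖F x‖ * x ^ (a - 1) ≤ ∫ x in Ioi 1, ‖F x‖ * x ^ (b - 1) := by
    refine setIntegral_mono_on ((hint a).mono_set hsub) ((hint b).mono_set hsub)
      measurableSet_Ioi fun x (hx : 1 < x) ↦ ?_
    gcongr
    exact hx.le
  have hsplit : ∫ x in Ioi 0, ‖F x‖ * x ^ (s.re - 1) =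
      (∫ x in Ioo 0 1, ‖F x‖ * x ^ (s.re - 1)) + ∫ x in Ioi 1, ‖F x‖ * x ^ (s.re - 1) := by
    rw [← integral_Ioc_eq_integral_Ioo, ← setIntegral_union Ioc_disjoint_Ioi_same
      measurableSet_Ioi ((hint _).mono_set Ioc_subset_Ioi_self) ((hint _).mono_set hsub),
      Ioc_union_Ioi_eq_Ioi zero_le_one]
  rw [integral_Ioo_mul_rpow_of_inv hF] at hsplit
  linarith [norm_mellin_le F s, hmono _ hs, hmono _ hs']

lemma norm_mellin_le_of_inv_sq_mul {F : ℝ → ℂ} {k N : ℝ} (hN : 0 < N)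
    (hF : ∀ y, 0 < y → ‖F (1 / (N ^ 2 * y))‖ = (N * y) ^ k * ‖F y‖)
    (hconv : ∀ a : ℝ, MellinConvergent F a) {s : ℂ} {b : ℝ} (hs : s.re ≤ b)
    (hs' : k - s.re ≤ b) :
    ‖mellin F s‖ ≤ 2 * N ^ (b - s.re) * ∫ y in Ioi (1 / N), ‖F y‖ * y ^ (b - 1) := by
  have hN' : 0 < N⁻¹ := inv_pos.mpr hN
  have hdual (x : ℝ) (hx : 0 < x) : ‖F (N⁻¹ * x⁻¹)‖ = x ^ k * ‖F (N⁻¹ * x)‖ := by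
    have h := hF (N⁻¹ * x) (by positivity)
    rw [mul_inv_cancel_left₀ hN.ne'] at h
    rw [← h]
    congr 2
    field_simp
  have hfold := norm_mellin_le_of_inv (F := fun x ↦ F (N⁻¹ * x)) hdual
    (fun a ↦ (MellinConvergent.comp_mul_left hN').mpr (hconv a)) hs hs'
  have hscale : ∫ x in Ioi 1, ‖F (N⁻¹ * x)‖ * x ^ (b - 1) =
      N ^ b * ∫ y in Ioi (1 / N), ‖F y‖ * y ^ (b - 1) := by
    have h := integral_comp_mul_left_Ioi (fun y ↦ ‖F y‖ * y ^ (b - 1)) 1 hN'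
    rw [mul_one, inv_inv, smul_eq_mul, ← one_div] at h
    rw [show N ^ b = N ^ (b - 1) * N by rw [← Real.rpow_add_one hN.ne', sub_add_cancel], mul_assoc,
      ← h, ← integral_const_mul]
    refine setIntegral_congr_fun measurableSet_Ioi fun x (hx : 1 < x) ↦ ?_
    simp only [one_div]
    rw [Real.mul_rpow hN'.le (by linarith), Real.inv_rpow hN.le]
    field_simp
  rw [mellin_comp_mul_left F s hN', norm_smul, norm_cpow_eq_rpow_re_of_pos hN', neg_re,
    Real.inv_rpow hN.le, Real.rpow_neg hN.le, inv_inv, hscale,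
    ← le_div_iff₀' (by positivity)] at hfold
  refine hfold.trans_eq ?_
  rw [Real.rpow_sub hN]
  ring

end Folding

section PrimitiveCharacter

open ZMod Set MeasureTheory DirichletCharacter

variable {q : ℕ}

lemma theta_const_mul (c : ℂ) (Φ : ZMod q → ℂ) (y : ℝ) :
    theta (fun a ↦ c * Φ a) y = c * theta Φ y := by
  simp only [theta, mul_assoc, tsum_mul_left]

lemma theta_comp_neg (Φ : ZMod q → ℂ) (y : ℝ) : theta (fun a ↦ Φ (-a)) y = theta Φ y := by
  rw [theta, theta, ← (Equiv.neg ℤ).tsum_eq]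
  simp only [Equiv.neg_apply, Int.cast_neg, neg_neg, neg_sq]

lemma norm_theta_star (Φ : ZMod q → ℂ) (y : ℝ) : ‖theta (fun a ↦ star (Φ a)) y‖ = ‖theta Φ y‖ := by
  rw [← norm_star (theta Φ y), theta, theta, RCLike.star_def, conj_tsum]
  simp only [map_mul, conj_ofReal]

variable {ψ : DirichletCharacter ℂ q}

lemma map_zero_of_ne_one (hψ : ψ ≠ 1) : ψ 0 = 0 :=
  ψ.map_nonunit fun h ↦ hψ <| MulChar.ext fun u ↦ by
    have := subsingleton_of_zero_eq_one (isUnit_zero_iff.mp h)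
    rw [Subsingleton.elim u 1, Units.val_one, map_one, map_one]

variable [NeZero q]

lemma dft_eq_gaussSum_mul_star_neg (hψ : ψ.IsPrimitive) :
    ZMod.dft ψ = fun k ↦ gaussSum ψ stdAddChar * star (ψ (-k)) :=
  funext fun k ↦ by rw [hψ.fourierTransform_eq_inv_mul_gaussSum, mul_comm, MulChar.star_apply']

lemma norm_gaussSum_sq (hψ : ψ.IsPrimitive) : ‖gaussSum ψ stdAddChar‖ ^ 2 = q := by
  have hstar : ZMod.dft (fun a ↦ star (ψ a)) 1 = star (gaussSum ψ stdAddChar) := by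
    simp only [ZMod.dft_apply, gaussSum, star_sum, star_mul', mul_one, smul_eq_mul, mul_comm,
      AddChar.map_neg_eq_conj, RCLike.star_def]
  have hneg : ZMod.dft (fun a ↦ star (ψ (-a))) (-1) = star (gaussSum ψ stdAddChar) := by
    simp only [ZMod.dft_comp_neg fun a ↦ star (ψ a), neg_neg, hstar]
  have hinv := congrFun (ZMod.dft_dft (ψ : ZMod q → ℂ)) (-1)
  rw [dft_eq_gaussSum_mul_star_neg hψ, ZMod.dft_const_mul] at hinv
  simp only [hneg, neg_neg, map_one, smul_eq_mul, mul_one] at hinv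
  rw [RCLike.star_def, mul_conj'] at hinv
  exact_mod_cast hinv

lemma norm_theta_dual (hψ : ψ.IsPrimitive) {y : ℝ} (hy : 0 < y) :
    ‖theta ψ (1 / ((q : ℝ) ^ 2 * y))‖ = ((q : ℝ) * y) ^ (1 / 2 : ℝ) * ‖theta ψ y‖ := by
  have hq : (0 : ℝ) < q := Nat.cast_pos.mpr (NeZero.pos q)
  have hgauss : ‖gaussSum ψ stdAddChar‖ = (q : ℝ) ^ (1 / 2 : ℝ) := by
    rw [← norm_gaussSum_sq hψ, ← Real.sqrt_eq_rpow, Real.sqrt_sq (norm_nonneg _)]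
  have hdft : ‖theta (ZMod.dft ψ) (1 / ((q : ℝ) ^ 2 * y))‖ =
      (q : ℝ) ^ (1 / 2 : ℝ) * ‖theta ψ (1 / ((q : ℝ) ^ 2 * y))‖ := by
    rw [dft_eq_gaussSum_mul_star_neg hψ, theta_const_mul, theta_comp_neg fun a ↦ star (ψ a),
      norm_mul, hgauss, norm_theta_star]
  rw [theta_eq_theta_dft (ψ : ZMod q → ℂ) hy, norm_mul, hdft, norm_real,
    Real.norm_of_nonneg (by positivity), Real.mul_rpow hq.le hy.le, Real.rpow_neg hy.le]
  calc ‖theta ψ (1 / ((q : ℝ) ^ 2 * y))‖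
      = ((q : ℝ) ^ (1 / 2 : ℝ) * (q : ℝ) ^ (1 / 2 : ℝ)) * (q : ℝ)⁻¹ *
          (y ^ (1 / 2 : ℝ) * (y ^ (1 / 2 : ℝ))⁻¹) * ‖theta ψ (1 / ((q : ℝ) ^ 2 * y))‖ := by
        rw [← Real.rpow_add hq, add_halves, Real.rpow_one, mul_inv_cancel₀ hq.ne',
          mul_inv_cancel₀ (by positivity), one_mul, one_mul]
    _ = _ := by ring

lemma mellinConvergent_theta_of_ne_one (hψ : ψ ≠ 1) (s : ℂ) : MellinConvergent (theta ψ) s :=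
  mellinConvergent_theta (map_zero_of_ne_one hψ) (MulChar.sum_eq_zero_of_ne_one hψ) s

lemma norm_LFunction_le (hψ : ψ.IsPrimitive) (he : ψ.Even) (hne : ψ ≠ 1) {s : ℂ} {b : ℝ}
    (hs : s.re ≤ b) (hs' : 1 - s.re ≤ b) :
    ‖ψ.LFunction s‖ ≤ ‖(Gammaℝ s)⁻¹‖ * (q : ℝ) ^ ((b - s.re) / 2) *
      ∫ y in Ioi (1 / q : ℝ), ‖theta ψ y‖ * y ^ (b / 2 - 1) := by
  have h0 : ψ 0 = 0 := map_zero_of_ne_one hne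
  have hhalf : (s / 2).re = s.re / 2 := by simp
  have hfold := norm_mellin_le_of_inv_sq_mul (s := s / 2) (b := b / 2)
    (Nat.cast_pos.mpr (NeZero.pos q)) (fun y hy ↦ norm_theta_dual hψ hy)
    (fun a ↦ mellinConvergent_theta_of_ne_one hne a) (by linarith) (by linarith)
  rw [mellin_theta he.to_fun h0 (MulChar.sum_eq_zero_of_ne_one hne), norm_mul, Complex.norm_ofNat,
    mul_assoc, hhalf, ← sub_div] at hfold
  rw [DirichletCharacter.LFunction,
    LFunction_eq_completed_div_gammaFactor_even he.to_fun s (.inr h0), div_eq_inv_mul,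
    norm_mul, mul_assoc]
  gcongr
  linarith

end PrimitiveCharacter

section Jacobi

open scoped Real

lemma exists_jacobiSym_prime_eq_neg_one {p : ℕ} (hp : p.Prime) (h2 : p ≠ 2) :
    ∃ a : ℕ, jacobiSym a p = -1 := by
  have : Fact p.Prime := ⟨hp⟩
  obtain ⟨a, ha⟩ := FiniteField.exists_nonsquare (F := ZMod p) (by rwa [ZMod.ringChar_zmod_n])
  exact ⟨a.val, ZMod.nonsquare_iff_jacobiSym_eq_neg_one.mpr (by simpa using ha)⟩

lemma jacobiSym_natCast_eq_of_modEq {a b n : ℕ} (h : a ≡ b [MOD n]) :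
    jacobiSym a n = jacobiSym b n :=
  jacobiSym.mod_left' (by exact_mod_cast h)

lemma exists_prime_odd_factorization {k : ℕ} (hk : k ≠ 0) (hsq : ¬IsSquare k) :
    ∃ p, p.Prime ∧ Odd (k.factorization p) := by
  by_contra! h
  refine hsq ?_
  rw [← Nat.prod_factorization_pow_eq_self hk]
  refine Finset.isSquare_prod _ fun p hp ↦ Even.isSquare_pow ?_ p
  exact Nat.not_odd_iff_even.mp (h p (Nat.prime_of_mem_primeFactors hp))

lemma exists_jacobiSym_eq_neg_one {k : ℕ} (hk : Odd k) (hsq : ¬IsSquare k) :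
    ∃ a : ℕ, jacobiSym a k = -1 := by
  have hk0 : k ≠ 0 := hk.pos.ne'
  obtain ⟨p, hp, hodd⟩ := exists_prime_odd_factorization hk0 hsq
  have hpk : p ∣ k := Nat.dvd_of_factorization_pos hodd.pos.ne'
  have h2 : p ≠ 2 := fun h ↦ Nat.not_even_iff_odd.mpr hk (even_iff_two_dvd.mpr (h ▸ hpk))
  obtain ⟨a, ha⟩ := exists_jacobiSym_prime_eq_neg_one hp h2
  obtain ⟨x, hxp, hxm⟩ := Nat.chineseRemainder (Nat.coprime_ordCompl hp hk0) a 1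
  refine ⟨x, ?_⟩
  rw [← Nat.ordProj_mul_ordCompl_eq_self k p,
    jacobiSym.mul_right' _ (pow_ne_zero _ hp.ne_zero) (Nat.ordCompl_pos p hk0).ne',
    jacobiSym.pow_right, jacobiSym_natCast_eq_of_modEq hxp, jacobiSym_natCast_eq_of_modEq hxm, ha,
    hodd.neg_one_pow, Nat.cast_one, jacobiSym.one_left, mul_one]

lemma abs_jacobiSym_le_one (a : ℤ) (k : ℕ) : |jacobiSym a k| ≤ 1 := by
  rcases jacobiSym.trichotomy a k with h | h | h <;> simp [h]

/-- The Jacobi symbol `a ↦ (a/k)` as a function on the residue classes modulo its denominator. -/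
def jacobiFun (k : ℕ) (a : ZMod k) : ℂ := jacobiSym a.val k

lemma norm_jacobiFun_le_one {k : ℕ} (a : ZMod k) : ‖jacobiFun k a‖ ≤ 1 := by
  rw [jacobiFun, norm_intCast]
  exact_mod_cast abs_jacobiSym_le_one _ k

lemma norm_theta_jacobiFun_le {k : ℕ} {y : ℝ} (hy : 0 < y) :
    ‖theta (jacobiFun k) y‖ ≤ ∑' n : ℤ, Real.exp (-π * n ^ 2 * y) := by
  refine tsum_of_norm_bounded (summable_exp_neg_pi_int_sq_mul hy).hasSum fun n ↦ ?_
  rw [norm_mul, norm_real, Real.norm_eq_abs, Real.abs_exp]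
  exact mul_le_of_le_one_left (Real.exp_pos _).le (norm_jacobiFun_le_one _)

variable {k : ℕ} [NeZero k]

lemma jacobiFun_intCast (D : ℤ) : jacobiFun k D = jacobiSym D k := by
  rw [jacobiFun, ZMod.val_intCast, ← jacobiSym.mod_left]

lemma sum_jacobiFun (hk : Odd k) (hsq : ¬IsSquare k) : ∑ a, jacobiFun k a = 0 := by
  obtain ⟨a, ha⟩ := exists_jacobiSym_eq_neg_one hk hsq
  have hco : a.Coprime k := by
    by_contra h
    have h0 := (jacobiSym.eq_zero_iff_not_coprime (a := (a : ℤ)) (b := k)).mpr (by simpa using h)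
    omega
  have hneg (x : ZMod k) : jacobiFun k (ZMod.unitOfCoprime a hco * x) = -jacobiFun k x := by
    have hx : (ZMod.unitOfCoprime a hco : ZMod k) * x = ((a * x.val : ℤ) : ZMod k) := by simp
    rw [hx, jacobiFun_intCast, jacobiSym.mul_left, ha, jacobiFun]
    push_cast
    ring
  have hsum := Equiv.sum_comp (Units.mulLeft (ZMod.unitOfCoprime a hco)) (jacobiFun k)
  simp only [Units.mulLeft_apply, hneg, Finset.sum_neg_distrib] at hsum
  exact neg_eq_self.mp hsum

lemma tsum_exp_neg_pi_int_sq_div_le {Z : ℝ} (hZ : 1 ≤ Z) :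
    ∑' n : ℤ, Real.exp (-π * n ^ 2 * (1 / Z ^ 2)) ≤
      (∑' n : ℤ, Real.exp (-π * n ^ 2 * 1)) * Z := by
  have hZ0 : 0 < Z := by linarith
  have hpoisson := Real.tsum_exp_neg_mul_int_sq (a := 1 / Z ^ 2) (by positivity)
  have hsqrt : 1 / (1 / Z ^ 2) ^ (1 / 2 : ℝ) = Z := by
    rw [← Real.sqrt_eq_rpow, Real.sqrt_div zero_le_one, Real.sqrt_one, Real.sqrt_sq hZ0.le,
      one_div_one_div]
  rw [hsqrt] at hpoisson
  have hdual : ∑' n : ℤ, Real.exp (-π * n ^ 2 * Z ^ 2) ≤ ∑' n : ℤ, Real.exp (-π * n ^ 2 * 1) := by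
    refine (summable_exp_neg_pi_int_sq_mul (by positivity)).tsum_le_tsum (fun n ↦ ?_)
      (summable_exp_neg_pi_int_sq_mul one_pos)
    exact Real.exp_le_exp.mpr (mul_le_mul_of_nonpos_left (one_le_pow₀ hZ)
      (mul_nonpos_of_nonpos_of_nonneg (neg_nonpos.mpr Real.pi_pos.le) (sq_nonneg _)))
  calc ∑' n : ℤ, Real.exp (-π * n ^ 2 * (1 / Z ^ 2))
      = ∑' n : ℤ, Real.exp (-π * (1 / Z ^ 2) * n ^ 2) := by simp only [mul_right_comm]
    _ = Z * ∑' n : ℤ, Real.exp (-π * n ^ 2 * Z ^ 2) := by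
      rw [hpoisson]
      congr 1
      refine tsum_congr fun n ↦ congrArg Real.exp ?_
      field_simp
    _ ≤ Z * ∑' n : ℤ, Real.exp (-π * n ^ 2 * 1) := by gcongr
    _ = _ := mul_comm _ _

lemma norm_theta_jacobiFun_le_of_not_isSquare (hk : Odd k) (hsq : ¬IsSquare k) {κ Z : ℝ}
    (hκ : 1 < κ) (hZ : 0 < Z) :
    ‖theta (jacobiFun k) (1 / Z ^ 2)‖ ≤ thetaDecayConst (κ / 2) * (Z * (k / Z) ^ κ) := by
  have hk0 : (0 : ℝ) < k := Nat.cast_pos.mpr hk.pos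
  refine (norm_theta_le_of_sum_eq_zero (sum_jacobiFun hk hsq) norm_jacobiFun_le_one
    (A := κ / 2) (by linarith) (by positivity)).trans_eq ?_
  have hkκ : ((k : ℝ) ^ 2) ^ (κ / 2) = (k : ℝ) ^ κ := by
    rw [← Real.rpow_natCast, ← Real.rpow_mul hk0.le]
    congr 1
    push_cast
    ring
  have hZκ : (1 / Z ^ 2) ^ (κ / 2 - 1 / 2) = Z * Z ^ (-κ) := by
    rw [one_div, Real.inv_rpow (by positivity), ← Real.rpow_neg (by positivity),
      ← Real.rpow_natCast, ← Real.rpow_mul hZ.le, ← Real.rpow_one_add' hZ.le (by linarith)]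
    congr 1
    push_cast
    ring
  rw [hkκ, hZκ, Real.div_rpow hk0.le hZ.le, Real.rpow_neg hZ.le]
  ring

lemma exists_norm_theta_jacobiFun_le {κ : ℝ} (hκ : 1 < κ) :
    ∃ C : ℝ, 0 ≤ C ∧ ∀ Z : ℝ, 1 ≤ Z → ∀ k : ℕ, ∀ [NeZero k], Odd k →
      ‖theta (jacobiFun k) (1 / Z ^ 2)‖ ≤
        C * Z * ((if IsSquare k then 1 else 0) + (k / Z) ^ κ) := by
  set T := ∑' n : ℤ, Real.exp (-π * n ^ 2 * 1)
  have hT0 : 0 ≤ T := tsum_nonneg fun _ ↦ (Real.exp_pos _).le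
  have hA0 : 0 ≤ thetaDecayConst (κ / 2) := thetaDecayConst_nonneg (by linarith)
  refine ⟨T + thetaDecayConst (κ / 2), by positivity, fun Z hZ k _ hk ↦ ?_⟩
  have hZ0 : 0 < Z := by linarith
  have hpow : 0 ≤ (k / Z) ^ κ := by positivity
  split_ifs with hsq
  · calc ‖theta (jacobiFun k) (1 / Z ^ 2)‖ ≤ T * Z :=
          (norm_theta_jacobiFun_le (by positivity)).trans (tsum_exp_neg_pi_int_sq_div_le hZ)
      _ ≤ (T + thetaDecayConst (κ / 2)) * Z * (1 + (k / Z) ^ κ) := by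
        rw [← mul_one (T * Z)]
        gcongr <;> linarith
  · refine (norm_theta_jacobiFun_le_of_not_isSquare hk hsq hκ hZ0).trans ?_
    rw [zero_add, ← mul_assoc]
    gcongr
    linarith

end Jacobi

section LargeSieve

open scoped Real

lemma exists_eq_mul_sq_of_isSquare_mul {m n : ℕ} (h : IsSquare (m * n)) :
    ∃ g a b, m = g * a ^ 2 ∧ n = g * b ^ 2 := by
  rcases Nat.eq_zero_or_pos m with rfl | hm
  · exact ⟨n, 0, 1, by simp, by simp⟩
  obtain ⟨g, m', n', hg, hco, rfl, rfl⟩ := Nat.exists_coprime' (Nat.gcd_pos_of_pos_left n hm)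
  obtain ⟨r, hr⟩ := h
  obtain ⟨r', rfl⟩ : g ∣ r := by
    rw [← Nat.pow_dvd_pow_iff two_ne_zero]
    exact ⟨m' * n', by rw [sq r, ← hr]; ring⟩
  have hr' : m' * n' = r' ^ 2 := by
    refine Nat.eq_of_mul_eq_mul_left (by positivity : 0 < g ^ 2) ?_
    linarith
  obtain ⟨a, rfl⟩ := exists_eq_pow_of_mul_eq_pow (Nat.isUnit_iff.mpr hco) hr'
  obtain ⟨b, rfl⟩ := exists_eq_pow_of_mul_eq_pow (Nat.isUnit_iff.mpr hco.symm)
    ((mul_comm _ _).trans hr')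
  exact ⟨g, a, b, mul_comm _ _, mul_comm _ _⟩

lemma sum_isSquare_mul_rpow_le {B : ℝ} (hB : 1 / 2 < B) (s : Finset ℕ) :
    ∑ m ∈ s, ∑ n ∈ s, (if IsSquare (m * n) then (m * n : ℝ) ^ (-B) else 0) ≤
      (∑' n : ℕ, (n : ℝ) ^ (-(2 * B))) ^ 3 := by
  set w : ℕ → ℝ := fun n ↦ (n : ℝ) ^ (-(2 * B))
  have hw0 (n : ℕ) : 0 ≤ w n := by positivity
  have hsum : Summable w := Real.summable_nat_rpow.mpr (by linarith)
  have hsum₂ := hsum.mul_of_nonneg hsum hw0 hw0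
  have hsum₃ := hsum.mul_of_nonneg hsum₂ hw0 fun _ ↦ mul_nonneg (hw0 _) (hw0 _)
  have hparam (p : ℕ × ℕ) (hp : IsSquare (p.1 * p.2)) :
      ∃ u : ℕ × ℕ × ℕ, p = (u.1 * u.2.1 ^ 2, u.1 * u.2.2 ^ 2) := by
    obtain ⟨g, a, b, hm, hn⟩ := exists_eq_mul_sq_of_isSquare_mul hp
    exact ⟨(g, a, b), Prod.ext hm hn⟩
  choose! u hu using hparam
  have hterm (p : ℕ × ℕ) (hp : IsSquare (p.1 * p.2)) :
      (p.1 * p.2 : ℝ) ^ (-B) = w (u p).1 * (w (u p).2.1 * w (u p).2.2) := by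
    have h : (p.1 * p.2 : ℝ) = ((u p).1 * ((u p).2.1 * (u p).2.2)) ^ (2 : ℝ) := by
      nth_rewrite 1 2 [hu p hp]
      rw [Real.rpow_two]
      push_cast
      ring
    rw [h, ← Real.rpow_mul (by positivity), Real.mul_rpow (by positivity) (by positivity),
      Real.mul_rpow (by positivity) (by positivity), mul_neg]
  set P := (s ×ˢ s).filter fun p ↦ IsSquare (p.1 * p.2) with hP
  have hinj : Set.InjOn u P := fun p hp p' hp' h ↦ by
    rw [hu p (Finset.mem_filter.mp hp).2, hu p' (Finset.mem_filter.mp hp').2, h]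
  calc ∑ m ∈ s, ∑ n ∈ s, (if IsSquare (m * n) then (m * n : ℝ) ^ (-B) else 0)
      = ∑ p ∈ P, (p.1 * p.2 : ℝ) ^ (-B) := by rw [hP, Finset.sum_filter, Finset.sum_product]
    _ = ∑ v ∈ P.image u, w v.1 * (w v.2.1 * w v.2.2) := by
      rw [Finset.sum_image hinj]
      exact Finset.sum_congr rfl fun p hp ↦ hterm p (Finset.mem_filter.mp hp).2
    _ ≤ ∑' v : ℕ × ℕ × ℕ, w v.1 * (w v.2.1 * w v.2.2) :=
      hsum₃.sum_le_tsum _ fun v _ ↦ mul_nonneg (hw0 _) (mul_nonneg (hw0 _) (hw0 _))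
    _ = (∑' n, w n) ^ 3 := by
      rw [← hsum.tsum_mul_tsum hsum₂ hsum₃, ← hsum.tsum_mul_tsum hsum hsum₂]
      ring

lemma hasSum_sq_sum_jacobiSym_mul_exp {s : Finset ℕ} (hs : ∀ n ∈ s, Odd n) (c : ℕ → ℝ) {y : ℝ}
    (hy : 0 < y) :
    HasSum
      (fun D : ℤ ↦ (((∑ n ∈ s, c n * jacobiSym D n) ^ 2 * Real.exp (-π * D ^ 2 * y) : ℝ) : ℂ))
      (∑ m ∈ s, ∑ n ∈ s, (c m * c n : ℂ) * theta (jacobiFun (m * n)) y) := by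
  have hterm : ∀ m ∈ s, ∀ n ∈ s, HasSum
      (fun D : ℤ ↦ (c m * c n : ℂ) * ((jacobiSym D (m * n) : ℂ) * Real.exp (-π * D ^ 2 * y)))
      (c m * c n * theta (jacobiFun (m * n)) y) := fun m hm n hn ↦ by
    have : NeZero (m * n) := ⟨mul_ne_zero (hs m hm).pos.ne' (hs n hn).pos.ne'⟩
    have h : HasSum _ (theta (jacobiFun (m * n)) y) := (summable_theta _ hy).hasSum
    simp only [jacobiFun_intCast] at h
    exact h.mul_left _
  refine (hasSum_sum fun m hm ↦ hasSum_sum (hterm m hm)).congr_fun fun D ↦ ?_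
  rw [sq, Finset.sum_mul_sum, ofReal_mul, ofReal_sum, Finset.sum_mul]
  refine Finset.sum_congr rfl fun m hm ↦ ?_
  rw [ofReal_sum, Finset.sum_mul]
  refine Finset.sum_congr rfl fun n hn ↦ ?_
  rw [jacobiSym.mul_right' _ (hs m hm).pos.ne' (hs n hn).pos.ne']
  push_cast
  ring

lemma sum_sq_sum_jacobiSym_le_norm_sum_theta {s : Finset ℕ} (hs : ∀ n ∈ s, Odd n) (c : ℕ → ℝ)
    {Z : ℝ} (hZ : 0 < Z) {t : Finset ℤ} (ht : ∀ D ∈ t, |(D : ℝ)| ≤ Z) :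
    ∑ D ∈ t, (∑ n ∈ s, c n * jacobiSym D n) ^ 2 ≤
      Real.exp π * ‖∑ m ∈ s, ∑ n ∈ s, (c m * c n : ℂ) * theta (jacobiFun (m * n)) (1 / Z ^ 2)‖ := by
  have hweighted := hasSum_sq_sum_jacobiSym_mul_exp hs c (y := 1 / Z ^ 2) (by positivity)
  have hweight (D : ℤ) (hD : D ∈ t) : 1 ≤ Real.exp π * Real.exp (-π * D ^ 2 * (1 / Z ^ 2)) := by
    rw [← Real.exp_add]
    refine Real.one_le_exp ?_
    have h1 : (D : ℝ) ^ 2 * (1 / Z ^ 2) ≤ 1 := by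
      rw [mul_one_div, div_le_one (by positivity)]
      exact sq_le_sq.mpr ((ht D hD).trans (le_abs_self Z))
    nlinarith [Real.pi_pos]
  calc ∑ D ∈ t, (∑ n ∈ s, c n * jacobiSym D n) ^ 2
      ≤ ∑ D ∈ t, Real.exp π *
          ((∑ n ∈ s, c n * jacobiSym D n) ^ 2 * Real.exp (-π * D ^ 2 * (1 / Z ^ 2))) := by
        refine Finset.sum_le_sum fun D hD ↦ ?_
        rw [mul_left_comm]
        exact le_mul_of_one_le_right (sq_nonneg _) (hweight D hD)
    _ = Real.exp π * ∑ D ∈ t,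
          (∑ n ∈ s, c n * jacobiSym D n) ^ 2 * Real.exp (-π * D ^ 2 * (1 / Z ^ 2)) :=
        (Finset.mul_sum _ _ _).symm
    _ ≤ _ := by
        gcongr
        rw [← hweighted.tsum_eq, ← ofReal_tsum, norm_real]
        exact ((summable_ofReal.mp hweighted.summable).sum_le_tsum t fun D _ ↦ by positivity).trans
          (Real.le_norm_self _)

lemma exists_sum_sq_sum_jacobiSym_le {κ : ℝ} (hκ : 1 < κ) :
    ∃ C : ℝ, 0 ≤ C ∧ ∀ Z : ℝ, 1 ≤ Z → ∀ s : Finset ℕ, (∀ n ∈ s, Odd n) → ∀ c : ℕ → ℝ,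
      ∀ t : Finset ℤ, (∀ D ∈ t, |(D : ℝ)| ≤ Z) →
        ∑ D ∈ t, (∑ n ∈ s, c n * jacobiSym D n) ^ 2 ≤
          C * Z * ∑ m ∈ s, ∑ n ∈ s,
            |c m * c n| * ((if IsSquare (m * n) then 1 else 0) + (m * n / Z) ^ κ) := by
  obtain ⟨C, hC, htheta⟩ := exists_norm_theta_jacobiFun_le hκ
  refine ⟨Real.exp π * C, by positivity, fun Z hZ s hs c t ht ↦ ?_⟩
  refine (sum_sq_sum_jacobiSym_le_norm_sum_theta hs c (by linarith) ht).trans ?_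
  rw [mul_assoc, mul_assoc]
  refine mul_le_mul_of_nonneg_left ?_ (Real.exp_pos _).le
  simp only [Finset.mul_sum]
  refine (norm_sum_le _ _).trans (Finset.sum_le_sum fun m hm ↦ (norm_sum_le _ _).trans
    (Finset.sum_le_sum fun n hn ↦ ?_))
  have : NeZero (m * n) := ⟨mul_ne_zero (hs m hm).pos.ne' (hs n hn).pos.ne'⟩
  have hmn := htheta Z hZ (m * n) ((hs m hm).mul (hs n hn))
  push_cast at hmn
  rw [norm_mul, ← ofReal_mul, norm_real, Real.norm_eq_abs]
  calc |c m * c n| * ‖theta (jacobiFun (m * n)) (1 / Z ^ 2)‖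
      ≤ |c m * c n| * (C * Z * ((if IsSquare (m * n) then 1 else 0) + (m * n / Z) ^ κ)) := by gcongr
    _ = _ := by ring

end LargeSieve

section MeanSquare

open Filter Set MeasureTheory
open scoped Real Topology

/-- The theta series of the quadratic symbol `(D/·)` over odd positive integers. For `D = 8d` with
`d` positive, odd and squarefree it is half of the theta function of the character `χ_{8d}`. -/
noncomputable def oddTheta (D : ℤ) (y : ℝ) : ℝ :=
  ∑' n : ℕ, if Odd n then jacobiSym D n * Real.exp (-π * n ^ 2 * y) else 0

lemma summable_oddTheta (D : ℤ) {y : ℝ} (hy : 0 < y) :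
    Summable fun n : ℕ ↦ if Odd n then jacobiSym D n * Real.exp (-π * n ^ 2 * y) else 0 := by
  have hexp := (summable_exp_neg_pi_int_sq_mul hy).comp_injective Nat.cast_injective
  refine hexp.of_norm_bounded fun n ↦ ?_
  simp only [Function.comp_apply, Int.cast_natCast]
  split_ifs
  · rw [norm_mul, Real.norm_eq_abs, Real.norm_eq_abs, Real.abs_exp]
    exact mul_le_of_le_one_left (Real.exp_pos _).le (by exact_mod_cast abs_jacobiSym_le_one D n)
  · rw [norm_zero]
    exact (Real.exp_pos _).le

lemma exp_mul_exp_le {B y : ℝ} {m n : ℕ} (hB : 0 < B) (hm : m ≠ 0) (hn : n ≠ 0) (hy : 0 < y) :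
    Real.exp (-π * m ^ 2 * y) * Real.exp (-π * n ^ 2 * y) ≤
      (B / 2) ^ B * (m * n : ℝ) ^ (-B) * y ^ (-B) := by
  have hexp {k : ℕ} (hk : k ≠ 0) :
      Real.exp (-π * k ^ 2 * y) ≤ (B / 2) ^ (B / 2) * (k : ℝ) ^ (-B) * y ^ (-(B / 2)) := by
    have h := exp_neg_pi_sq_mul_le (half_pos hB) (Nat.cast_ne_zero.mpr hk) hy
    rwa [Nat.abs_cast, mul_div_cancel₀ B two_ne_zero] at h
  have hsplit {x : ℝ} (hx : 0 ≤ x) {r : ℝ} (hr : r ≠ 0) : x ^ r = x ^ (r / 2) * x ^ (r / 2) := by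
    rw [← Real.rpow_add' hx (by rwa [add_halves]), add_halves]
  calc Real.exp (-π * m ^ 2 * y) * Real.exp (-π * n ^ 2 * y)
      ≤ ((B / 2) ^ (B / 2) * (m : ℝ) ^ (-B) * y ^ (-(B / 2))) *
        ((B / 2) ^ (B / 2) * (n : ℝ) ^ (-B) * y ^ (-(B / 2))) := by
        gcongr
        exacts [hexp hm, hexp hn]
    _ = (B / 2) ^ B * (m * n : ℝ) ^ (-B) * y ^ (-B) := by
        rw [Real.mul_rpow (by positivity) (by positivity), hsplit (half_pos hB).le hB.ne',
          hsplit hy.le (neg_ne_zero.mpr hB.ne'), neg_div]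
        ring

lemma sum_isSquare_exp_mul_exp_le {B y : ℝ} (hB : 1 / 2 < B) (hy : 0 < y) {s : Finset ℕ}
    (hs : ∀ n ∈ s, n ≠ 0) :
    ∑ m ∈ s, ∑ n ∈ s, Real.exp (-π * m ^ 2 * y) * Real.exp (-π * n ^ 2 * y) *
        (if IsSquare (m * n) then 1 else 0) ≤
      (B / 2) ^ B * (∑' n : ℕ, (n : ℝ) ^ (-(2 * B))) ^ 3 * y ^ (-B) := by
  calc _ ≤ ∑ m ∈ s, ∑ n ∈ s,
        (B / 2) ^ B * (if IsSquare (m * n) then (m * n : ℝ) ^ (-B) else 0) * y ^ (-B) := by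
        refine Finset.sum_le_sum fun m hm ↦ Finset.sum_le_sum fun n hn ↦ ?_
        split_ifs
        · simpa only [mul_one] using exp_mul_exp_le (by linarith) (hs m hm) (hs n hn) hy
        · simp only [mul_zero, zero_mul, le_refl]
    _ = (B / 2) ^ B * (∑ m ∈ s, ∑ n ∈ s, if IsSquare (m * n) then (m * n : ℝ) ^ (-B) else 0) *
        y ^ (-B) := by simp only [Finset.mul_sum, Finset.sum_mul]
    _ ≤ _ := by
        gcongr
        exact sum_isSquare_mul_rpow_le hB s

lemma sum_exp_mul_exp_mul_rpow_le {B κ Z y : ℝ} (hκ : 0 ≤ κ) (hB : κ + 1 < B) (hZ : 0 < Z)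
    (hy : 0 < y) {s : Finset ℕ} (hs : ∀ n ∈ s, n ≠ 0) :
    ∑ m ∈ s, ∑ n ∈ s, Real.exp (-π * m ^ 2 * y) * Real.exp (-π * n ^ 2 * y) * (m * n / Z) ^ κ ≤
      (B / 2) ^ B * (∑' n : ℕ, (n : ℝ) ^ (κ - B)) ^ 2 * (Z ^ (-κ) * y ^ (-B)) := by
  have hsum : Summable fun n : ℕ ↦ (n : ℝ) ^ (κ - B) := Real.summable_nat_rpow.mpr (by linarith)
  calc _ ≤ ∑ m ∈ s, ∑ n ∈ s,
        (B / 2) ^ B * ((m : ℝ) ^ (κ - B) * (n : ℝ) ^ (κ - B)) * (Z ^ (-κ) * y ^ (-B)) := by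
        refine Finset.sum_le_sum fun m hm ↦ Finset.sum_le_sum fun n hn ↦ ?_
        refine (mul_le_mul_of_nonneg_right (exp_mul_exp_le (B := B) (by linarith) (hs m hm)
          (hs n hn) hy) (by positivity)).trans_eq ?_
        rw [← Real.mul_rpow (by positivity) (by positivity),
          Real.div_rpow (by positivity) hZ.le, Real.rpow_neg hZ.le, sub_eq_add_neg,
          Real.rpow_add' (by positivity) (by linarith)]
        ring
    _ = (B / 2) ^ B * (∑ n ∈ s, (n : ℝ) ^ (κ - B)) ^ 2 * (Z ^ (-κ) * y ^ (-B)) := by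
        rw [sq, Finset.sum_mul_sum]
        simp only [Finset.mul_sum, Finset.sum_mul]
    _ ≤ _ := by
        have hB0 : 0 < B := by linarith
        gcongr
        exact hsum.sum_le_tsum _ fun _ _ ↦ by positivity

lemma exists_sum_sq_sum_jacobiSym_mul_exp_le {B κ : ℝ} (hB : 1 / 2 < B) (hκ : 1 < κ) :
    ∃ C : ℝ, 0 ≤ C ∧ ∀ Z : ℝ, 1 ≤ Z → ∀ y : ℝ, 0 < y → ∀ s : Finset ℕ, (∀ n ∈ s, Odd n) →
      ∀ t : Finset ℤ, (∀ D ∈ t, |(D : ℝ)| ≤ Z) →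
        ∑ D ∈ t, (∑ n ∈ s, Real.exp (-π * n ^ 2 * y) * jacobiSym D n) ^ 2 ≤
          C * Z * (y ^ (-B) + Z ^ (-κ) * y ^ (-(B + κ + 1 / 2))) := by
  obtain ⟨C, hC, hsieve⟩ := exists_sum_sq_sum_jacobiSym_le hκ
  set B' := B + κ + 1 / 2 with hB'
  set K := (B / 2) ^ B * (∑' n : ℕ, (n : ℝ) ^ (-(2 * B))) ^ 3
  set K' := (B' / 2) ^ B' * (∑' n : ℕ, (n : ℝ) ^ (κ - B')) ^ 2
  have hK : 0 ≤ K := mul_nonneg (by positivity) (pow_nonneg (tsum_nonneg fun _ ↦ by positivity) _)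
  have hK' : 0 ≤ K' := mul_nonneg (by positivity) (sq_nonneg _)
  refine ⟨C * (K + K'), by positivity, fun Z hZ y hy s hs t ht ↦ ?_⟩
  have hZ0 : 0 < Z := by linarith
  have hs0 (n : ℕ) (hn : n ∈ s) : n ≠ 0 := (hs n hn).pos.ne'
  refine (hsieve Z hZ s hs _ t ht).trans ?_
  rw [mul_right_comm C (K + K'), mul_assoc (C * Z)]
  refine mul_le_mul_of_nonneg_left ?_ (by positivity)
  simp only [← Real.exp_add, Real.abs_exp, mul_add, Finset.sum_add_distrib]
  simp only [Real.exp_add]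
  refine (add_le_add (sum_isSquare_exp_mul_exp_le hB hy hs0)
    (sum_exp_mul_exp_mul_rpow_le (B := B') (by linarith) (by linarith) hZ0 hy hs0)).trans ?_
  gcongr
  · exact le_add_of_nonneg_right hK'
  · exact le_add_of_nonneg_left hK

lemma exists_sum_sq_oddTheta_le {B κ : ℝ} (hB : 1 / 2 < B) (hκ : 1 < κ) :
    ∃ C : ℝ, 0 ≤ C ∧ ∀ Z : ℝ, 1 ≤ Z → ∀ y : ℝ, 0 < y →
      ∀ t : Finset ℤ, (∀ D ∈ t, |(D : ℝ)| ≤ Z) →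
        ∑ D ∈ t, oddTheta D y ^ 2 ≤
          C * Z * (y ^ (-B) + Z ^ (-κ) * y ^ (-(B + κ + 1 / 2))) := by
  obtain ⟨C, hC, hpartial⟩ := exists_sum_sq_sum_jacobiSym_mul_exp_le hB hκ
  refine ⟨C, hC, fun Z hZ y hy t ht ↦ ?_⟩
  have hlim : Tendsto (fun N ↦ ∑ D ∈ t, (∑ n ∈ Finset.range N,
      if Odd n then jacobiSym D n * Real.exp (-π * n ^ 2 * y) else 0) ^ 2) atTop
      (𝓝 (∑ D ∈ t, oddTheta D y ^ 2)) :=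
    tendsto_finsetSum _ fun D _ ↦ ((summable_oddTheta D hy).hasSum.tendsto_sum_nat).pow 2
  refine le_of_tendsto' hlim fun N ↦ ?_
  simp only [← Finset.sum_filter, mul_comm (jacobiSym _ _ : ℝ)]
  exact hpartial Z hZ y hy _ (fun n hn ↦ (Finset.mem_filter.mp hn).2) t ht

lemma exists_sum_sq_oddTheta_le_rpow {B η : ℝ} (hB : 1 / 2 < B) (hη : 0 < η) :
    ∃ C : ℝ, 0 ≤ C ∧ ∀ X : ℝ, 1 ≤ X → ∀ y : ℝ, 1 / X ≤ y →
      ∀ t : Finset ℤ, (∀ D ∈ t, |(D : ℝ)| ≤ X) →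
        ∑ D ∈ t, oddTheta D y ^ 2 ≤ C * X ^ (1 + η) * y ^ (-B) := by
  -- With `Z = X ^ (1 + η)` this `κ` makes `Z ^ (-κ)` absorb `y ^ (-(κ + 1 / 2)) ≤ X ^ (κ + 1 / 2)`.
  set κ := 1 + 1 / (2 * η) with hκ
  have hκη : 1 / 2 ≤ η * κ := by
    rw [hκ, mul_add, mul_one, mul_one_div, div_mul_cancel_right₀ hη.ne']
    linarith
  obtain ⟨C, hC, hmean⟩ := exists_sum_sq_oddTheta_le hB (κ := κ) (by rw [hκ]; simpa using hη)
  refine ⟨C * 2, by positivity, fun X hX y hy t ht ↦ ?_⟩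
  have hX0 : 0 < X := by linarith
  have hy0 : 0 < y := (one_div_pos.mpr hX0).trans_le hy
  have hXZ : X ≤ X ^ (1 + η) := Real.self_le_rpow_of_one_le hX (by linarith)
  have hyX : y ^ (-(κ + 1 / 2)) ≤ X ^ (κ + 1 / 2) := by
    rw [Real.rpow_neg hy0.le, ← Real.inv_rpow hy0.le]
    refine Real.rpow_le_rpow (by positivity) ?_ (by positivity)
    rwa [inv_le_comm₀ hy0 hX0, ← one_div]
  have hoff : (X ^ (1 + η)) ^ (-κ) * y ^ (-(B + κ + 1 / 2)) ≤ y ^ (-B) := calc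
    (X ^ (1 + η)) ^ (-κ) * y ^ (-(B + κ + 1 / 2))
        = X ^ (-((1 + η) * κ)) * y ^ (-(κ + 1 / 2)) * y ^ (-B) := by
          rw [← Real.rpow_mul hX0.le, mul_neg, mul_assoc, ← Real.rpow_add hy0]
          ring_nf
      _ ≤ X ^ (-((1 + η) * κ)) * X ^ (κ + 1 / 2) * y ^ (-B) := by gcongr
      _ ≤ 1 * y ^ (-B) := by
          rw [← Real.rpow_add hX0]
          gcongr
          exact Real.rpow_le_one_of_one_le_of_nonpos hX (by linarith)
      _ = y ^ (-B) := one_mul _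
  calc ∑ D ∈ t, oddTheta D y ^ 2
      ≤ C * X ^ (1 + η) * (y ^ (-B) + (X ^ (1 + η)) ^ (-κ) * y ^ (-(B + κ + 1 / 2))) :=
        hmean _ (hX.trans hXZ) y hy0 t fun D hD ↦ (ht D hD).trans hXZ
    _ ≤ C * X ^ (1 + η) * (y ^ (-B) + y ^ (-B)) := by gcongr
    _ = C * 2 * X ^ (1 + η) * y ^ (-B) := by ring

lemma card_le_of_abs_le {X : ℝ} (hX : 1 ≤ X) {t : Finset ℤ} (ht : ∀ D ∈ t, |(D : ℝ)| ≤ X) :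
    (t.card : ℝ) ≤ 3 * X := by
  have hsub : t ⊆ Finset.Icc (-⌊X⌋) ⌊X⌋ := fun D hD ↦ by
    rw [Finset.mem_Icc, ← abs_le, Int.le_floor]
    exact_mod_cast ht D hD
  have hX0 : 0 ≤ ⌊X⌋ := Int.floor_nonneg.mpr (by linarith)
  have hcard := Finset.card_le_card hsub
  rw [Int.card_Icc] at hcard
  have hcard' : (t.card : ℤ) ≤ 2 * ⌊X⌋ + 1 := by omega
  have hcard'' : (t.card : ℝ) ≤ 2 * ⌊X⌋ + 1 := by exact_mod_cast hcard'
  linarith [Int.floor_le X]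

lemma exists_sum_abs_oddTheta_le {B η : ℝ} (hB : 1 / 4 < B) (hη : 0 < η) :
    ∃ C : ℝ, 0 ≤ C ∧ ∀ X : ℝ, 1 ≤ X → ∀ y : ℝ, 1 / X ≤ y →
      ∀ t : Finset ℤ, (∀ D ∈ t, |(D : ℝ)| ≤ X) →
        ∑ D ∈ t, |oddTheta D y| ≤ C * X ^ (1 + η) * y ^ (-B) := by
  obtain ⟨C, hC, hmean⟩ :=
    exists_sum_sq_oddTheta_le_rpow (B := 2 * B) (η := 2 * η) (by linarith) (by positivity)
  refine ⟨√(3 * C), by positivity, fun X hX y hy t ht ↦ ?_⟩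
  have hX0 : 0 < X := by linarith
  have hy0 : 0 < y := (one_div_pos.mpr hX0).trans_le hy
  refine (sq_le_sq₀ (Finset.sum_nonneg fun _ _ ↦ abs_nonneg _) (by positivity)).mp ?_
  calc (∑ D ∈ t, |oddTheta D y|) ^ 2 ≤ t.card * ∑ D ∈ t, oddTheta D y ^ 2 := by
        simpa only [sq_abs] using sq_sum_le_card_mul_sum_sq (s := t) (f := fun D ↦ |oddTheta D y|)
    _ ≤ 3 * X * (C * X ^ (1 + 2 * η) * y ^ (-(2 * B))) := by
        gcongr
        exacts [card_le_of_abs_le hX ht, hmean X hX y hy t ht]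
    _ = (√(3 * C) * X ^ (1 + η) * y ^ (-B)) ^ 2 := by
        rw [mul_pow, mul_pow, Real.sq_sqrt (by positivity), ← Real.rpow_mul_natCast hX0.le,
          ← Real.rpow_mul_natCast hy0.le]
        have hXpow : X ^ ((1 + η) * (2 : ℕ)) = X * X ^ (1 + 2 * η) := by
          rw [← Real.rpow_one_add' hX0.le (by positivity)]
          push_cast
          ring_nf
        rw [hXpow]
        push_cast
        ring_nf

lemma exists_sum_abs_oddTheta_mul_rpow_le_of_le_one {b η : ℝ} (hb : 1 / 2 ≤ b) (hη : 0 < η) :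
    ∃ C : ℝ, 0 ≤ C ∧ ∀ X : ℝ, 1 ≤ X → ∀ y : ℝ, 1 / X ≤ y → y ≤ 1 →
      ∀ t : Finset ℤ, (∀ D ∈ t, |(D : ℝ)| ≤ X) →
        ∑ D ∈ t, |oddTheta D y| * y ^ (b / 2 - 1) ≤ C * X ^ (1 + 3 * η) * y ^ (η - 1) := by
  obtain ⟨C, hC, hmean⟩ := exists_sum_abs_oddTheta_le (B := 1 / 4 + η) (by linarith) hη
  refine ⟨C, hC, fun X hX y hy hy1 t ht ↦ ?_⟩
  have hX0 : 0 < X := by linarith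
  have hy0 : 0 < y := (one_div_pos.mpr hX0).trans_le hy
  have hyX : y ^ (-(2 * η)) ≤ X ^ (2 * η) := by
    rw [Real.rpow_neg hy0.le, ← Real.inv_rpow hy0.le]
    refine Real.rpow_le_rpow (by positivity) ?_ (by positivity)
    rwa [inv_le_comm₀ hy0 hX0, ← one_div]
  rw [← Finset.sum_mul]
  calc (∑ D ∈ t, |oddTheta D y|) * y ^ (b / 2 - 1)
      ≤ C * X ^ (1 + η) * y ^ (-(1 / 4 + η)) * y ^ (b / 2 - 1) := by
        gcongr
        exact hmean X hX y hy t ht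
    _ ≤ C * X ^ (1 + η) * y ^ (-(2 * η) + (η - 1)) := by
        rw [mul_assoc, ← Real.rpow_add hy0]
        gcongr ?_ * ?_
        exact Real.rpow_le_rpow_of_exponent_ge hy0 hy1 (by linarith)
    _ ≤ C * X ^ (1 + η) * (X ^ (2 * η) * y ^ (η - 1)) := by
        rw [Real.rpow_add hy0]
        gcongr
    _ = C * X ^ (1 + 3 * η) * y ^ (η - 1) := by
        rw [← mul_assoc, mul_assoc C, ← Real.rpow_add hX0]
        ring_nf

lemma exists_sum_abs_oddTheta_mul_rpow_le_of_one_le {b η : ℝ} (hb : 1 / 2 ≤ b) (hη : 0 < η) :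
    ∃ C : ℝ, 0 ≤ C ∧ ∀ X : ℝ, 1 ≤ X → ∀ y : ℝ, 1 ≤ y →
      ∀ t : Finset ℤ, (∀ D ∈ t, |(D : ℝ)| ≤ X) →
        ∑ D ∈ t, |oddTheta D y| * y ^ (b / 2 - 1) ≤ C * X ^ (1 + η) * y ^ (-2 : ℝ) := by
  obtain ⟨C, hC, hmean⟩ := exists_sum_abs_oddTheta_le (B := b / 2 + 1) (by linarith) hη
  refine ⟨C, hC, fun X hX y hy t ht ↦ ?_⟩
  have hX1 : 1 / X ≤ 1 := (div_le_one (by linarith)).mpr hX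
  rw [← Finset.sum_mul]
  calc (∑ D ∈ t, |oddTheta D y|) * y ^ (b / 2 - 1)
      ≤ C * X ^ (1 + η) * y ^ (-(b / 2 + 1)) * y ^ (b / 2 - 1) := by
        gcongr
        exact hmean X hX y (hX1.trans hy) t ht
    _ = C * X ^ (1 + η) * y ^ (-2 : ℝ) := by
        rw [mul_assoc, ← Real.rpow_add (by linarith)]
        ring_nf

lemma exists_integrableOn_sum_abs_oddTheta_mul_rpow_le {b η : ℝ} (hb : 1 / 2 ≤ b) (hη : 0 < η) :
    ∃ g : ℝ → ℝ, IntegrableOn g (Ioi 0) ∧ (∀ y, 0 < y → 0 ≤ g y) ∧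
      ∀ X : ℝ, 1 ≤ X → ∀ y : ℝ, 1 / X ≤ y → ∀ t : Finset ℤ, (∀ D ∈ t, |(D : ℝ)| ≤ X) →
        ∑ D ∈ t, |oddTheta D y| * y ^ (b / 2 - 1) ≤ X ^ (1 + 3 * η) * g y := by
  obtain ⟨C, hC, hsmall⟩ := exists_sum_abs_oddTheta_mul_rpow_le_of_le_one hb hη
  obtain ⟨C', hC', hlarge⟩ :=
    exists_sum_abs_oddTheta_mul_rpow_le_of_one_le (η := 3 * η) hb (by positivity)
  refine ⟨fun y ↦ if y ≤ 1 then C * y ^ (η - 1) else C' * y ^ (-2 : ℝ), ?_, fun y hy ↦ ?_,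
    fun X hX y hy t ht ↦ ?_⟩
  · rw [← Ioc_union_Ioi_eq_Ioi zero_le_one]
    refine IntegrableOn.union ?_ ?_
    · have h := (intervalIntegrable_iff_integrableOn_Ioc_of_le zero_le_one).mp
        (intervalIntegral.intervalIntegrable_rpow' (a := 0) (b := 1) (by linarith : -1 < η - 1))
      refine IntegrableOn.congr_fun (h.const_mul C) (fun y hy ↦ ?_) measurableSet_Ioc
      simp only [hy.2, if_true]
    · have h := integrableOn_Ioi_rpow_of_lt (by norm_num : (-2 : ℝ) < -1) one_pos
      refine IntegrableOn.congr_fun (h.const_mul C') (fun y (hy : 1 < y) ↦ ?_) measurableSet_Ioi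
      simp only [hy.not_ge, if_false]
  · dsimp only
    split_ifs <;> positivity
  · dsimp only
    rw [mul_ite]
    split_ifs with hy1
    · rw [← mul_assoc, mul_comm _ C]
      exact hsmall X hX y hy hy1 t ht
    · rw [← mul_assoc, mul_comm _ C']
      exact hlarge X hX y (not_le.mp hy1).le t ht

lemma exists_integral_sum_abs_oddTheta_le {b ε : ℝ} (hb : 1 / 2 ≤ b) (hε : 0 < ε) :
    ∃ C : ℝ, 0 ≤ C ∧ ∀ X : ℝ, 1 ≤ X → ∀ t : Finset ℤ, (∀ D ∈ t, |(D : ℝ)| ≤ X) →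
      ∫ y in Ioi (1 / X), ∑ D ∈ t, |oddTheta D y| * y ^ (b / 2 - 1) ≤ C * X ^ (1 + ε) := by
  obtain ⟨g, hg, hg0, hmean⟩ :=
    exists_integrableOn_sum_abs_oddTheta_mul_rpow_le (η := ε / 3) hb (by positivity)
  refine ⟨∫ y in Ioi 0, g y, setIntegral_nonneg measurableSet_Ioi hg0, fun X hX t ht ↦ ?_⟩
  have hX0 : 0 < X := by linarith
  have hsub : Ioi (1 / X) ⊆ Ioi 0 := Ioi_subset_Ioi (by positivity)
  have hae : ∀ᵐ y ∂volume.restrict (Ioi (1 / X)), 1 / X < y := ae_restrict_mem measurableSet_Ioi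
  calc ∫ y in Ioi (1 / X), ∑ D ∈ t, |oddTheta D y| * y ^ (b / 2 - 1)
      ≤ ∫ y in Ioi (1 / X), X ^ (1 + ε) * g y := by
        refine integral_mono_of_nonneg ?_ ((hg.mono_set hsub).const_mul _) ?_
        · filter_upwards [hae] with y hy
          have hy0 : 0 < y := (one_div_pos.mpr hX0).trans hy
          exact Finset.sum_nonneg fun D _ ↦ by positivity
        · filter_upwards [hae] with y hy
          simpa only [mul_div_cancel₀ ε three_ne_zero] using hmean X hX y hy.le t ht
    _ = X ^ (1 + ε) * ∫ y in Ioi (1 / X), g y := integral_const_mul _ _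
    _ ≤ X ^ (1 + ε) * ∫ y in Ioi 0, g y := by
        refine mul_le_mul_of_nonneg_left ?_ (by positivity)
        refine setIntegral_mono_set hg ?_ hsub.eventuallyLE
        filter_upwards [ae_restrict_mem measurableSet_Ioi] with y hy using hg0 y hy
    _ = _ := mul_comm _ _

end MeanSquare

section KroneckerCharacter

lemma isPrimitive_of_forall_prime {q : ℕ} {ψ : DirichletCharacter ℂ q}
    (h : ∀ p, p.Prime → p ∣ q → ∃ n : ℕ, n ≡ 1 [MOD q / p] ∧ ψ n ≠ 0 ∧ ψ n ≠ 1) :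
    ψ.IsPrimitive := by
  obtain ⟨e, he⟩ := ψ.conductor_dvd_level
  by_contra hne
  have he1 : e ≠ 1 := by
    rintro rfl
    exact hne (by rw [DirichletCharacter.isPrimitive_def, ← mul_one ψ.conductor, ← he])
  obtain ⟨p, hp, f, rfl⟩ := Nat.exists_prime_and_dvd he1
  obtain ⟨n, hn, hn0, hn1⟩ := h p hp (he ▸ (dvd_mul_right p f).mul_left _)
  have hcond : ψ.conductor ∣ q / p :=
    Nat.dvd_div_of_mul_dvd ⟨f, he.trans (by ring)⟩
  rw [← Int.cast_natCast] at hn0 hn1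
  rw [← DirichletCharacter.primitiveCharacter_apply_of_isCoprime ψ
    ((DirichletCharacter.apply_ne_zero_iff ..).mp hn0), Int.cast_natCast,
    (ZMod.natCast_eq_natCast_iff _ _ _).mpr (hn.of_dvd hcond), Nat.cast_one, map_one] at hn1
  exact hn1 rfl

lemma jacobiSym_eight_mul {n : ℕ} (hn : Odd n) (a : ℤ) :
    jacobiSym (8 * a) n = ZMod.χ₈ n * jacobiSym a n := by
  rw [show 8 * a = 4 * (2 * a) by ring, jacobiSym.mul_left, jacobiSym.mul_left,
    jacobiSym.at_four hn, jacobiSym.at_two hn, one_mul]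

lemma coprime_eight_of_odd {n : ℕ} (hn : Odd n) : n.Coprime 8 :=
  Nat.Coprime.pow_right 3 (Nat.coprime_two_right.mpr hn)

variable {d : ℕ} (hd : Odd d)

include hd

lemma jacobiSym_eight_mul_of_one_mod_four {n : ℕ} (hn : n % 4 = 1) :
    jacobiSym (8 * d) n = ZMod.χ₈ n * jacobiSym n d := by
  rw [jacobiSym_eight_mul (Nat.odd_iff.mpr (by omega)),
    jacobiSym.quadratic_reciprocity_one_mod_four' hd hn]

lemma exists_jacobiSym_eight_mul_eq_neg_one_of_two :
    ∃ n : ℕ, Odd n ∧ n ≡ 1 [MOD 8 * d / 2] ∧ jacobiSym (8 * d) n = -1 := by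
  obtain ⟨n, hnd, hn8⟩ := Nat.chineseRemainder (coprime_eight_of_odd hd) 1 5
  have hn8 : n % 8 = 5 := hn8
  have hn4 : n ≡ 1 [MOD 4] := by rw [Nat.ModEq]; omega
  refine ⟨n, Nat.odd_iff.mpr (by omega), ?_, ?_⟩
  · rw [show 8 * d / 2 = 4 * d by omega]
    exact (Nat.modEq_and_modEq_iff_modEq_mul
      (Nat.Coprime.pow_left 2 (Nat.coprime_two_left.mpr hd))).mp ⟨hn4, hnd⟩
  · rw [jacobiSym_eight_mul_of_one_mod_four hd hn4, jacobiSym_natCast_eq_of_modEq hnd,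
      ZMod.χ₈_nat_eq_if_mod_eight]
    simp [hn8, show n % 2 = 1 by omega]

lemma exists_jacobiSym_eight_mul_eq_neg_one_of_prime_dvd (hsq : Squarefree d) {p : ℕ}
    (hp : p.Prime) (hpd : p ∣ d) :
    ∃ n : ℕ, Odd n ∧ n ≡ 1 [MOD 8 * d / p] ∧ jacobiSym (8 * d) n = -1 := by
  obtain ⟨m, rfl⟩ := hpd
  have hpodd : Odd p := Nat.Odd.of_mul_left hd
  have hm0 : m ≠ 0 := (Nat.Odd.of_mul_right hd).pos.ne'
  obtain ⟨a, ha⟩ := exists_jacobiSym_prime_eq_neg_one hp (Odd.ne_two_of_dvd_nat hpodd dvd_rfl)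
  obtain ⟨n, hnp, hn8m⟩ := Nat.chineseRemainder
    ((coprime_eight_of_odd hpodd).mul_right (Nat.coprime_of_squarefree_mul hsq)) a 1
  have hn8 : n % 8 = 1 := hn8m.of_mul_right m
  refine ⟨n, Nat.odd_iff.mpr (by omega), ?_, ?_⟩
  · rwa [mul_left_comm, Nat.mul_div_cancel_left _ hp.pos]
  · rw [jacobiSym_eight_mul_of_one_mod_four hd (by omega),
      jacobiSym.mul_right' _ hp.ne_zero hm0, jacobiSym_natCast_eq_of_modEq hnp,
      jacobiSym_natCast_eq_of_modEq (hn8m.of_mul_left 8), ha, ZMod.χ₈_nat_eq_if_mod_eight]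
    simp [hn8, show n % 2 = 1 by omega]

variable {ψ : DirichletCharacter ℂ (8 * d)} (hψ : ∀ n : ℕ, Odd n → ψ n = jacobiSym (8 * d) n)

include hψ

lemma isPrimitive_of_eq_jacobiSym (hsq : Squarefree d) : ψ.IsPrimitive := by
  refine isPrimitive_of_forall_prime fun p hp hpd ↦ ?_
  obtain ⟨n, hodd, hn, hJ⟩ :
      ∃ n : ℕ, Odd n ∧ n ≡ 1 [MOD 8 * d / p] ∧ jacobiSym (8 * d) n = -1 := by
    rcases hp.dvd_mul.mp hpd with h8 | hpd
    · rw [(Nat.prime_dvd_prime_iff_eq hp Nat.prime_two).mp (hp.dvd_of_dvd_pow (n := 3) h8)]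
      exact exists_jacobiSym_eight_mul_eq_neg_one_of_two hd
    · exact exists_jacobiSym_eight_mul_eq_neg_one_of_prime_dvd hd hsq hp hpd
  refine ⟨n, hn, ?_⟩
  rw [hψ n hodd, hJ]
  norm_num

lemma ne_one_of_eq_jacobiSym (hsq : Squarefree d) : ψ ≠ 1 := by
  have hd0 := hd.pos
  have : NeZero (8 * d) := ⟨by omega⟩
  rintro rfl
  have h := isPrimitive_of_eq_jacobiSym hd hψ hsq
  rw [DirichletCharacter.isPrimitive_def, DirichletCharacter.conductor_one] at h
  omega

lemma even_of_eq_jacobiSym : ψ.Even := by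
  have hd0 := hd.pos
  have hcast : ((8 * d - 1 : ℕ) : ℤ) = 8 * d - 1 := by omega
  have hneg : ((8 * d - 1 : ℕ) : ZMod (8 * d)) = -1 := by
    rw [Nat.cast_sub (by omega), ZMod.natCast_self, zero_sub, Nat.cast_one]
  have hJ : jacobiSym (8 * d) (8 * d - 1) = 1 := by
    rw [← jacobiSym.one_left (8 * d - 1)]
    refine jacobiSym.mod_left' ((Int.modEq_iff_dvd.mpr ?_).symm)
    rw [hcast]
  rw [DirichletCharacter.Even, ← hneg, hψ _ ⟨4 * d - 1, by omega⟩, hJ, Int.cast_one]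

lemma theta_eq_two_mul_oddTheta {y : ℝ} (hy : 0 < y) : theta ψ y = 2 * oddTheta (8 * d) y := by
  have : NeZero (8 * d) := ⟨by have := hd.pos; omega⟩
  have hval (n : ℕ) : ψ n = if Odd n then (jacobiSym (8 * d) n : ℂ) else 0 := by
    split_ifs with hn
    · exact hψ n hn
    · refine MulChar.map_nonunit _ fun hu ↦ hn (Nat.coprime_two_right.mp ?_)
      exact ((ZMod.isUnit_iff_coprime n _).mp hu).of_dvd_right ((by norm_num : 2 ∣ 8).mul_right d)
  have hfold := (summable_theta ψ hy).hasSum.nat_add_neg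
  have h0 : ψ 0 = 0 := by simpa using hval 0
  rw [Int.cast_zero, h0, zero_mul, add_zero] at hfold
  have hodd := (hasSum_ofReal.mpr (summable_oddTheta (8 * d) hy).hasSum).mul_left 2
  refine hfold.unique (hodd.congr_fun fun n ↦ ?_)
  simp only [Int.cast_neg, Int.cast_natCast, (even_of_eq_jacobiSym hd hψ).eval_neg, hval n, neg_sq]
  split_ifs <;> push_cast <;> ring

end KroneckerCharacter

section Family

open MeasureTheory Set

section SingleCharacter

variable {d : ℕ} (hd : Odd d) (hsq : Squarefree d)
  {ψ : DirichletCharacter ℂ (8 * d)} (hψ : ∀ n : ℕ, Odd n → ψ n = jacobiSym (8 * d) n)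

include hd hψ

lemma norm_theta_eq_two_mul_abs_oddTheta {y : ℝ} (hy : 0 < y) :
    ‖theta ψ y‖ = 2 * |oddTheta (8 * d) y| := by
  rw [theta_eq_two_mul_oddTheta hd hψ hy, norm_mul, norm_real, norm_ofNat, Real.norm_eq_abs]

variable [NeZero (8 * d)]

include hsq

lemma integrableOn_abs_oddTheta_mul_rpow (b : ℝ) :
    IntegrableOn (fun y ↦ |oddTheta (8 * d) y| * y ^ (b / 2 - 1)) (Ioi 0) := by
  have h := integrableOn_norm_mul_rpow_of_mellinConvergent (a := b / 2)
    (mellinConvergent_theta_of_ne_one (ne_one_of_eq_jacobiSym hd hψ hsq) _)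
  refine IntegrableOn.congr_fun (h.const_mul 2⁻¹) (fun y (hy : 0 < y) ↦ ?_) measurableSet_Ioi
  rw [norm_theta_eq_two_mul_abs_oddTheta hd hψ hy]
  ring

lemma norm_LFunction_le_integral_abs_oddTheta {s : ℂ} {b X : ℝ} (hs : s.re ≤ b)
    (hs' : 1 - s.re ≤ b) (hX : 8 * d ≤ X) :
    ‖ψ.LFunction s‖ ≤ 2 * ‖(Gammaℝ s)⁻¹‖ * X ^ ((b - s.re) / 2) *
      ∫ y in Ioi (1 / X), |oddTheta (8 * d) y| * y ^ (b / 2 - 1) := by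
  have hd0 : (0 : ℝ) < 8 * d := mul_pos (by norm_num) (Nat.cast_pos.mpr hd.pos)
  have hint := integrableOn_abs_oddTheta_mul_rpow hd hsq hψ b
  have hnonneg (y : ℝ) (hy : 0 < y) : 0 ≤ |oddTheta (8 * d) y| * y ^ (b / 2 - 1) := by positivity
  have hpos {c : ℝ} (hc : 0 < c) : Ioi (1 / c) ⊆ Ioi 0 := Ioi_subset_Ioi (by positivity)
  calc ‖ψ.LFunction s‖
      ≤ ‖(Gammaℝ s)⁻¹‖ * ((8 * d : ℕ) : ℝ) ^ ((b - s.re) / 2) *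
        ∫ y in Ioi (1 / ((8 * d : ℕ) : ℝ)), ‖theta ψ y‖ * y ^ (b / 2 - 1) :=
        norm_LFunction_le (isPrimitive_of_eq_jacobiSym hd hψ hsq) (even_of_eq_jacobiSym hd hψ)
          (ne_one_of_eq_jacobiSym hd hψ hsq) hs hs'
    _ = ‖(Gammaℝ s)⁻¹‖ * (8 * d : ℝ) ^ ((b - s.re) / 2) *
        ∫ y in Ioi (1 / (8 * d : ℝ)), 2 * (|oddTheta (8 * d) y| * y ^ (b / 2 - 1)) := by
        push_cast
        congr 1
        refine setIntegral_congr_fun measurableSet_Ioi fun y hy ↦ ?_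
        rw [norm_theta_eq_two_mul_abs_oddTheta hd hψ (hpos hd0 hy), mul_assoc]
    _ = 2 * ‖(Gammaℝ s)⁻¹‖ * (8 * d : ℝ) ^ ((b - s.re) / 2) *
        ∫ y in Ioi (1 / (8 * d : ℝ)), |oddTheta (8 * d) y| * y ^ (b / 2 - 1) := by
        rw [integral_const_mul]
        ring
    _ ≤ _ := by
        have hX0 : 0 < X := hd0.trans_le hX
        have : 0 ≤ (b - s.re) / 2 := by linarith
        gcongr ?_ * ?_ ^ _ * ?_
        · exact setIntegral_nonneg measurableSet_Ioi fun y hy ↦ hnonneg y (hpos hd0 hy)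
        · refine setIntegral_mono_set (hint.mono_set (hpos hX0)) ?_
            (Ioi_subset_Ioi (one_div_le_one_div_of_le hd0 hX)).eventuallyLE
          filter_upwards [ae_restrict_mem measurableSet_Ioi] with y hy
          exact hnonneg y (hpos hX0 hy)

end SingleCharacter

lemma exists_sum_norm_LFunction_le {s : ℂ} {b ε : ℝ} (hs : s.re ≤ b) (hs' : 1 - s.re ≤ b)
    (hε : 0 < ε) :
    ∃ C : ℝ, 0 ≤ C ∧ ∀ X : ℝ, 1 ≤ X → ∀ (S : Finset ℕ) [∀ d : S, NeZero (8 * (d : ℕ))]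
      (χ : (d : S) → DirichletCharacter ℂ (8 * d)),
      (∀ d ∈ S, Odd d ∧ Squarefree d ∧ 8 * d ≤ X) →
      (∀ (d : S) (n : ℕ), Odd n → χ d n = jacobiSym (8 * d) n) →
      ∑ d, ‖(χ d).LFunction s‖ ≤ C * X ^ ((b - s.re) / 2 + 1 + ε) := by
  obtain ⟨C, hC, hmean⟩ := exists_integral_sum_abs_oddTheta_le (b := b) (by linarith) hε
  refine ⟨2 * ‖(Gammaℝ s)⁻¹‖ * C, by positivity, fun X hX S _ χ hS hχ ↦ ?_⟩
  have hX0 : 0 < X := by linarith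
  set f : ℤ → ℝ → ℝ := fun D y ↦ |oddTheta D y| * y ^ (b / 2 - 1)
  have hint (d : S) : IntegrableOn (f (8 * (d : ℕ))) (Ioi (1 / X)) :=
    (integrableOn_abs_oddTheta_mul_rpow (hS d d.2).1 (hS d d.2).2.1 (hχ d) b).mono_set
      (Ioi_subset_Ioi (by positivity))
  have hinj : Function.Injective fun d : S ↦ (8 * (d : ℕ) : ℤ) := fun d e h ↦
    Subtype.ext (by simpa using h)
  have ht : ∀ D ∈ Finset.univ.image fun d : S ↦ (8 * (d : ℕ) : ℤ), |(D : ℝ)| ≤ X := by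
    simp only [Finset.forall_mem_image]
    intro d _
    push_cast
    rw [abs_of_nonneg (by positivity)]
    exact (hS d d.2).2.2
  calc ∑ d, ‖(χ d).LFunction s‖
      ≤ ∑ d : S, 2 * ‖(Gammaℝ s)⁻¹‖ * X ^ ((b - s.re) / 2) *
          ∫ y in Ioi (1 / X), f (8 * (d : ℕ)) y :=
        Finset.sum_le_sum fun d _ ↦ norm_LFunction_le_integral_abs_oddTheta (hS d d.2).1
          (hS d d.2).2.1 (hχ d) hs hs' (hS d d.2).2.2
    _ = 2 * ‖(Gammaℝ s)⁻¹‖ * X ^ ((b - s.re) / 2) *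
          ∫ y in Ioi (1 / X), ∑ D ∈ Finset.univ.image fun d : S ↦ (8 * (d : ℕ) : ℤ), f D y := by
        simp only [Finset.sum_image hinj.injOn]
        rw [← Finset.mul_sum, integral_finsetSum _ fun d _ ↦ hint d]
    _ ≤ 2 * ‖(Gammaℝ s)⁻¹‖ * X ^ ((b - s.re) / 2) * (C * X ^ (1 + ε)) := by
        gcongr
        exact hmean X hX _ ht
    _ = _ := by
        rw [add_assoc, Real.rpow_add hX0 ((b - s.re) / 2)]
        ring

end Family

lemma max_sub_self_div_two_add_one (σ : ℝ) :
    (max σ (1 - σ) - σ) / 2 + 1 = max 1 (3 / 2 - σ) := by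
  rw [← max_sub_sub_right, ← max_div_div_right zero_le_two, ← max_add_add_right]
  congr 1 <;> ring

/-- Heath-Brown-type average bound for the first moment of
`L(σ+it, χ_{8d})` over odd squarefree `d ≤ X`.
The family `χ d` is the Kronecker character `(8d/·)` modulo `8d`, characterized by
`χ d n = jacobiSym (8d) n` for odd `n` and `χ d n = 0` for even `n`. -/
theorem statement4
    (χ : (d : ℕ) → DirichletCharacter ℂ (8 * d))
    (hχ : ∀ d : ℕ, Odd d → Squarefree d →
      (∀ n : ℕ, Odd n → χ d (n : ZMod (8 * d)) = ((jacobiSym (8 * d) n : ℤ) : ℂ)) ∧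
      (∀ n : ℕ, Even n → χ d (n : ZMod (8 * d)) = 0))
    (σ t : ℝ) (ε : ℝ) (hε : 0 < ε) :
    ∃ C : ℝ, 0 < C ∧ ∀ X : ℝ, 2 ≤ X →
      (∑ d ∈ Finset.Icc 1 ⌊X⌋₊,
        if h : Odd d ∧ Squarefree d then
          haveI : NeZero (8 * d) := ⟨by rcases h.1 with ⟨k, rfl⟩; omega⟩
          ‖(χ d).LFunction ((σ : ℂ) + (t : ℂ) * Complex.I)‖ else 0)
        ≤ C * X ^ (max 1 (3 / 2 - σ) + ε) := by
  have hre : ((σ : ℂ) + t * I).re = σ := by simp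
  obtain ⟨C, hC, hmoment⟩ := exists_sum_norm_LFunction_le (s := σ + t * I) (b := max σ (1 - σ))
    (hre.trans_le (le_max_left ..)) (hre.symm ▸ le_max_right ..) hε
  simp only [hre, max_sub_self_div_two_add_one] at hmoment
  set β := max 1 (3 / 2 - σ) + ε
  refine ⟨C * 8 ^ β + 1, by positivity, fun X hX ↦ ?_⟩
  set S := (Finset.Icc 1 ⌊X⌋₊).filter fun d ↦ Odd d ∧ Squarefree d
  have hS {d : ℕ} (hd : d ∈ S) : Odd d ∧ Squarefree d := (Finset.mem_filter.mp hd).2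
  have hle {d : ℕ} (hd : d ∈ S) : (d : ℝ) ≤ X :=
    (Nat.le_floor_iff (by linarith)).mp (Finset.mem_Icc.mp (Finset.mem_filter.mp hd).1).2
  have (d : S) : NeZero (8 * (d : ℕ)) := ⟨by have := (hS d.2).1.pos; omega⟩
  calc _ = ∑ d : S, ‖(χ d).LFunction (σ + t * I)‖ := by
        rw [Finset.sum_dite, Finset.sum_const_zero, add_zero]
    _ ≤ C * (8 * X) ^ β := hmoment (8 * X) (by linarith) S (fun d ↦ χ d)
        (fun d hd ↦ ⟨(hS hd).1, (hS hd).2, by linarith [hle hd]⟩)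
        fun d ↦ (hχ d (hS d.2).1 (hS d.2).2).1
    _ = C * 8 ^ β * X ^ β := by rw [Real.mul_rpow (by norm_num) (by linarith), mul_assoc]
    _ ≤ _ := by gcongr; linarith
end

section
/- For all σ ≥ 0 and t ∈ ℝ with σ+it ≠ 1, and every ε > 0, there is a constant C > 0 such that for all X ≥ 2: Σ_{1 ≤ n ≤ X, n odd} |L(σ+it, (·/n))| ≤ C·X^{max(1, 3/2−σ)+ε}. -/
open Complex

/-!
Poisson summation writes `L(s, χ)`, for a primitive real character `χ` of conductor `n ≤ X`, as a
Mellin integral of the theta series `∑ mᵃ χ(m) exp(-π m² u)` over `u ≥ X⁻¹`, up to a factor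
`X ^ max 0 (1/2 - re s)`. The sum over `n` of the absolute values of these theta series is bounded
by Cauchy–Schwarz and the following large sieve. Majorize the indicator of `n ≤ X` by a multiple of
`exp(-π n² / X²)` and open the square: a product of two symbols is `(k/n)` with `k = m₁ m₂`. If `k`
is a square the sum over `n` is trivially `O(X)`, and there are few such pairs; otherwise
`n ↦ (k/n)` is a nonprincipal even character modulo `4k`, and by Poisson summation its theta series
is `O(k^(1/2+ε))` uniformly in `X`. The characters `(·/b²r)` with `r` squarefree are induced by
`(·/r)`, and the extra Euler factors are harmless after summation over `b`.
-/

namespace QuadraticTwist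

open MeasureTheory Set Filter Topology Asymptotics
open scoped Real NumberTheorySymbols

/-- The Gaussian weight of the theta series attached to a character; the exponent `a ∈ {0, 1}` is
the parity of the character. -/
noncomputable def gaussWeight (a : ℕ) (y x : ℝ) : ℝ := x ^ a * Real.exp (-π * x ^ 2 * y)

lemma gaussWeight_nonneg (a : ℕ) (y : ℝ) (n : ℕ) : 0 ≤ gaussWeight a y n := by
  unfold gaussWeight; positivity

lemma gaussWeight_neg (a : ℕ) (y x : ℝ) : gaussWeight a y (-x) = (-1) ^ a * gaussWeight a y x := by
  rw [gaussWeight, gaussWeight, neg_pow, neg_sq, mul_assoc]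

lemma gaussWeight_zero_mul (y d x : ℝ) : gaussWeight 0 y (d * x) = gaussWeight 0 (d ^ 2 * y) x := by
  simp only [gaussWeight, pow_zero, one_mul]
  ring_nf

lemma gaussWeight_le_of_le (a n : ℕ) {y z : ℝ} (hyz : y ≤ z) :
    gaussWeight a z n ≤ gaussWeight a y n := by
  unfold gaussWeight
  gcongr ?_ * Real.exp ?_
  have : 0 ≤ π * (n : ℝ) ^ 2 := by positivity
  nlinarith

lemma summable_abs_gaussWeight (a : ℕ) {y : ℝ} (hy : 0 < y) :
    Summable fun n : ℤ ↦ |gaussWeight a y n| := by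
  refine (summable_pow_mul_jacobiTheta₂_term_bound 0 hy a).congr fun n ↦ ?_
  rw [gaussWeight, abs_mul, abs_pow, Real.abs_exp, Int.cast_abs]
  ring_nf

lemma summable_gaussWeight (a : ℕ) {y : ℝ} (hy : 0 < y) :
    Summable fun n : ℕ ↦ gaussWeight a y n :=
  ((summable_abs_gaussWeight a hy).comp_injective Nat.cast_injective).congr fun n ↦ by
    simpa using abs_of_nonneg (gaussWeight_nonneg a y n)

/-- The bilateral theta series with coefficients `f`, the object to which Poisson summation
applies. -/
noncomputable def biTheta (a : ℕ) (f : ℤ → ℂ) (y : ℝ) : ℂ := ∑' n : ℤ, f n * gaussWeight a y n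

/-- The theta series with coefficients `f` over the natural numbers, whose Mellin transform is the
Dirichlet series of `f`. -/
noncomputable def gaussTheta (a : ℕ) (f : ℕ → ℂ) (y : ℝ) : ℂ := ∑' n : ℕ, f n * gaussWeight a y n

lemma summable_biTheta (a : ℕ) {f : ℤ → ℂ} {B : ℝ} (hf : ∀ n, ‖f n‖ ≤ B) {y : ℝ} (hy : 0 < y) :
    Summable fun n : ℤ ↦ f n * gaussWeight a y n := by
  refine .of_norm_bounded ((summable_abs_gaussWeight a hy).mul_left B) fun n ↦ ?_
  rw [norm_mul, norm_real, Real.norm_eq_abs]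
  gcongr
  exact hf n

lemma norm_gaussTheta_term_le (a : ℕ) {f : ℕ → ℂ} (hf : ∀ n, ‖f n‖ ≤ 1) (y : ℝ) (n : ℕ) :
    ‖f n * gaussWeight a y n‖ ≤ gaussWeight a y n := by
  rw [norm_mul, norm_real, Real.norm_of_nonneg (gaussWeight_nonneg a y n)]
  exact mul_le_of_le_one_left (gaussWeight_nonneg a y n) (hf n)

lemma summable_gaussTheta (a : ℕ) {f : ℕ → ℂ} (hf : ∀ n, ‖f n‖ ≤ 1) {y : ℝ} (hy : 0 < y) :
    Summable fun n : ℕ ↦ f n * gaussWeight a y n :=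
  .of_norm_bounded (summable_gaussWeight a hy) (norm_gaussTheta_term_le a hf y)

lemma continuousOn_gaussTheta (a : ℕ) {f : ℕ → ℂ} (hf : ∀ n, ‖f n‖ ≤ 1) :
    ContinuousOn (gaussTheta a f) (Ioi 0) := by
  intro y (hy : 0 < y)
  have hcont : ContinuousOn (gaussTheta a f) (Ioi (y / 2)) := by
    refine continuousOn_tsum (fun n ↦ ?_) (summable_gaussWeight a (half_pos hy)) fun n x hx ↦
      (norm_gaussTheta_term_le a hf x n).trans (gaussWeight_le_of_le a n (le_of_lt hx))
    unfold gaussWeight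
    fun_prop
  exact (hcont.continuousAt (Ioi_mem_nhds (by linarith))).continuousWithinAt

lemma biTheta_eq_two_mul_gaussTheta {a : ℕ} {f : ℤ → ℂ} (hf0 : f 0 = 0) (hf : ∀ n, ‖f n‖ ≤ 1)
    (hpar : ∀ n, f (-n) = (-1) ^ a * f n) {y : ℝ} (hy : 0 < y) :
    biTheta a f y = 2 * gaussTheta a (fun n ↦ f n) y := by
  have h := (summable_biTheta a hf hy).hasSum.nat_add_neg.tsum_eq
  rw [hf0, zero_mul, add_zero] at h
  rw [biTheta, ← h, gaussTheta, ← tsum_mul_left]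
  refine tsum_congr fun n ↦ ?_
  have hsign : ((-1 : ℂ) ^ a) * (-1) ^ a = 1 := by rw [← mul_pow]; simp
  rw [hpar, Int.cast_neg, gaussWeight_neg, Int.cast_natCast]
  push_cast
  linear_combination (f n * gaussWeight a y n) * hsign

/-! ### Poisson summation for theta series of periodic functions -/

lemma tsum_int_eq_sum_zmod {E : Type*} [NormedAddCommGroup E] [CompleteSpace E] (N : ℕ) [NeZero N]
    {f : ℤ → E} (hf : Summable f) :
    ∑' n : ℤ, f n = ∑ j : ZMod N, ∑' q : ℤ, f (N * q + j.val) := by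
  obtain ⟨M, rfl⟩ := Nat.exists_eq_succ_of_ne_zero (NeZero.ne N)
  let e : Fin M.succ × ℤ ≃ ℤ := (Equiv.prodComm _ _).trans (Int.divModEquiv M.succ).symm
  have he : Summable fun p ↦ f (e p) := e.summable_iff.mpr hf
  rw [← e.tsum_eq f, he.tsum_prod, tsum_fintype]
  refine Finset.sum_congr rfl fun j _ ↦ tsum_congr fun q ↦ congrArg f ?_
  change q * (M.succ : ℤ) + (j.val : ℤ) = M.succ * q + (j.val : ℤ)
  ring

lemma stdAddChar_mul_intCast {N : ℕ} [NeZero N] (j : ZMod N) (n : ℤ) :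
    ZMod.stdAddChar (j * (n : ZMod N)) = cexp (2 * π * I * ((j.val : ℝ) / N : ℝ) * n) := by
  have hcast : j * (n : ZMod N) = ((j.val * n : ℤ) : ZMod N) := by simp
  rw [hcast, ZMod.stdAddChar_coe]
  push_cast
  ring_nf

lemma tsum_gaussWeight_residueClass {N : ℕ} [NeZero N] {a : ℕ} (ha : a ≤ 1) (j : ZMod N) {x : ℝ}
    (hx : 0 < x) :
    ∑' q : ℤ, (gaussWeight a (x / N ^ 2) ((N * q + j.val : ℤ) : ℝ) : ℂ) =
      (N : ℂ) ^ a * (-I) ^ a * (x ^ (-(1 / 2 + a) : ℝ) : ℝ) *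
        ∑' n : ℤ, ZMod.stdAddChar (j * (n : ZMod N)) * gaussWeight a (1 / x) n := by
  have hN : (N : ℝ) ≠ 0 := NeZero.ne _
  have hshift (q : ℤ) : gaussWeight a (x / N ^ 2) ((N * q + j.val : ℤ) : ℝ) =
      N ^ a * gaussWeight a x (q + (j.val : ℝ) / N) := by
    have hpt : ((N * q + j.val : ℤ) : ℝ) = N * (q + (j.val : ℝ) / N) := by
      push_cast
      field_simp
    rw [hpt, gaussWeight, gaussWeight, mul_pow, mul_assoc]
    congr 3
    field_simp
  simp only [hshift, stdAddChar_mul_intCast, ofReal_mul, tsum_mul_left]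
  rw [mul_assoc, mul_assoc, ofReal_pow, ofReal_natCast]
  congr 1
  have hx' : 0 < 1 / x := by positivity
  interval_cases a
  · have hfe := HurwitzZeta.evenKernel_functional_equation ((j.val : ℝ) / N : ℝ) x
    rw [← (HurwitzZeta.hasSum_int_evenKernel _ hx).tsum_eq] at hfe
    have hcos := (HurwitzZeta.hasSum_int_cosKernel ((j.val : ℝ) / N) hx').tsum_eq
    simp only [gaussWeight, pow_zero, one_mul, CharP.cast_eq_zero, add_zero]
    rw [hcos, ← ofReal_tsum, hfe, ofReal_mul, Real.rpow_neg hx.le, one_div (x ^ _)]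
  · have hfe := HurwitzZeta.oddKernel_functional_equation ((j.val : ℝ) / N : ℝ) x
    rw [← (HurwitzZeta.hasSum_int_oddKernel _ hx).tsum_eq] at hfe
    have hsin := (HurwitzZeta.hasSum_int_sinKernel ((j.val : ℝ) / N) hx').tsum_eq
    have hexp : (-(1 / 2 + (1 : ℕ)) : ℝ) = -(3 / 2) := by norm_num
    simp only [gaussWeight, pow_one]
    rw [← ofReal_tsum, hfe, ofReal_mul, ← hsin, hexp, Real.rpow_neg hx.le, one_div (x ^ _),
      mul_left_comm, ← tsum_mul_left (a := -I)]
    congr 1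
    refine tsum_congr fun n ↦ ?_
    push_cast
    ring

theorem biTheta_functional_equation {N : ℕ} [NeZero N] {a : ℕ} (ha : a ≤ 1) (Φ : ZMod N → ℂ)
    {x : ℝ} (hx : 0 < x) :
    biTheta a (fun n ↦ Φ n) (x / N ^ 2) =
      (N : ℂ) ^ a * (-I) ^ a * (x ^ (-(1 / 2 + a) : ℝ) : ℝ) *
        biTheta a (fun n ↦ ZMod.dft Φ (-(n : ZMod N))) (1 / x) := by
  have hN : 0 < (N : ℝ) := Nat.cast_pos.mpr (NeZero.pos N)
  obtain ⟨B, hB⟩ : ∃ B, ∀ j, ‖Φ j‖ ≤ B :=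
    ⟨∑ j, ‖Φ j‖, fun j ↦ Finset.single_le_sum (fun i _ ↦ norm_nonneg (Φ i)) (Finset.mem_univ j)⟩
  have hdual (j : ZMod N) : Summable fun n : ℤ ↦
      Φ j * (ZMod.stdAddChar (j * (n : ZMod N)) * gaussWeight a (1 / x) n) :=
    (summable_biTheta a (B := 1) (fun n ↦ (AddChar.norm_apply _ _).le)
      (one_div_pos.mpr hx)).mul_left _
  calc biTheta a (fun n ↦ Φ n) (x / N ^ 2)
      = ∑ j : ZMod N, Φ j *
          ∑' q : ℤ, (gaussWeight a (x / N ^ 2) ((N * q + j.val : ℤ) : ℝ) : ℂ) := by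
        rw [biTheta, tsum_int_eq_sum_zmod N (summable_biTheta a (fun n ↦ hB n) (by positivity))]
        simp [tsum_mul_left]
    _ = (N : ℂ) ^ a * (-I) ^ a * (x ^ (-(1 / 2 + a) : ℝ) : ℝ) *
          ∑' n : ℤ, ∑ j : ZMod N,
            Φ j * (ZMod.stdAddChar (j * (n : ZMod N)) * gaussWeight a (1 / x) n) := by
        rw [Summable.tsum_finsetSum fun j _ ↦ hdual j, Finset.mul_sum]
        refine Finset.sum_congr rfl fun j _ ↦ ?_
        rw [tsum_gaussWeight_residueClass ha j hx, tsum_mul_left, mul_left_comm]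
    _ = _ := by
        rw [biTheta]
        congr 2 with n
        rw [ZMod.dft_apply, Finset.sum_mul]
        refine Finset.sum_congr rfl fun j _ ↦ ?_
        rw [mul_neg, neg_neg, smul_eq_mul]
        ring

/-! ### Theta series of primitive characters -/

lemma norm_gaussSum_stdAddChar {N : ℕ} [NeZero N] {χ : DirichletCharacter ℂ N}
    (hχ : χ.IsPrimitive) : ‖gaussSum χ ZMod.stdAddChar‖ = √N := by
  have hdft : ZMod.dft (χ : ZMod N → ℂ) = fun k ↦ χ⁻¹ (-k) * gaussSum χ ZMod.stdAddChar :=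
    funext hχ.fourierTransform_eq_inv_mul_gaussSum
  have hstar : ZMod.dft (fun k ↦ χ⁻¹ (-k)) (-1) = star (gaussSum χ ZMod.stdAddChar) := by
    rw [star_gaussSum_eq, ZMod.dft_comp_neg]
    simp only [neg_neg]
    rw [ZMod.dft_apply, gaussSum]
    simp only [mul_one, smul_eq_mul, AddChar.inv_apply, mul_comm]
  have hinv := congrFun (ZMod.dft_dft (χ : ZMod N → ℂ)) (-1)
  rw [hdft, ZMod.dft_mul_const] at hinv
  simp only [neg_neg, map_one, smul_eq_mul, mul_one, hstar] at hinv
  have hsq : ‖gaussSum χ ZMod.stdAddChar‖ ^ 2 = N := by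
    simpa [sq] using congrArg norm hinv
  rw [← hsq, Real.sqrt_sq (norm_nonneg _)]

/-- The theta series of a Dirichlet character, scaled so that its functional equation is
`y ↔ 1 / y`. -/
noncomputable def charTheta (a : ℕ) {N : ℕ} (χ : DirichletCharacter ℂ N) (y : ℝ) : ℂ :=
  gaussTheta a (fun n ↦ χ n) (y / N)

lemma biTheta_char {N : ℕ} (hN : N ≠ 1) {a : ℕ} {χ : DirichletCharacter ℂ N}
    (hpar : χ (-1) = (-1) ^ a) {y : ℝ} (hy : 0 < y) :
    biTheta a (fun n ↦ χ n) y = 2 * gaussTheta a (fun n ↦ χ n) y := by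
  have h := biTheta_eq_two_mul_gaussTheta (a := a) (f := fun n ↦ χ n)
    (by simpa using χ.map_zero' hN) (fun n ↦ χ.norm_le_one n)
    (fun n ↦ by rw [Int.cast_neg, ← neg_one_mul, map_mul, hpar]) hy
  simpa using h

lemma inv_neg_one_eq_of_parity {N a : ℕ} {χ : DirichletCharacter ℂ N}
    (hpar : χ (-1) = (-1) ^ a) : χ⁻¹ (-1) = (-1) ^ a := by
  rw [MulChar.inv_apply_eq_inv', hpar, ← inv_pow]
  norm_num

theorem charTheta_functional_equation {N : ℕ} [NeZero N] (hN : N ≠ 1) {a : ℕ} (ha : a ≤ 1)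
    {χ : DirichletCharacter ℂ N} (hχ : χ.IsPrimitive) (hpar : χ (-1) = (-1) ^ a) {y : ℝ}
    (hy : 0 < y) :
    charTheta a χ (1 / y) =
      (-I) ^ a * gaussSum χ ZMod.stdAddChar / √N * (y ^ (a + 1 / 2 : ℝ) : ℝ) *
        charTheta a χ⁻¹ y := by
  have hN0 : 0 < (N : ℝ) := Nat.cast_pos.mpr (NeZero.pos N)
  have hfe := biTheta_functional_equation ha χ (x := N / y) (by positivity)
  have hdft : (fun n : ℤ ↦ ZMod.dft (χ : ZMod N → ℂ) (-(n : ZMod N))) =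
      fun n : ℤ ↦ gaussSum χ ZMod.stdAddChar * χ⁻¹ n := by
    funext n
    rw [hχ.fourierTransform_eq_inv_mul_gaussSum, neg_neg, mul_comm]
  have hscale : biTheta a (fun n ↦ gaussSum χ ZMod.stdAddChar * χ⁻¹ n) (y / N) =
      gaussSum χ ZMod.stdAddChar * biTheta a (fun n ↦ χ⁻¹ n) (y / N) := by
    simp only [biTheta, mul_assoc, tsum_mul_left]
  have harg : (N : ℝ) / y / N ^ 2 = 1 / y / N := by field_simp
  have hpow : (N : ℝ) ^ a * (N / y) ^ (-(1 / 2 + a) : ℝ) = (√N)⁻¹ * y ^ (a + 1 / 2 : ℝ) := by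
    rw [Real.div_rpow hN0.le hy.le, neg_add, Real.rpow_add hN0, ← neg_add, Real.rpow_neg hy.le,
      Real.rpow_neg hN0.le (1 / 2), Real.rpow_neg hN0.le (a : ℝ), Real.rpow_natCast,
      ← Real.sqrt_eq_rpow, add_comm (1 / 2 : ℝ)]
    field_simp
  rw [harg, one_div_div, hdft, hscale, biTheta_char hN hpar (by positivity),
    biTheta_char hN (inv_neg_one_eq_of_parity hpar) (by positivity)] at hfe
  have hpowC := congrArg (fun r : ℝ ↦ (r : ℂ)) hpow
  push_cast at hpowC
  rw [charTheta, charTheta, div_eq_mul_inv _ (√(N : ℝ) : ℂ)]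
  linear_combination hfe / 2 + (-I) ^ a * gaussSum χ ZMod.stdAddChar *
    gaussTheta a (fun n ↦ χ⁻¹ n) (y / N) * hpowC

lemma norm_charTheta_one_div {N : ℕ} [NeZero N] (hN : N ≠ 1) {a : ℕ} (ha : a ≤ 1)
    {χ : DirichletCharacter ℂ N} (hχ : χ.IsPrimitive) (hpar : χ (-1) = (-1) ^ a) {y : ℝ}
    (hy : 0 < y) :
    ‖charTheta a χ (1 / y)‖ = y ^ (a + 1 / 2 : ℝ) * ‖charTheta a χ⁻¹ y‖ := by
  have hsqrt : √(N : ℝ) ≠ 0 := by simp [NeZero.ne N]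
  rw [charTheta_functional_equation hN ha hχ hpar hy, norm_mul, norm_mul, norm_div, norm_mul,
    norm_pow, norm_neg, norm_I, one_pow, one_mul, norm_gaussSum_stdAddChar hχ, norm_real,
    Real.norm_of_nonneg (Real.sqrt_nonneg _), div_self hsqrt, one_mul, norm_real,
    Real.norm_of_nonneg (by positivity)]

lemma exp_neg_le_rpow {A u : ℝ} (hA : 0 < A) (hu : 0 < u) :
    Real.exp (-u) ≤ A ^ A * u ^ (-A) := by
  have hexp : u / A ≤ Real.exp (u / A) := (lt_add_one _).le.trans (Real.add_one_le_exp _)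
  have hpow : u ^ A / A ^ A ≤ Real.exp u := by
    calc u ^ A / A ^ A = (u / A) ^ A := (Real.div_rpow hu.le hA.le A).symm
      _ ≤ Real.exp (u / A) ^ A := by gcongr
      _ = Real.exp u := by rw [← Real.exp_mul, div_mul_cancel₀ _ hA.ne']
  calc Real.exp (-u) = (Real.exp u)⁻¹ := Real.exp_neg u
    _ ≤ (u ^ A / A ^ A)⁻¹ := by gcongr
    _ = A ^ A * u ^ (-A) := by rw [inv_div, Real.rpow_neg hu.le, div_eq_mul_inv]

lemma gaussWeight_le {A x y : ℝ} (a : ℕ) (hA : 0 < A) (hy : 0 < y) (hx : 0 < x) :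
    gaussWeight a y x ≤ A ^ A * π ^ (-A) * y ^ (-A) * x ^ (a - 2 * A) := by
  calc gaussWeight a y x = x ^ a * Real.exp (-(π * x ^ 2 * y)) := by rw [gaussWeight]; ring_nf
    _ ≤ x ^ a * (A ^ A * (π * x ^ 2 * y) ^ (-A)) := by
        gcongr
        exact exp_neg_le_rpow hA (by positivity)
    _ = A ^ A * π ^ (-A) * y ^ (-A) * x ^ (a - 2 * A) := by
        rw [Real.mul_rpow (by positivity) hy.le, Real.mul_rpow (by positivity) (by positivity),
          ← Real.rpow_natCast_mul hx.le, sub_eq_add_neg, Real.rpow_add hx, Real.rpow_natCast]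
        push_cast
        ring_nf

lemma norm_gaussTheta_le (a : ℕ) {A : ℝ} (hA : (a + 1 : ℝ) / 2 < A) {f : ℕ → ℂ}
    (hf : ∀ n, ‖f n‖ ≤ 1) (hf0 : f 0 = 0) {y : ℝ} (hy : 0 < y) :
    ‖gaussTheta a f y‖ ≤ A ^ A * π ^ (-A) * (∑' n : ℕ, (n : ℝ) ^ (a - 2 * A)) * y ^ (-A) := by
  have hA0 : 0 < A := lt_trans (by positivity) hA
  have hsum : Summable fun n : ℕ ↦ (n : ℝ) ^ (a - 2 * A) :=
    Real.summable_nat_rpow.mpr (by linarith)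
  refine (tsum_of_norm_bounded (hsum.mul_left (A ^ A * π ^ (-A) * y ^ (-A))).hasSum
    fun n ↦ ?_).trans_eq (by rw [tsum_mul_left]; ring)
  rcases n.eq_zero_or_pos with rfl | hn
  · rw [hf0, zero_mul, norm_zero]
    positivity
  · exact (norm_gaussTheta_term_le a hf y n).trans (gaussWeight_le a hA0 hy (Nat.cast_pos.mpr hn))

lemma gaussTheta_isBigO_atTop (a : ℕ) {f : ℕ → ℂ} (hf : ∀ n, ‖f n‖ ≤ 1) (hf0 : f 0 = 0)
    (r : ℝ) : gaussTheta a f =O[atTop] fun y : ℝ ↦ y ^ r := by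
  obtain ⟨A, hA, hAr⟩ : ∃ A : ℝ, (a + 1 : ℝ) / 2 < A ∧ -A ≤ r :=
    ⟨max ((a + 1) / 2 + 1) (-r), lt_max_of_lt_left (lt_add_one _),
      neg_le.mpr (le_max_right _ _)⟩
  have hdecay : gaussTheta a f =O[atTop] fun y : ℝ ↦ y ^ (-A) :=
    .of_bound _ <| (eventually_gt_atTop 0).mono fun y hy ↦ by
      rw [Real.norm_of_nonneg (by positivity : (0 : ℝ) ≤ y ^ (-A))]
      exact norm_gaussTheta_le a hA hf hf0 hy
  refine hdecay.trans (.of_bound 1 <| (eventually_ge_atTop 1).mono fun y hy ↦ ?_)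
  rw [one_mul, Real.norm_of_nonneg (by positivity), Real.norm_of_nonneg (by positivity)]
  gcongr

/-! ### The Mellin transform -/

lemma charTheta_isBigO_atTop {N : ℕ} [NeZero N] (hN : N ≠ 1) (a : ℕ) (χ : DirichletCharacter ℂ N)
    (r : ℝ) : charTheta a χ =O[atTop] fun y : ℝ ↦ y ^ r := by
  have hN0 : 0 < (N : ℝ) := Nat.cast_pos.mpr (NeZero.pos N)
  have h := (gaussTheta_isBigO_atTop a (fun n ↦ χ.norm_le_one n)
    (by simpa using χ.map_zero' hN) r).comp_tendsto (tendsto_id.atTop_div_const hN0)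
  refine h.trans (.of_bound ((N : ℝ) ^ (-r)) <| (eventually_gt_atTop 0).mono fun y hy ↦ ?_)
  simp only [Function.comp_apply, id_eq]
  rw [Real.div_rpow hy.le hN0.le, norm_div, Real.rpow_neg hN0.le,
    Real.norm_of_nonneg (by positivity : 0 ≤ (N : ℝ) ^ r), div_eq_inv_mul]

lemma locallyIntegrableOn_charTheta {N : ℕ} [NeZero N] (a : ℕ) (χ : DirichletCharacter ℂ N) :
    LocallyIntegrableOn (charTheta a χ) (Ioi 0) := by
  have hN0 : 0 < (N : ℝ) := Nat.cast_pos.mpr (NeZero.pos N)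
  refine ContinuousOn.locallyIntegrableOn ?_ measurableSet_Ioi
  exact (continuousOn_gaussTheta a fun n ↦ χ.norm_le_one n).comp (by fun_prop)
    fun y (hy : 0 < y) ↦ div_pos hy hN0

/-- The theta series of a primitive character and of its inverse, as a functional-equation pair. -/
noncomputable def charThetaPair {N : ℕ} [NeZero N] (hN : N ≠ 1) {a : ℕ} (ha : a ≤ 1)
    {χ : DirichletCharacter ℂ N} (hχ : χ.IsPrimitive) (hpar : χ (-1) = (-1) ^ a) :
    WeakFEPair ℂ where
  f := charTheta a χ
  g := charTheta a χ⁻¹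
  k := a + 1 / 2
  ε := (-I) ^ a * gaussSum χ ZMod.stdAddChar / √N
  f₀ := 0
  g₀ := 0
  hf_int := locallyIntegrableOn_charTheta a χ
  hg_int := locallyIntegrableOn_charTheta a χ⁻¹
  hk := by positivity
  hε := by
    have hgauss : gaussSum χ ZMod.stdAddChar ≠ 0 := by
      rw [← norm_ne_zero_iff, norm_gaussSum_stdAddChar hχ]
      simp [NeZero.ne N]
    simp [hgauss, NeZero.ne N]
  h_feq _ hy := charTheta_functional_equation hN ha hχ hpar hy
  hf_top r := by simpa using charTheta_isBigO_atTop hN a χ r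
  hg_top r := by simpa using charTheta_isBigO_atTop hN a χ⁻¹ r

lemma isStrongFEPair_charThetaPair {N : ℕ} [NeZero N] (hN : N ≠ 1) {a : ℕ} (ha : a ≤ 1)
    {χ : DirichletCharacter ℂ N} (hχ : χ.IsPrimitive) (hpar : χ (-1) = (-1) ^ a) :
    IsStrongFEPair (charThetaPair hN ha hχ hpar) := ⟨rfl, rfl⟩

lemma gammaFactor_eq_of_parity {N a : ℕ} (ha : a ≤ 1) {χ : DirichletCharacter ℂ N}
    (hpar : χ (-1) = (-1) ^ a) (s : ℂ) : χ.gammaFactor s = Gammaℝ (s + a) := by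
  interval_cases a
  · rw [DirichletCharacter.Even.gammaFactor_def (by simpa [DirichletCharacter.Even] using hpar),
      Nat.cast_zero, add_zero]
  · rw [DirichletCharacter.Odd.gammaFactor_def (by simpa [DirichletCharacter.Odd] using hpar),
      Nat.cast_one]

lemma mellin_gaussTheta_char {N : ℕ} (hN : N ≠ 1) (a : ℕ) (χ : DirichletCharacter ℂ N) {s : ℂ}
    (hs : 1 < s.re) :
    mellin (gaussTheta a fun n ↦ χ n) ((s + a) / 2) =
      Gammaℝ (s + a) * LSeries (fun n ↦ χ n) s := by
  have hχ0 : χ 0 = 0 := χ.map_zero' hN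
  have hre : (s + a).re = s.re + a := by simp
  have hmellin := hasSum_mellin_pi_mul_sq (a := fun n : ℕ ↦ (n : ℂ) ^ a * χ n)
    (r := fun n : ℕ ↦ (n : ℝ)) (F := gaussTheta a fun n ↦ χ n) (s := s + a)
    (by rw [hre]; positivity) (fun y hy ↦ ?_) ?_
  · rw [← hmellin.tsum_eq, LSeries, ← tsum_mul_left]
    refine tsum_congr fun n ↦ ?_
    rcases eq_or_ne n 0 with rfl | hn
    · simp [hχ0]
    · have hn' : (n : ℂ) ≠ 0 := Nat.cast_ne_zero.mpr hn
      have hpow : (n : ℂ) ^ a ≠ 0 := pow_ne_zero _ hn'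
      rw [LSeries.term_of_ne_zero hn, Nat.abs_cast, ofReal_natCast, cpow_add _ _ hn', cpow_natCast]
      field_simp
  · rw [gaussTheta]
    convert (summable_gaussTheta a (fun n ↦ χ.norm_le_one n) hy).hasSum using 2 with n
    rcases eq_or_ne n 0 with rfl | hn
    · simp [hχ0]
    · rw [if_neg (Nat.cast_ne_zero.mpr hn), gaussWeight]
      push_cast
      ring
  · refine (Real.summable_one_div_nat_rpow.mpr hs).of_nonneg_of_le (fun n ↦ by positivity)
      fun n ↦ ?_
    rcases eq_or_ne n 0 with rfl | hn
    · simp only [Nat.cast_zero, hχ0, mul_zero, norm_zero, zero_div]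
      positivity
    · have hn0 : (0 : ℝ) < n := by positivity
      rw [hre, Nat.abs_cast, Real.rpow_add hn0, Real.rpow_natCast, norm_mul, norm_pow,
        Complex.norm_natCast, mul_comm (_ ^ s.re), mul_div_mul_left _ _ (by positivity)]
      gcongr
      exact χ.norm_le_one n

lemma mellin_gaussTheta_eq {N : ℕ} [NeZero N] (a : ℕ) (χ : DirichletCharacter ℂ N) (w : ℂ) :
    mellin (gaussTheta a fun n ↦ χ n) w = (N : ℂ) ^ (-w) * mellin (charTheta a χ) w := by
  have hN0 : 0 < (N : ℝ) := Nat.cast_pos.mpr (NeZero.pos N)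
  have h := mellin_comp_mul_left (charTheta a χ) w hN0
  simpa [charTheta, hN0.ne', mul_div_cancel_left₀] using h

theorem completedLFunction_eq_mellin {N : ℕ} [NeZero N] (hN : N ≠ 1) {a : ℕ} (ha : a ≤ 1)
    {χ : DirichletCharacter ℂ N} (hχ : χ.IsPrimitive) (hpar : χ (-1) = (-1) ^ a) (s : ℂ) :
    χ.completedLFunction s =
      (N : ℂ) ^ (-((s + a) / 2)) * mellin (charTheta a χ) ((s + a) / 2) := by
  have hχ1 : χ ≠ 1 := by
    rintro rfl
    exact hN (hχ.symm.trans (DirichletCharacter.conductor_one))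
  have hN' : (N : ℂ) ≠ 0 := NeZero.ne _
  have hmellin : Differentiable ℂ (mellin (charTheta a χ)) := by
    have hP := isStrongFEPair_charThetaPair hN ha hχ hpar
    have hΛ : mellin (charTheta a χ) = (charThetaPair hN ha hχ hpar).Λ :=
      funext fun w ↦ (hP.hasMellin w).2
    exact hΛ ▸ hP.differentiable_Λ
  have hentire : Differentiable ℂ fun s : ℂ ↦
      (N : ℂ) ^ (-((s + a) / 2)) * mellin (charTheta a χ) ((s + a) / 2) :=
    .mul (.const_cpow (by fun_prop) (.inl hN')) (hmellin.comp (by fun_prop))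
  have hev : χ.completedLFunction =ᶠ[𝓝 (2 : ℂ)] fun s : ℂ ↦
      (N : ℂ) ^ (-((s + a) / 2)) * mellin (charTheta a χ) ((s + a) / 2) := by
    filter_upwards [(isOpen_lt continuous_const continuous_re).mem_nhds
      (show (1 : ℝ) < (2 : ℂ).re by simp)] with z (hz : 1 < z.re)
    have hΓ : Gammaℝ (z + a) ≠ 0 := Gammaℝ_ne_zero_of_re_pos (by
      rw [add_re, natCast_re]; positivity)
    rw [← mellin_gaussTheta_eq, mellin_gaussTheta_char hN a χ hz, ← χ.LFunction_eq_LSeries hz,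
      χ.LFunction_eq_completed_div_gammaFactor z (.inr hN), gammaFactor_eq_of_parity ha hpar,
      mul_div_cancel₀ _ hΓ]
  exact congrFun (AnalyticOnNhd.eq_of_eventuallyEq
    ((DirichletCharacter.differentiable_completedLFunction hχ1).differentiableOn.analyticOnNhd
      isOpen_univ)
    (hentire.differentiableOn.analyticOnNhd isOpen_univ) hev) s

lemma setIntegral_Ioc_zero_one_eq_Ioi {E : Type*} [NormedAddCommGroup E] [NormedSpace ℝ E]
    (g : ℝ → E) : ∫ y in Ioc 0 1, g y = ∫ y in Ioi 1, y ^ (-2 : ℝ) • g y⁻¹ := by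
  calc ∫ y in Ioc 0 1, g y = ∫ y in Ioi 0, (Iio 1).indicator g y := by
        rw [setIntegral_indicator measurableSet_Iio, Ioi_inter_Iio, integral_Ioc_eq_integral_Ioo]
    _ = ∫ y in Ioi 0, (Ioi 1).indicator (fun y ↦ y ^ (-2 : ℝ) • g y⁻¹) y := by
        rw [← integral_comp_rpow_Ioi _ (by norm_num : (-1 : ℝ) ≠ 0)]
        refine setIntegral_congr_fun measurableSet_Ioi fun y (hy : 0 < y) ↦ ?_
        have hexp : (-1 - 1 : ℝ) = -2 := by norm_num
        simp only [abs_neg, abs_one, one_mul, hexp, Real.rpow_neg_one, indicator_apply, mem_Iio,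
          mem_Ioi, inv_lt_one₀ hy, smul_ite, smul_zero]
    _ = ∫ y in Ioi 1, y ^ (-2 : ℝ) • g y⁻¹ := by
        rw [setIntegral_indicator measurableSet_Ioi, Ioi_inter_Ioi, sup_eq_right.mpr zero_le_one]

/-- Folding the Mellin integral at `1`, where the functional equation exchanges `w` and `k - w`. -/
lemma integral_rpow_mul_le_of_reflection {F : ℝ → ℝ} {k w : ℝ} (hF : ∀ y, 0 ≤ F y)
    (hrefl : ∀ y, 1 < y → F y⁻¹ = y ^ k * F y)
    (hint : ∀ r : ℝ, IntegrableOn (fun y ↦ y ^ r * F y) (Ioi 0)) :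
    ∫ y in Ioi 0, y ^ (w - 1) * F y ≤ 2 * ∫ y in Ioi 1, y ^ (max w (k - w) - 1) * F y := by
  have hint_one (r : ℝ) : IntegrableOn (fun y ↦ y ^ r * F y) (Ioi 1) :=
    (hint r).mono_set (Ioi_subset_Ioi zero_le_one)
  have hmono {v : ℝ} (hv : v ≤ max w (k - w)) :
      ∫ y in Ioi 1, y ^ (v - 1) * F y ≤ ∫ y in Ioi 1, y ^ (max w (k - w) - 1) * F y := by
    refine setIntegral_mono_on (hint_one _) (hint_one _) measurableSet_Ioi fun y (hy : 1 < y) ↦ ?_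
    gcongr
    exacts [hF y, hy.le]
  have hfold : ∫ y in Ioc 0 1, y ^ (w - 1) * F y = ∫ y in Ioi 1, y ^ (k - w - 1) * F y := by
    rw [setIntegral_Ioc_zero_one_eq_Ioi]
    refine setIntegral_congr_fun measurableSet_Ioi fun y (hy : 1 < y) ↦ ?_
    have hy0 : 0 < y := one_pos.trans hy
    simp only [smul_eq_mul]
    rw [hrefl y hy, Real.inv_rpow hy0.le, ← Real.rpow_neg hy0.le, ← mul_assoc, ← mul_assoc,
      ← Real.rpow_add hy0, ← Real.rpow_add hy0]
    ring_nf
  rw [← Ioc_union_Ioi_eq_Ioi zero_le_one, setIntegral_union (Ioc_disjoint_Ioi le_rfl)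
    measurableSet_Ioi ((hint _).mono_set Ioc_subset_Ioi_self) (hint_one _), hfold, two_mul]
  exact add_le_add (hmono (le_max_right _ _)) (hmono (le_max_left _ _))

lemma norm_mellin_le (f : ℝ → ℂ) (w : ℂ) :
    ‖mellin f w‖ ≤ ∫ y in Ioi 0, y ^ (w.re - 1) * ‖f y‖ := by
  refine (norm_integral_le_integral_norm _).trans_eq
    (setIntegral_congr_fun measurableSet_Ioi fun y (hy : 0 < y) ↦ ?_)
  simp only [norm_smul, norm_cpow_eq_rpow_re_of_pos hy, sub_re, one_re]

lemma integrableOn_rpow_mul_norm_gaussTheta (a : ℕ) {f : ℕ → ℂ} (hf : ∀ n, ‖f n‖ ≤ 1)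
    (hf0 : f 0 = 0) (r : ℝ) {c : ℝ} (hc : 0 < c) :
    IntegrableOn (fun u ↦ u ^ r * ‖gaussTheta a f u‖) (Ioi c) := by
  have hsub : Ici c ⊆ Ioi 0 := fun u hu ↦ hc.trans_le hu
  have hcont : ContinuousOn (fun u : ℝ ↦ u ^ r * ‖gaussTheta a f u‖) (Ici c) :=
    (continuousOn_id.rpow_const fun u hu ↦ .inl (hsub hu).ne').mul
      ((continuousOn_gaussTheta a hf).mono hsub).norm
  have hdecay : (fun u : ℝ ↦ u ^ r * ‖gaussTheta a f u‖) =O[atTop] fun u ↦ u ^ (-2 : ℝ) := by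
    refine ((isBigO_refl (fun u : ℝ ↦ u ^ r) atTop).mul
      (gaussTheta_isBigO_atTop a hf hf0 (-2 - r)).norm_left).congr' .rfl ?_
    filter_upwards [eventually_gt_atTop 0] with u hu
    rw [← Real.rpow_add hu, add_sub_cancel]
  refine ((hcont.locallyIntegrableOn measurableSet_Ici).integrableOn_of_isBigO_atTop hdecay
    ⟨Ioi 1, Ioi_mem_atTop 1, ?_⟩).mono_set Ioi_subset_Ici_self
  exact integrableOn_Ioi_rpow_of_lt (by norm_num) one_pos

/-- The part over `u > X⁻¹` of the Mellin integral of `|gaussTheta a f|` at `v`. For a primitive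
character of conductor at most `X` it controls the `L`-values on the lines `re s = 2 v - a` and
`re s = 1 - 2 v + a`. -/
noncomputable def mellinTail (a : ℕ) (f : ℕ → ℂ) (v X : ℝ) : ℝ :=
  ∫ u in Ioi X⁻¹, u ^ (v - 1) * ‖gaussTheta a f u‖

section MellinTail

variable (a : ℕ) (f : ℕ → ℂ) (v : ℝ) {X Y : ℝ}

lemma mellinTail_integrand_nonneg (hX : 0 < X) {u : ℝ} (hu : u ∈ Ioi X⁻¹) :
    0 ≤ u ^ (v - 1) * ‖gaussTheta a f u‖ := by
  have := (inv_pos.mpr hX).trans hu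
  positivity

lemma mellinTail_nonneg (hX : 0 < X) : 0 ≤ mellinTail a f v X :=
  setIntegral_nonneg measurableSet_Ioi fun _ ↦ mellinTail_integrand_nonneg a f v hX

variable {f} in
lemma mellinTail_mono (hf : ∀ n, ‖f n‖ ≤ 1) (hf0 : f 0 = 0) (hX : 0 < X) (hXY : X ≤ Y) :
    mellinTail a f v X ≤ mellinTail a f v Y := by
  have hY : 0 < Y := hX.trans_le hXY
  refine setIntegral_mono_set (integrableOn_rpow_mul_norm_gaussTheta a hf hf0 _ (inv_pos.mpr hY)) ?_
    (Ioi_subset_Ioi (by gcongr)).eventuallyLE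
  exact (ae_restrict_iff' measurableSet_Ioi).mpr
    (.of_forall fun _ ↦ mellinTail_integrand_nonneg a f v hY)

end MellinTail

section PrimitiveReal

variable {N : ℕ} [NeZero N] {a : ℕ} {χ : DirichletCharacter ℂ N}

lemma integrableOn_rpow_mul_norm_charTheta (hN : N ≠ 1) (ha : a ≤ 1) (hχ : χ.IsPrimitive)
    (hpar : χ (-1) = (-1) ^ a) (r : ℝ) :
    IntegrableOn (fun y ↦ y ^ r * ‖charTheta a χ y‖) (Ioi 0) := by
  have hconv := ((isStrongFEPair_charThetaPair hN ha hχ hpar).hasMellin (r + 1)).1.norm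
  refine IntegrableOn.congr_fun hconv (fun y (hy : 0 < y) ↦ ?_) measurableSet_Ioi
  simp only [norm_smul, norm_cpow_eq_rpow_re_of_pos hy]
  simp [charThetaPair]

lemma integral_Ioi_one_charTheta (κ : ℝ) :
    ∫ y in Ioi 1, y ^ (κ - 1) * ‖charTheta a χ y‖ =
      (N : ℝ) ^ κ * mellinTail a (fun n ↦ χ n) κ N := by
  rw [mellinTail]
  have hN0 : 0 < (N : ℝ) := Nat.cast_pos.mpr (NeZero.pos N)
  have hsubst := integral_comp_mul_left_Ioi (fun y ↦ y ^ (κ - 1) * ‖charTheta a χ y‖) (N : ℝ)⁻¹ hN0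
  rw [mul_inv_cancel₀ hN0.ne', smul_eq_mul, eq_inv_mul_iff_mul_eq₀ hN0.ne'] at hsubst
  rw [← hsubst, ← integral_const_mul, ← integral_const_mul]
  refine setIntegral_congr_fun measurableSet_Ioi fun u hu ↦ ?_
  have hu0 : 0 < u := (inv_pos.mpr hN0).trans hu
  simp only [charTheta, mul_div_cancel_left₀ _ hN0.ne']
  rw [Real.mul_rpow hN0.le hu0.le, Real.rpow_sub_one hN0.ne']
  field_simp

theorem norm_LFunction_le_mellinTail (hN : N ≠ 1) (ha : a ≤ 1) (hχ : χ.IsPrimitive)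
    (hinv : χ⁻¹ = χ) (hpar : χ (-1) = (-1) ^ a) (s : ℂ) :
    ‖χ.LFunction s‖ ≤ 2 * ‖Gammaℝ (s + a)‖⁻¹ * (N : ℝ) ^ max 0 (1 / 2 - s.re) *
      mellinTail a (fun n ↦ χ n) ((max s.re (1 - s.re) + a) / 2) N := by
  have hN0 : 0 < (N : ℝ) := Nat.cast_pos.mpr (NeZero.pos N)
  set κ := (max s.re (1 - s.re) + a) / 2 with hκ
  set J := mellinTail a (fun n ↦ χ n) κ N
  have hre : ((s + a) / 2).re = (s.re + a) / 2 := by simp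
  have hmax : max ((s.re + a) / 2) (a + 1 / 2 - (s.re + a) / 2) = κ := by
    rw [hκ, ← max_add_add_right, ← max_div_div_right (zero_le_two (α := ℝ))]
    ring_nf
  have hconductor : -((s.re + a) / 2) + κ = max 0 (1 / 2 - s.re) := by
    rw [hκ, ← max_add_add_right, ← max_div_div_right (zero_le_two (α := ℝ)), ← max_add_add_left]
    ring_nf
  have hmellin : ‖mellin (charTheta a χ) ((s + a) / 2)‖ ≤ 2 * ((N : ℝ) ^ κ * J) := by
    rw [← integral_Ioi_one_charTheta, ← hmax, ← hre]
    refine (norm_mellin_le _ _).trans (integral_rpow_mul_le_of_reflection (fun y ↦ norm_nonneg _)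
      (fun y hy ↦ ?_) (integrableOn_rpow_mul_norm_charTheta hN ha hχ hpar))
    rw [← one_div, norm_charTheta_one_div hN ha hχ hpar (one_pos.trans hy), hinv]
  rw [χ.LFunction_eq_completed_div_gammaFactor s (.inr hN), gammaFactor_eq_of_parity ha hpar,
    completedLFunction_eq_mellin hN ha hχ hpar, norm_div, norm_mul, div_eq_inv_mul,
    norm_natCast_cpow_of_pos (NeZero.pos N), neg_re, hre]
  calc ‖Gammaℝ (s + a)‖⁻¹ *
        ((N : ℝ) ^ (-((s.re + a) / 2)) * ‖mellin (charTheta a χ) ((s + a) / 2)‖)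
      ≤ ‖Gammaℝ (s + a)‖⁻¹ * ((N : ℝ) ^ (-((s.re + a) / 2)) * (2 * ((N : ℝ) ^ κ * J))) := by gcongr
    _ = 2 * ‖Gammaℝ (s + a)‖⁻¹ * (N : ℝ) ^ max 0 (1 / 2 - s.re) * J := by
        rw [← hconductor, Real.rpow_add hN0]
        ring

end PrimitiveReal

/-! ### Theta series of even characters -/

lemma sum_gaussWeight_zero_le {y : ℝ} (hy : 0 < y) (M : ℕ) :
    ∑ n ∈ Finset.range M, gaussWeight 0 y (n + 1 : ℕ) ≤ (√y)⁻¹ / 2 := by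
  have hanti : AntitoneOn (gaussWeight 0 y) (Icc 0 (0 + M)) := fun u hu v _ huv ↦ by
    have : u ^ 2 ≤ v ^ 2 := pow_le_pow_left₀ hu.1 huv 2
    simp only [gaussWeight, pow_zero, one_mul]
    refine Real.exp_le_exp.mpr ?_
    nlinarith [mul_pos Real.pi_pos hy]
  have hgauss : gaussWeight 0 y = fun x ↦ Real.exp (-(π * y) * x ^ 2) := by
    ext x
    simp only [gaussWeight, pow_zero, one_mul]
    ring_nf
  calc ∑ n ∈ Finset.range M, gaussWeight 0 y (n + 1 : ℕ)
      ≤ ∫ x in (0 : ℝ)..0 + M, gaussWeight 0 y x := by simpa using hanti.sum_le_integral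
    _ ≤ ∫ x in Ioi 0, gaussWeight 0 y x := by
        rw [intervalIntegral.integral_of_le (by positivity), hgauss]
        exact setIntegral_mono_set (integrable_exp_neg_mul_sq (by positivity)).integrableOn
          (.of_forall fun x ↦ (Real.exp_pos _).le) Ioc_subset_Ioi_self.eventuallyLE
    _ = (√y)⁻¹ / 2 := by
        rw [hgauss, integral_gaussian_Ioi, ← Real.sqrt_inv, div_mul_cancel_left₀ Real.pi_ne_zero]

lemma norm_gaussTheta_zero_le {f : ℕ → ℂ} (hf : ∀ n, ‖f n‖ ≤ 1) (hf0 : f 0 = 0) {y : ℝ}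
    (hy : 0 < y) : ‖gaussTheta 0 f y‖ ≤ (√y)⁻¹ / 2 := by
  rw [gaussTheta, (summable_gaussTheta 0 hf hy).tsum_eq_zero_add, hf0, zero_mul, zero_add]
  refine (norm_tsum_le_tsum_norm ((summable_gaussTheta 0 hf hy).norm.comp_injective
    Nat.succ_injective)).trans (Real.tsum_le_of_sum_range_le (fun n ↦ norm_nonneg _) fun M ↦ ?_)
  exact (Finset.sum_le_sum fun n _ ↦ norm_gaussTheta_term_le 0 hf y (n + 1)).trans
    (sum_gaussWeight_zero_le hy M)

lemma norm_gaussTheta_primitive_le {N : ℕ} [NeZero N] (hN : N ≠ 1) {χ : DirichletCharacter ℂ N}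
    (hχ : χ.IsPrimitive) (heven : χ.Even) {y : ℝ} (hy : 0 < y) :
    ‖gaussTheta 0 (fun n ↦ χ n) y‖ ≤ √N / 2 := by
  have hN0 : 0 < (N : ℝ) := Nat.cast_pos.mpr (NeZero.pos N)
  have hχ0 : χ⁻¹ ((0 : ℕ) : ZMod N) = 0 := by simpa using χ⁻¹.map_zero' hN
  have hfe := norm_charTheta_one_div hN zero_le_one hχ (heven.trans (pow_zero _).symm)
    (show 0 < 1 / (N * y) by positivity)
  have hscale : 1 / (1 / (N * y)) / N = y := by field_simp
  have hdual : 1 / (N * y) / N = (N ^ 2 * y)⁻¹ := by field_simp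
  rw [charTheta, charTheta, hscale, hdual, Nat.cast_zero, zero_add, ← Real.sqrt_eq_rpow] at hfe
  calc ‖gaussTheta 0 (fun n ↦ χ n) y‖
      = √(1 / (N * y)) * ‖gaussTheta 0 (fun n ↦ χ⁻¹ n) (N ^ 2 * y)⁻¹‖ := hfe
    _ ≤ √(1 / (N * y)) * ((√(N ^ 2 * y)⁻¹)⁻¹ / 2) := by
        gcongr
        exact norm_gaussTheta_zero_le (fun n ↦ χ⁻¹.norm_le_one n) hχ0 (by positivity)
    _ = √N / 2 := by
        rw [Real.sqrt_inv, inv_inv, mul_div_assoc', ← Real.sqrt_mul (by positivity)]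
        congr 2
        field_simp

lemma sum_moebius_divisors_filter_dvd (m : ℕ) {N : ℕ} (hN : N ≠ 0) :
    ∑ d ∈ N.divisors with d ∣ m, ArithmeticFunction.moebius d = if m.Coprime N then 1 else 0 := by
  have hfilter : N.divisors.filter (· ∣ m) = (m.gcd N).divisors := by
    ext d
    simp [Nat.dvd_gcd_iff, hN, and_comm]
  rw [hfilter, ← ArithmeticFunction.coe_mul_zeta_apply, ArithmeticFunction.moebius_mul_coe_zeta,
    ArithmeticFunction.one_apply]

lemma tsum_ite_dvd {E : Type*} [AddCommMonoid E] [TopologicalSpace E] {d : ℕ} (hd : d ≠ 0)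
    (g : ℕ → E) : ∑' m : ℕ, (if d ∣ m then g m else 0) = ∑' l : ℕ, g (d * l) := by
  rw [← (mul_right_injective₀ hd).tsum_eq]
  · simp only [dvd_mul_right, if_true]
  · intro m hm
    obtain ⟨l, rfl⟩ : d ∣ m := by_contra fun h ↦ hm (if_neg h)
    exact ⟨l, rfl⟩

section Imprimitive

variable {N : ℕ} [NeZero N] (χ : DirichletCharacter ℂ N)

lemma apply_eq_sum_moebius_mul_primitiveCharacter (m : ℕ) :
    χ m = ∑ d ∈ N.divisors, if d ∣ m then
      (ArithmeticFunction.moebius d : ℂ) * χ.primitiveCharacter m else 0 := by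
  rw [← Finset.sum_filter, ← Finset.sum_mul, ← Int.cast_sum,
    sum_moebius_divisors_filter_dvd m (NeZero.ne N)]
  split_ifs with h
  · have hcop : IsCoprime (m : ℤ) N := Nat.isCoprime_iff_coprime.mpr h
    simpa using (χ.primitiveCharacter_apply_of_isCoprime hcop).symm
  · rw [Int.cast_zero, zero_mul]
    exact χ.map_nonunit (by rwa [ZMod.isUnit_iff_coprime])

lemma gaussTheta_eq_sum_moebius_primitiveCharacter {y : ℝ} (hy : 0 < y) :
    gaussTheta 0 (fun n ↦ χ n) y = ∑ d ∈ N.divisors, (ArithmeticFunction.moebius d : ℂ) *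
      χ.primitiveCharacter d * gaussTheta 0 (fun n ↦ χ.primitiveCharacter n) (d ^ 2 * y) := by
  set φ := χ.primitiveCharacter
  have hsum (d : ℕ) : Summable fun m : ℕ ↦
      if d ∣ m then (ArithmeticFunction.moebius d : ℂ) * (φ m * gaussWeight 0 y m) else 0 := by
    refine .of_norm_bounded ((summable_gaussTheta 0 (fun n ↦ φ.norm_le_one n) hy).mul_left
      (ArithmeticFunction.moebius d : ℂ)).norm fun m ↦ ?_
    split_ifs
    · rfl
    · rw [norm_zero]; positivity
  calc gaussTheta 0 (fun n ↦ χ n) y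
      = ∑' m : ℕ, ∑ d ∈ N.divisors,
          if d ∣ m then (ArithmeticFunction.moebius d : ℂ) * (φ m * gaussWeight 0 y m) else 0 := by
        refine tsum_congr fun m ↦ ?_
        simp only [apply_eq_sum_moebius_mul_primitiveCharacter χ m, Finset.sum_mul, ite_mul,
          zero_mul, mul_assoc, φ]
    _ = ∑ d ∈ N.divisors, ∑' m : ℕ,
          if d ∣ m then (ArithmeticFunction.moebius d : ℂ) * (φ m * gaussWeight 0 y m) else 0 :=
        Summable.tsum_finsetSum fun d _ ↦ hsum d
    _ = _ := by
        refine Finset.sum_congr rfl fun d hd ↦ ?_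
        rw [tsum_ite_dvd (Nat.pos_of_mem_divisors hd).ne', gaussTheta, ← tsum_mul_left]
        refine tsum_congr fun l ↦ ?_
        rw [Nat.cast_mul, map_mul, Nat.cast_mul, gaussWeight_zero_mul]
        ring

variable {χ}

theorem norm_gaussTheta_even_le (hχ : χ ≠ 1) (heven : χ.Even) {y : ℝ} (hy : 0 < y) :
    ‖gaussTheta 0 (fun n ↦ χ n) y‖ ≤ N.divisors.card * (√N / 2) := by
  have : NeZero χ.conductor := ⟨χ.conductor_ne_zero⟩
  have hcond : χ.conductor ≠ 1 := fun h ↦ hχ (χ.eq_one_iff_conductor_eq_one.mpr h)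
  have hlevel : χ.conductor ≤ N := Nat.le_of_dvd (NeZero.pos N) χ.conductor_dvd_level
  set φ := χ.primitiveCharacter
  have hφeven : φ (-1) = 1 := by
    have h := χ.primitiveCharacter_apply_of_isCoprime (a := -1) isCoprime_one_left.neg_left
    rw [Int.cast_neg, Int.cast_one, Int.cast_neg, Int.cast_one] at h
    exact h.trans heven
  rw [gaussTheta_eq_sum_moebius_primitiveCharacter χ hy, ← nsmul_eq_mul]
  refine (norm_sum_le _ _).trans (Finset.sum_le_card_nsmul _ _ _ fun d hd ↦ ?_)
  have hd0 : 0 < (d : ℝ) := Nat.cast_pos.mpr (Nat.pos_of_mem_divisors hd)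
  have hmoebius : ‖(ArithmeticFunction.moebius d : ℂ)‖ ≤ 1 := by
    rw [Complex.norm_intCast]
    exact_mod_cast ArithmeticFunction.abs_moebius_le_one
  calc ‖(ArithmeticFunction.moebius d : ℂ) * φ d * gaussTheta 0 (fun n ↦ φ n) (d ^ 2 * y)‖
      ≤ 1 * 1 * (√χ.conductor / 2) := by
        rw [norm_mul, norm_mul]
        gcongr
        · exact φ.norm_le_one d
        · exact norm_gaussTheta_primitive_le hcond χ.primitiveCharacter_isPrimitive hφeven
            (by positivity)
    _ ≤ √N / 2 := by
        rw [one_mul, one_mul]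
        gcongr

end Imprimitive

/-! ### The Jacobi symbol as a character of its denominator -/

/-- The symbol `(k/m)` as a function of its lower argument, extended by zero to even `m`; it is
periodic modulo `4 * k`. -/
def oddJacobi (k m : ℕ) : ℤ := if Odd m then J(k | m) else 0

lemma oddJacobi_of_odd (k : ℕ) {m : ℕ} (hm : Odd m) : oddJacobi k m = J(k | m) := if_pos hm

lemma oddJacobi_of_not_odd (k : ℕ) {m : ℕ} (hm : ¬Odd m) : oddJacobi k m = 0 := if_neg hm

lemma oddJacobi_mod (k m : ℕ) : oddJacobi k (m % (4 * k)) = oddJacobi k m := by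
  have hparity : Odd (m % (4 * k)) ↔ Odd m := by
    rw [Nat.odd_iff, Nat.odd_iff, Nat.mod_mod_of_dvd m ⟨2 * k, by ring⟩]
  by_cases hm : Odd m
  · rw [oddJacobi_of_odd k hm, oddJacobi_of_odd k (hparity.mpr hm), ← jacobiSym.mod_right' k hm]
  · rw [oddJacobi_of_not_odd k hm, oddJacobi_of_not_odd k (hparity.not.mpr hm)]

lemma oddJacobi_mul_right (k m n : ℕ) : oddJacobi k (m * n) = oddJacobi k m * oddJacobi k n := by
  by_cases hmn : Odd (m * n)
  · obtain ⟨hm, hn⟩ := Nat.odd_mul.mp hmn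
    rw [oddJacobi_of_odd k hmn, oddJacobi_of_odd k hm, oddJacobi_of_odd k hn,
      jacobiSym.mul_right' _ hm.pos.ne' hn.pos.ne']
  · rw [oddJacobi_of_not_odd k hmn, zero_eq_mul]
    rw [Nat.odd_mul, not_and_or] at hmn
    exact hmn.imp (oddJacobi_of_not_odd k) (oddJacobi_of_not_odd k)

lemma oddJacobi_eq_zero {k m : ℕ} (h : ¬m.Coprime (4 * k)) : oddJacobi k m = 0 := by
  by_cases hm : Odd m
  · have : NeZero m := ⟨hm.pos.ne'⟩
    rw [oddJacobi_of_odd k hm, jacobiSym.eq_zero_iff_not_coprime, Int.gcd_natCast_natCast]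
    exact fun hkm ↦ h (.mul_right (.pow_right 2 hm.coprime_two_right) (.symm hkm))
  · exact oddJacobi_of_not_odd k hm

/-- The character `m ↦ (k/m)` modulo `4 * k`. -/
def oddJacobiChar (k : ℕ) [NeZero (4 * k)] : DirichletCharacter ℂ (4 * k) where
  toFun x := oddJacobi k x.val
  map_one' := by
    rw [ZMod.val_one_eq_one_mod, oddJacobi_mod, oddJacobi_of_odd k odd_one, jacobiSym.one_right,
      Int.cast_one]
  map_mul' x y := by
    rw [ZMod.val_mul, oddJacobi_mod, oddJacobi_mul_right, Int.cast_mul]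
  map_nonunit' x hx := by
    rw [oddJacobi_eq_zero, Int.cast_zero]
    rwa [← ZMod.isUnit_iff_coprime, ZMod.natCast_zmod_val]

section OddJacobiChar

variable (k : ℕ) [NeZero (4 * k)]

lemma oddJacobiChar_apply (m : ℕ) : oddJacobiChar k m = oddJacobi k m := by
  change ((oddJacobi k (m : ZMod (4 * k)).val : ℤ) : ℂ) = _
  rw [ZMod.val_natCast, oddJacobi_mod]

lemma oddJacobiChar_even : (oddJacobiChar k).Even := by
  have hk : 0 < 4 * k := NeZero.pos _
  have hodd : Odd (4 * k - 1) := by rw [Nat.odd_iff]; omega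
  have hcast : ((4 * k - 1 : ℕ) : ZMod (4 * k)) = -1 := by
    rw [Nat.cast_sub hk, ZMod.natCast_self, Nat.cast_one, zero_sub]
  have hfour : J((4 * k : ℤ) | 4 * k - 1) = J(1 | 4 * k - 1) := by
    apply jacobiSym.mod_left'
    rw [Int.emod_eq_emod_iff_emod_sub_eq_zero, Nat.cast_sub hk]
    simp
  rw [jacobiSym.mul_left, jacobiSym.at_four hodd, jacobiSym.one_left, one_mul] at hfour
  rw [DirichletCharacter.Even, ← hcast, oddJacobiChar_apply, oddJacobi_of_odd k hodd, hfour,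
    Int.cast_one]

end OddJacobiChar

lemma exists_prime_odd_pow_mul_of_not_isSquare {k : ℕ} (hk : k ≠ 0) (hsq : ¬IsSquare k) :
    ∃ p e q : ℕ, p.Prime ∧ Odd e ∧ ¬p ∣ q ∧ k = p ^ e * q := by
  obtain ⟨p, hp, hodd⟩ : ∃ p, p.Prime ∧ Odd (k.factorization p) := by
    by_contra! h
    rw [← Nat.prod_factorization_pow_eq_self hk, Finsupp.prod] at hsq
    refine hsq (Finset.isSquare_prod _ fun p hp ↦ ?_)
    exact (Nat.not_odd_iff_even.mp (h p (Nat.prime_of_mem_primeFactors hp))).isSquare_pow _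
  refine ⟨p, k.factorization p, k / p ^ k.factorization p, hp, hodd,
    Nat.not_dvd_ordCompl hp hk, (Nat.ordProj_mul_ordCompl_eq_self k p).symm⟩

lemma exists_jacobiSym_eq_neg_one {p : ℕ} (hp : p.Prime) (hp2 : p ≠ 2) :
    ∃ u : ℕ, J(u | p) = -1 := by
  have : Fact p.Prime := ⟨hp⟩
  obtain ⟨a, ha⟩ := FiniteField.exists_nonsquare (F := ZMod p) (by rwa [ZMod.ringChar_zmod_n])
  refine ⟨a.val, ?_⟩
  rw [← jacobiSym.legendreSym.to_jacobiSym, legendreSym.eq_neg_one_iff]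
  simpa using ha

lemma exists_jacobiSym_two_eq_neg_one {q : ℕ} (hq : Odd q) :
    ∃ m : ℕ, Odd m ∧ J(2 | m) = -1 ∧ J(q | m) = 1 := by
  obtain ⟨m, hm8, hmq⟩ := Nat.chineseRemainder (hq.coprime_two_left.pow_left 3) 5 1
  have hm8 : m % 8 = 5 := hm8
  have hm : Odd m := by rw [Nat.odd_iff]; omega
  refine ⟨m, hm, ?_, ?_⟩
  · rw [jacobiSym.at_two hm, ZMod.χ₈_nat_mod_eight, hm8]
    rfl
  · rw [jacobiSym.quadratic_reciprocity_one_mod_four' hq (by omega),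
      jacobiSym.mod_left' (a₂ := 1) (mod_cast hmq), jacobiSym.one_left]

lemma exists_jacobiSym_odd_prime_eq_neg_one {p q : ℕ} (hp : p.Prime) (hp2 : p ≠ 2)
    (hpq : ¬p ∣ q) : ∃ m : ℕ, Odd m ∧ J(p | m) = -1 ∧ J(q | m) = 1 := by
  obtain ⟨u, hu⟩ := exists_jacobiSym_eq_neg_one hp hp2
  have hcop : p.Coprime (4 * q) := .mul_right
    (.pow_right 2 ((Nat.coprime_primes hp Nat.prime_two).mpr hp2))
    ((Nat.Prime.coprime_iff_not_dvd hp).mpr hpq)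
  obtain ⟨m, hmp, hmq⟩ := Nat.chineseRemainder hcop u 1
  have hm4 : m % 4 = 1 := hmq.of_dvd (dvd_mul_right 4 q)
  have hm : Odd m := by rw [Nat.odd_iff]; omega
  refine ⟨m, hm, ?_, ?_⟩
  · rw [jacobiSym.quadratic_reciprocity_one_mod_four' (hp.odd_of_ne_two hp2) hm4, ← hu]
    exact jacobiSym.mod_left' (mod_cast hmp)
  · rw [jacobiSym.mod_right' q hm, hmq, ← jacobiSym.mod_right' q odd_one, jacobiSym.one_right]

lemma exists_oddJacobi_eq_neg_one {k : ℕ} (hk : k ≠ 0) (hsq : ¬IsSquare k) :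
    ∃ m : ℕ, oddJacobi k m = -1 := by
  obtain ⟨p, e, q, hp, he, hpq, rfl⟩ := exists_prime_odd_pow_mul_of_not_isSquare hk hsq
  obtain ⟨m, hm, hpm, hqm⟩ : ∃ m : ℕ, Odd m ∧ J(p | m) = -1 ∧ J(q | m) = 1 := by
    rcases eq_or_ne p 2 with rfl | hp2
    · exact exists_jacobiSym_two_eq_neg_one (Nat.not_even_iff_odd.mp (mt Even.two_dvd hpq))
    · exact exists_jacobiSym_odd_prime_eq_neg_one hp hp2 hpq
  refine ⟨m, ?_⟩
  rw [oddJacobi_of_odd _ hm, Nat.cast_mul, Nat.cast_pow, jacobiSym.mul_left, jacobiSym.pow_left,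
    hpm, hqm, he.neg_one_pow, mul_one]

lemma oddJacobiChar_ne_one {k : ℕ} [NeZero (4 * k)] (hsq : ¬IsSquare k) : oddJacobiChar k ≠ 1 := by
  have hk : k ≠ 0 := right_ne_zero_of_mul (NeZero.ne (4 * k))
  obtain ⟨m, hm⟩ := exists_oddJacobi_eq_neg_one hk hsq
  intro h
  have hval := oddJacobiChar_apply k m
  rw [h, hm] at hval
  by_cases hu : IsUnit (m : ZMod (4 * k))
  · rw [MulChar.one_apply hu] at hval
    norm_num at hval
  · rw [MulChar.map_nonunit _ hu] at hval
    norm_num at hval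

theorem norm_gaussTheta_oddJacobi_le {k : ℕ} (hk : k ≠ 0) (hsq : ¬IsSquare k) {y : ℝ}
    (hy : 0 < y) :
    ‖gaussTheta 0 (fun m ↦ oddJacobi k m) y‖ ≤ (4 * k).divisors.card * √k := by
  have : NeZero (4 * k) := ⟨by omega⟩
  have hfour : √((4 * k : ℕ) : ℝ) / 2 = √k := by
    rw [Nat.cast_mul, Real.sqrt_mul (by positivity), Nat.cast_ofNat,
      show (4 : ℝ) = 2 ^ 2 by norm_num, Real.sqrt_sq zero_le_two,
      mul_div_cancel_left₀ _ two_ne_zero]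
  simpa only [oddJacobiChar_apply, hfour] using
    norm_gaussTheta_even_le (oddJacobiChar_ne_one hsq) (oddJacobiChar_even k) hy

/-! ### A large sieve for Jacobi symbols -/

lemma card_divisors_mul_le (m n : ℕ) :
    (m * n).divisors.card ≤ m.divisors.card * n.divisors.card := by
  rw [Nat.divisors_mul]
  exact Finset.card_mul_le

lemma summable_card_divisors_mul_rpow {s : ℝ} (hs : 1 < s) :
    Summable fun n : ℕ ↦ (n.divisors.card : ℝ) * (n : ℝ) ^ (-s) := by
  have hone : LSeriesSummable 1 (s : ℂ) := LSeriesSummable_one_iff.mpr (by simpa using hs)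
  refine (hone.convolution hone).norm.congr fun n ↦ ?_
  rcases eq_or_ne n 0 with rfl | hn
  · simp
  · rw [LSeries.norm_term_eq, if_neg hn, LSeries.convolution_def, ofReal_re, Real.rpow_neg
      n.cast_nonneg, ← div_eq_mul_inv]
    simp [← Nat.map_div_right_divisors]

lemma exists_eq_mul_sq_of_isSquare_mul {m n : ℕ} (h : IsSquare (m * n)) :
    ∃ g u v : ℕ, m = g * u ^ 2 ∧ n = g * v ^ 2 := by
  rcases m.eq_zero_or_pos with rfl | hm
  · exact ⟨n, 0, 1, by simp, by simp⟩
  obtain ⟨g, m', n', hg, hcop, rfl, rfl⟩ :=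
    Nat.exists_coprime' (m := m) (n := n) (Nat.gcd_pos_of_pos_left _ hm)
  obtain ⟨t, ht⟩ : ∃ t, m' * n' = t ^ 2 := by
    obtain ⟨r, hr⟩ := h
    have hr : g ^ 2 * (m' * n') = r ^ 2 := by linear_combination hr
    obtain ⟨t, rfl⟩ : g ∣ r := (Nat.pow_dvd_pow_iff two_ne_zero).mp ⟨_, hr.symm⟩
    exact ⟨t, mul_left_cancel₀ (pow_ne_zero 2 hg.ne') (by rw [hr, mul_pow])⟩
  obtain ⟨u, rfl⟩ := exists_eq_pow_of_mul_eq_pow (Nat.isUnit_iff.mpr hcop) ht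
  obtain ⟨v, rfl⟩ := exists_eq_pow_of_mul_eq_pow (Nat.isUnit_iff.mpr hcop.symm)
    (ht ▸ mul_comm n' (u ^ 2))
  exact ⟨g, u, v, mul_comm _ _, mul_comm _ _⟩

lemma summable_rpow_of_isSquare_mul {s : ℝ} (hs : 1 / 2 < s) :
    Summable fun p : {p : ℕ × ℕ | IsSquare (p.1 * p.2)} ↦
      ((p.1.1 * p.1.2 : ℕ) : ℝ) ^ (-s) := by
  have hZ : Summable fun n : ℕ ↦ (n : ℝ) ^ (-(2 * s)) :=
    Real.summable_nat_rpow.mpr (by linarith)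
  have hnn (n : ℕ) : 0 ≤ (n : ℝ) ^ (-(2 * s)) := by positivity
  have htriple := hZ.mul_of_nonneg (hZ.mul_of_nonneg hZ hnn hnn) hnn
    fun q ↦ mul_nonneg (hnn q.1) (hnn q.2)
  choose g u v hm hn using
    fun p : {p : ℕ × ℕ | IsSquare (p.1 * p.2)} ↦ exists_eq_mul_sq_of_isSquare_mul p.2
  have hinj : Function.Injective fun p ↦ (g p, u p, v p) := fun p q hpq ↦ by
    simp only [Prod.mk.injEq] at hpq
    exact Subtype.ext (Prod.ext (by rw [hm p, hm q, hpq.1, hpq.2.1])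
      (by rw [hn p, hn q, hpq.1, hpq.2.2]))
  refine (htriple.comp_injective hinj).congr fun p ↦ ?_
  have hprod : p.1.1 * p.1.2 = (g p * (u p * v p)) ^ 2 := by
    rw [hm p, hn p]
    ring
  simp only [Function.comp_apply]
  rw [hprod, Nat.cast_pow, ← Real.rpow_natCast_mul (by positivity), Nat.cast_ofNat, mul_neg,
    Nat.cast_mul, Nat.cast_mul, Real.mul_rpow (by positivity) (by positivity),
    Real.mul_rpow (by positivity) (by positivity)]

lemma norm_oddJacobi_le (k m : ℕ) : ‖(oddJacobi k m : ℂ)‖ ≤ 1 := by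
  by_cases hm : Odd m
  · rw [oddJacobi_of_odd k hm]
    rcases jacobiSym.trichotomy k m with h | h | h <;> simp [h]
  · simp [oddJacobi_of_not_odd k hm]

lemma oddJacobi_mul_left (k l m : ℕ) : oddJacobi (k * l) m = oddJacobi k m * oddJacobi l m := by
  by_cases hm : Odd m
  · simp only [oddJacobi_of_odd _ hm, Nat.cast_mul, jacobiSym.mul_left]
  · simp only [oddJacobi_of_not_odd _ hm, mul_zero]

lemma sum_sq_mul_gaussWeight_le (S T : Finset ℕ) (c : ℕ → ℝ) {v : ℝ} (hv : 0 < v) :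
    ∑ m ∈ T, (∑ n ∈ S, c n * oddJacobi n m) ^ 2 * gaussWeight 0 v m ≤
      ∑ p ∈ S ×ˢ S, |c p.1| * |c p.2| *
        ‖gaussTheta 0 (fun m ↦ oddJacobi (p.1 * p.2) m) v‖ := by
  set F : ℕ → ℝ := fun m ↦ (∑ n ∈ S, c n * oddJacobi n m) ^ 2 * gaussWeight 0 v m
  have hF0 (m : ℕ) : 0 ≤ F m := mul_nonneg (sq_nonneg _) (gaussWeight_nonneg 0 v m)
  have hsum (p : ℕ × ℕ) : HasSum
      (fun m : ℕ ↦ (c p.1 * c p.2 : ℂ) * (oddJacobi (p.1 * p.2) m * gaussWeight 0 v m))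
      ((c p.1 * c p.2 : ℂ) * gaussTheta 0 (fun m ↦ oddJacobi (p.1 * p.2) m) v) :=
    (summable_gaussTheta 0 (norm_oddJacobi_le _) hv).hasSum.mul_left _
  have hexpand (m : ℕ) : (F m : ℂ) = ∑ p ∈ S ×ˢ S,
      (c p.1 * c p.2 : ℂ) * (oddJacobi (p.1 * p.2) m * gaussWeight 0 v m) := by
    simp only [F]
    rw [sq (∑ n ∈ S, _), Finset.sum_mul_sum, ← Finset.sum_product', Finset.sum_mul]
    push_cast
    refine Finset.sum_congr rfl fun p _ ↦ ?_
    rw [oddJacobi_mul_left, Int.cast_mul]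
    ring
  have hFsum : HasSum (fun m ↦ (F m : ℂ)) (∑ p ∈ S ×ˢ S,
      (c p.1 * c p.2 : ℂ) * gaussTheta 0 (fun m ↦ oddJacobi (p.1 * p.2) m) v) := by
    simp only [hexpand]
    exact hasSum_sum fun p _ ↦ hsum p
  calc ∑ m ∈ T, F m ≤ ∑' m, F m :=
        (Complex.summable_ofReal.mp hFsum.summable).sum_le_tsum T fun m _ ↦ hF0 m
    _ = ‖∑ p ∈ S ×ˢ S,
          (c p.1 * c p.2 : ℂ) * gaussTheta 0 (fun m ↦ oddJacobi (p.1 * p.2) m) v‖ := by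
        rw [← hFsum.tsum_eq, ← Complex.ofReal_tsum, norm_real,
          Real.norm_of_nonneg (tsum_nonneg hF0)]
    _ ≤ _ := (norm_sum_le _ _).trans_eq (by simp)

lemma norm_gaussTheta_oddJacobi_mul_le {m n : ℕ} (hm : m ≠ 0) (hn : n ≠ 0)
    (hsq : ¬IsSquare (m * n)) {v : ℝ} (hv : 0 < v) :
    ‖gaussTheta 0 (fun l ↦ oddJacobi (m * n) l) v‖ ≤
      3 * ((m.divisors.card * √m) * (n.divisors.card * √n)) := by
  have hcard : (4 * (m * n)).divisors.card ≤ 3 * (m.divisors.card * n.divisors.card) :=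
    (card_divisors_mul_le 4 (m * n)).trans (Nat.mul_le_mul_left 3 (card_divisors_mul_le m n))
  calc ‖gaussTheta 0 (fun l ↦ oddJacobi (m * n) l) v‖
      ≤ (4 * (m * n)).divisors.card * √(m * n : ℕ) :=
        norm_gaussTheta_oddJacobi_le (mul_ne_zero hm hn) hsq hv
    _ ≤ (3 * (m.divisors.card * n.divisors.card) : ℕ) * √(m * n : ℕ) := by gcongr
    _ = 3 * ((m.divisors.card * √m) * (n.divisors.card * √n)) := by
        push_cast
        rw [Real.sqrt_mul m.cast_nonneg]
        ring

lemma one_le_exp_pi_mul_gaussWeight {X : ℝ} (hX : 0 < X) {m : ℕ} (hm : m ≤ X) :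
    1 ≤ Real.exp π * gaussWeight 0 (X ^ 2)⁻¹ m := by
  have hratio : (m : ℝ) ^ 2 * (X ^ 2)⁻¹ ≤ 1 := by
    rw [← div_eq_mul_inv]
    exact div_le_one_of_le₀ (by gcongr) (by positivity)
  rw [gaussWeight, pow_zero, one_mul, ← Real.exp_add]
  exact Real.one_le_exp (by nlinarith [Real.pi_pos])

/-- Smoothing `m ≤ X` by a Gaussian and expanding the square, the pairs with `n₁ * n₂` a square
contribute `X` each; for the others the theta series of the nontrivial even character
`(n₁ * n₂ / ·)` is bounded independently of `X`. -/
theorem sum_sq_sum_oddJacobi_le {S : Finset ℕ} (hS : 0 ∉ S) (c : ℕ → ℝ) {X : ℝ} (hX : 0 < X) :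
    ∑ m ∈ Finset.Icc 1 ⌊X⌋₊, (∑ n ∈ S, c n * oddJacobi n m) ^ 2 ≤
      Real.exp π * (X * ∑ p ∈ S ×ˢ S with IsSquare (p.1 * p.2), |c p.1| * |c p.2| +
        3 * (∑ n ∈ S, n.divisors.card * √n * |c n|) ^ 2) := by
  have hv : 0 < (X ^ 2)⁻¹ := by positivity
  have hdiagonal (k : ℕ) : ‖gaussTheta 0 (fun m ↦ oddJacobi k m) (X ^ 2)⁻¹‖ ≤ X := by
    refine (norm_gaussTheta_zero_le (norm_oddJacobi_le k) ?_ hv).trans ?_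
    · simp [oddJacobi]
    · rw [Real.sqrt_inv, inv_inv, Real.sqrt_sq hX.le]
      linarith
  have hne {n : ℕ} (hn : n ∈ S) : n ≠ 0 := fun h ↦ hS (h ▸ hn)
  calc ∑ m ∈ Finset.Icc 1 ⌊X⌋₊, (∑ n ∈ S, c n * oddJacobi n m) ^ 2
      ≤ ∑ m ∈ Finset.Icc 1 ⌊X⌋₊,
          Real.exp π * ((∑ n ∈ S, c n * oddJacobi n m) ^ 2 * gaussWeight 0 (X ^ 2)⁻¹ m) := by
        refine Finset.sum_le_sum fun m hm ↦ ?_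
        rw [mul_left_comm]
        exact le_mul_of_one_le_right (sq_nonneg _) (one_le_exp_pi_mul_gaussWeight hX
          ((Nat.le_floor_iff hX.le).mp (Finset.mem_Icc.mp hm).2))
    _ ≤ Real.exp π * ∑ p ∈ S ×ˢ S, |c p.1| * |c p.2| *
          ‖gaussTheta 0 (fun m ↦ oddJacobi (p.1 * p.2) m) (X ^ 2)⁻¹‖ := by
        rw [← Finset.mul_sum]
        gcongr
        exact sum_sq_mul_gaussWeight_le S _ c hv
    _ ≤ _ := by
        rw [← Finset.sum_filter_add_sum_filter_not _ fun p : ℕ × ℕ ↦ IsSquare (p.1 * p.2)]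
        gcongr ?_ * (?_ + ?_)
        · rw [mul_comm X, Finset.sum_mul]
          gcongr
          exact hdiagonal _
        · rw [sq (∑ n ∈ S, _), Finset.sum_mul_sum, ← Finset.sum_product', Finset.mul_sum]
          refine (Finset.sum_le_sum fun p hp ↦ ?_).trans (Finset.sum_le_sum_of_subset_of_nonneg
            (Finset.filter_subset _ _) fun p _ _ ↦ by positivity)
          simp only [Finset.mem_filter, Finset.mem_product] at hp
          calc |c p.1| * |c p.2| * ‖gaussTheta 0 (fun m ↦ oddJacobi (p.1 * p.2) m) (X ^ 2)⁻¹‖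
              ≤ |c p.1| * |c p.2| * (3 * ((p.1.divisors.card * √p.1) *
                  (p.2.divisors.card * √p.2))) := by
                gcongr
                exact norm_gaussTheta_oddJacobi_mul_le (hne hp.1.1) (hne hp.1.2) hp.2 hv
            _ = _ := by ring

/-! ### Moments of theta series of Jacobi symbols -/

lemma sum_isSquare_mul_gaussWeight_le {a : ℕ} {κ : ℝ} (hκ : a / 2 + 1 / 4 < κ) :
    ∃ C : ℝ, 0 ≤ C ∧ ∀ y : ℝ, 0 < y → ∀ S : Finset ℕ, 0 ∉ S →
      ∑ p ∈ S ×ˢ S with IsSquare (p.1 * p.2), gaussWeight a y p.1 * gaussWeight a y p.2 ≤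
        C * y ^ (-(2 * κ)) := by
  have hκ0 : 0 < κ := lt_trans (by positivity) hκ
  have hsum := summable_rpow_of_isSquare_mul (s := 2 * κ - a) (by linarith)
  set A := κ ^ κ * π ^ (-κ)
  set K := ∑' p : {p : ℕ × ℕ // IsSquare (p.1 * p.2)}, ((p.1.1 * p.1.2 : ℕ) : ℝ) ^ (-(2 * κ - a))
  have : 0 ≤ K := tsum_nonneg fun _ ↦ by positivity
  refine ⟨A ^ 2 * K, by positivity, fun y hy S hS ↦ ?_⟩
  have hpair (p) (hp : p ∈ S ×ˢ S) : gaussWeight a y p.1 * gaussWeight a y p.2 ≤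
      A ^ 2 * y ^ (-(2 * κ)) * ((p.1 * p.2 : ℕ) : ℝ) ^ (-(2 * κ - a)) := by
    have hpos {n} (hn : n ∈ S) : (0 : ℝ) < n :=
      Nat.cast_pos.mpr (Nat.pos_of_ne_zero (ne_of_mem_of_not_mem hn hS))
    obtain ⟨hp₁, hp₂⟩ := Finset.mem_product.mp hp
    refine (mul_le_mul (gaussWeight_le a hκ0 hy (hpos hp₁)) (gaussWeight_le a hκ0 hy (hpos hp₂))
      (gaussWeight_nonneg ..) (by positivity)).trans_eq ?_
    rw [Nat.cast_mul, Real.mul_rpow (hpos hp₁).le (hpos hp₂).le, neg_sub,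
      show -(2 * κ) = -κ + -κ by ring, Real.rpow_add hy]
    ring
  calc ∑ p ∈ S ×ˢ S with IsSquare (p.1 * p.2), gaussWeight a y p.1 * gaussWeight a y p.2
      ≤ A ^ 2 * y ^ (-(2 * κ)) * ∑ p ∈ S ×ˢ S with IsSquare (p.1 * p.2),
          ((p.1 * p.2 : ℕ) : ℝ) ^ (-(2 * κ - a)) := by
        rw [Finset.mul_sum]
        exact Finset.sum_le_sum fun p hp ↦ hpair p (Finset.mem_filter.mp hp).1
    _ ≤ A ^ 2 * y ^ (-(2 * κ)) * K := by
        rw [← Finset.sum_subtype_eq_sum_filter]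
        gcongr
        exact hsum.sum_le_tsum _ fun _ _ ↦ by positivity
    _ = A ^ 2 * K * y ^ (-(2 * κ)) := by ring

lemma sum_card_divisors_mul_sqrt_mul_gaussWeight_le {a : ℕ} {κ : ℝ} (hκ : a / 2 + 1 / 4 < κ) :
    ∃ C : ℝ, 0 ≤ C ∧ ∀ y : ℝ, 0 < y → ∀ S : Finset ℕ, 0 ∉ S →
      ∑ n ∈ S, n.divisors.card * √n * gaussWeight a y n ≤ C * y ^ (-(κ + 1 / 2)) := by
  have hκ0 : 0 < κ + 1 / 2 := by linarith [show (0 : ℝ) ≤ a / 2 by positivity]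
  have hsum := summable_card_divisors_mul_rpow (s := 2 * κ - a + 1 / 2) (by linarith)
  set A := (κ + 1 / 2) ^ (κ + 1 / 2) * π ^ (-(κ + 1 / 2))
  set K := ∑' n : ℕ, (n.divisors.card : ℝ) * (n : ℝ) ^ (-(2 * κ - a + 1 / 2))
  have : 0 ≤ K := tsum_nonneg fun _ ↦ by positivity
  refine ⟨A * K, by positivity, fun y hy S hS ↦ ?_⟩
  have hterm (n) (hn : n ∈ S) : n.divisors.card * √n * gaussWeight a y n ≤
      A * y ^ (-(κ + 1 / 2)) * (n.divisors.card * (n : ℝ) ^ (-(2 * κ - a + 1 / 2))) := by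
    have hn0 : (0 : ℝ) < n :=
      Nat.cast_pos.mpr (Nat.pos_of_ne_zero (ne_of_mem_of_not_mem hn hS))
    refine (mul_le_mul_of_nonneg_left (gaussWeight_le a hκ0 hy hn0) (by positivity)).trans_eq ?_
    rw [Real.sqrt_eq_rpow,
      show -(2 * κ - a + 1 / 2) = 1 / 2 + (a - 2 * (κ + 1 / 2)) by ring, Real.rpow_add hn0]
    ring
  calc ∑ n ∈ S, n.divisors.card * √n * gaussWeight a y n
      ≤ A * y ^ (-(κ + 1 / 2)) *
          ∑ n ∈ S, n.divisors.card * (n : ℝ) ^ (-(2 * κ - a + 1 / 2)) := by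
        rw [Finset.mul_sum]
        exact Finset.sum_le_sum hterm
    _ ≤ A * y ^ (-(κ + 1 / 2)) * K := by
        gcongr
        exact hsum.sum_le_tsum _ fun _ _ ↦ by positivity
    _ = A * K * y ^ (-(κ + 1 / 2)) := by ring

lemma sum_sq_sum_gaussWeight_mul_oddJacobi_le {a : ℕ} {κ : ℝ} (hκ : a / 2 + 1 / 4 < κ) :
    ∃ C : ℝ, 0 ≤ C ∧ ∀ X y : ℝ, 0 < X → X⁻¹ ≤ y → ∀ S : Finset ℕ, 0 ∉ S →
      ∑ m ∈ Finset.Icc 1 ⌊X⌋₊, (∑ n ∈ S, gaussWeight a y n * oddJacobi n m) ^ 2 ≤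
        C * X * y ^ (-(2 * κ)) := by
  obtain ⟨C₁, hC₁, hdiag⟩ := sum_isSquare_mul_gaussWeight_le hκ
  obtain ⟨C₂, -, hoff⟩ := sum_card_divisors_mul_sqrt_mul_gaussWeight_le hκ
  refine ⟨rexp π * (C₁ + 3 * C₂ ^ 2), by positivity, fun X y hX hy S hS ↦ ?_⟩
  have hy0 : 0 < y := (inv_pos.mpr hX).trans_le hy
  have hpow : (y ^ (-(κ + 1 / 2))) ^ 2 ≤ X * y ^ (-(2 * κ)) := by
    rw [← Real.rpow_mul_natCast hy0.le,
      show -(κ + 1 / 2) * (2 : ℕ) = -1 + -(2 * κ) by push_cast; ring, Real.rpow_add hy0,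
      Real.rpow_neg_one]
    gcongr
    exact inv_le_of_inv_le₀ hX hy
  refine (sum_sq_sum_oddJacobi_le hS (fun n ↦ gaussWeight a y n) hX).trans ?_
  simp only [abs_of_nonneg (gaussWeight_nonneg a y _)]
  calc _ ≤ rexp π * (X * (C₁ * y ^ (-(2 * κ))) + 3 * (C₂ * y ^ (-(κ + 1 / 2))) ^ 2) := by
        gcongr
        · exact hdiag y hy0 S hS
        · exact Finset.sum_nonneg fun n _ ↦ mul_nonneg (by positivity) (gaussWeight_nonneg a y n)
        · exact hoff y hy0 S hS
    _ ≤ rexp π * (X * (C₁ * y ^ (-(2 * κ))) + 3 * (C₂ ^ 2 * (X * y ^ (-(2 * κ))))) := by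
        rw [mul_pow C₂]
        gcongr
    _ = rexp π * (C₁ + 3 * C₂ ^ 2) * X * y ^ (-(2 * κ)) := by ring

lemma oddJacobi_zero_left {m : ℕ} (hm : 1 < m) : oddJacobi 0 m = 0 := by
  by_cases hodd : Odd m
  · rw [oddJacobi_of_odd 0 hodd, Nat.cast_zero, jacobiSym.zero_left hm]
  · exact oddJacobi_of_not_odd 0 hodd

lemma tendsto_abs_sum_gaussWeight_mul_oddJacobi (a : ℕ) {y : ℝ} (hy : 0 < y) {m : ℕ} (hm : 1 < m) :
    Tendsto (fun M ↦ |∑ n ∈ (Finset.range M).erase 0, gaussWeight a y n * oddJacobi n m|) atTop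
      (𝓝 ‖gaussTheta a (fun n ↦ oddJacobi n m) y‖) := by
  have hsum := (summable_gaussTheta a (fun n ↦ norm_oddJacobi_le n m) hy).hasSum
  refine hsum.tendsto_sum_nat.norm.congr fun M ↦ ?_
  rw [← Finset.sum_erase (a := 0) _ (by simp [oddJacobi_zero_left hm]), ← Real.norm_eq_abs,
    ← Complex.norm_real]
  push_cast
  simp only [mul_comm]

lemma sum_norm_gaussTheta_oddJacobi_le {a : ℕ} {κ : ℝ} (hκ : a / 2 + 1 / 4 < κ) :
    ∃ C : ℝ, 0 ≤ C ∧ ∀ X y : ℝ, 0 < X → X⁻¹ ≤ y →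
      ∑ m ∈ Finset.Ioc 1 ⌊X⌋₊, ‖gaussTheta a (fun n ↦ oddJacobi n m) y‖ ≤ C * X * y ^ (-κ) := by
  obtain ⟨C, hC, hsq⟩ := sum_sq_sum_gaussWeight_mul_oddJacobi_le hκ
  refine ⟨√C, by positivity, fun X y hX hy ↦ ?_⟩
  have hy0 : 0 < y := (inv_pos.mpr hX).trans_le hy
  set partialSum := fun M m : ℕ ↦
    ∑ n ∈ (Finset.range M).erase 0, gaussWeight a y n * oddJacobi n m
  have hcauchySchwarz (M) : (∑ m ∈ Finset.Icc 1 ⌊X⌋₊, |partialSum M m|) ^ 2 ≤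
      (√C * X * y ^ (-κ)) ^ 2 := by
    calc (∑ m ∈ Finset.Icc 1 ⌊X⌋₊, |partialSum M m|) ^ 2
        ≤ ⌊X⌋₊ * ∑ m ∈ Finset.Icc 1 ⌊X⌋₊, partialSum M m ^ 2 := by
          simpa [sq_abs] using sq_sum_le_card_mul_sum_sq
            (s := Finset.Icc 1 ⌊X⌋₊) (f := fun m ↦ |partialSum M m|)
      _ ≤ X * (C * X * y ^ (-(2 * κ))) := by
          gcongr
          · exact Nat.floor_le hX.le
          · exact hsq X y hX hy _ (by simp)
      _ = (√C * X * y ^ (-κ)) ^ 2 := by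
          rw [mul_pow, mul_pow, Real.sq_sqrt hC, ← Real.rpow_mul_natCast hy0.le,
            show -κ * (2 : ℕ) = -(2 * κ) by push_cast; ring]
          ring
  refine le_of_tendsto' (tendsto_finsetSum _ fun m hm ↦
    tendsto_abs_sum_gaussWeight_mul_oddJacobi a hy0 (Finset.mem_Ioc.mp hm).1) fun M ↦ ?_
  calc ∑ m ∈ Finset.Ioc 1 ⌊X⌋₊, |partialSum M m|
      ≤ ∑ m ∈ Finset.Icc 1 ⌊X⌋₊, |partialSum M m| :=
        Finset.sum_le_sum_of_subset_of_nonneg Finset.Ioc_subset_Icc_self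
          fun _ _ _ ↦ abs_nonneg _
    _ ≤ √C * X * y ^ (-κ) := le_of_sq_le_sq (hcauchySchwarz M) (by positivity)

lemma sum_mellinTail_oddJacobi_le {a : ℕ} {v η : ℝ} (hv : a / 2 + 1 / 4 ≤ v) (hη : 0 < η) :
    ∃ C : ℝ, 0 ≤ C ∧ ∀ X : ℝ, 0 < X →
      ∑ m ∈ Finset.Ioc 1 ⌊X⌋₊, mellinTail a (fun n ↦ oddJacobi n m) v X ≤ C * X ^ (1 + η) := by
  obtain ⟨C, hC, hmoment⟩ := sum_norm_gaussTheta_oddJacobi_le (a := a) (κ := v + η) (by linarith)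
  refine ⟨C / η, by positivity, fun X hX ↦ ?_⟩
  have hX' : 0 < X⁻¹ := inv_pos.mpr hX
  have hint (m) (hm : m ∈ Finset.Ioc 1 ⌊X⌋₊) : IntegrableOn
      (fun u ↦ u ^ (v - 1) * ‖gaussTheta a (fun n ↦ oddJacobi n m) u‖) (Ioi X⁻¹) :=
    integrableOn_rpow_mul_norm_gaussTheta a (fun n ↦ norm_oddJacobi_le n m)
      (by rw [oddJacobi_zero_left (Finset.mem_Ioc.mp hm).1, Int.cast_zero]) _ hX'
  have hexp : -1 - η < -1 := by linarith
  simp only [mellinTail]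
  rw [← integral_finsetSum _ hint]
  calc ∫ u in Ioi X⁻¹, ∑ m ∈ Finset.Ioc 1 ⌊X⌋₊,
        u ^ (v - 1) * ‖gaussTheta a (fun n ↦ oddJacobi n m) u‖
      ≤ ∫ u in Ioi X⁻¹, C * X * u ^ (-1 - η) := by
        refine setIntegral_mono_on (integrable_finsetSum _ hint)
          ((integrableOn_Ioi_rpow_of_lt hexp hX').const_mul _) measurableSet_Ioi
          fun u (hu : X⁻¹ < u) ↦ ?_
        have hu0 : 0 < u := hX'.trans hu
        rw [← Finset.mul_sum]
        refine (mul_le_mul_of_nonneg_left (hmoment X u hX hu.le) (by positivity)).trans_eq ?_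
        rw [show -1 - η = v - 1 + -(v + η) by ring, Real.rpow_add hu0]
        ring
    _ = C / η * X ^ (1 + η) := by
        rw [integral_const_mul, integral_Ioi_rpow_of_lt hexp hX', Real.inv_rpow hX.le,
          ← Real.rpow_neg hX.le, Real.rpow_add hX, Real.rpow_one]
        ring_nf

/-! ### Jacobi-symbol characters of squarefree modulus -/

lemma exists_modEq_one_jacobiSym_eq_neg_one {p d : ℕ} (hp : p.Prime) (hp2 : p ≠ 2)
    (hpd : p.Coprime d) (hd : d ≠ 0) : ∃ m : ℕ, m ≡ 1 [MOD d] ∧ J(m | p * d) = -1 := by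
  obtain ⟨u, hu⟩ := exists_jacobiSym_eq_neg_one hp hp2
  obtain ⟨m, hmp, hmd⟩ := Nat.chineseRemainder hpd u 1
  refine ⟨m, hmd, ?_⟩
  rw [jacobiSym.mul_right' _ hp.ne_zero hd,
    jacobiSym.mod_left' (a₁ := m) (a₂ := u) (mod_cast hmp), hu,
    jacobiSym.mod_left' (a₁ := m) (a₂ := 1) (mod_cast hmd), jacobiSym.one_left, mul_one]

section JacobiCharacter

variable {N : ℕ} {χ : DirichletCharacter ℂ N}

lemma isPrimitive_of_eq_jacobiSym (hχ : ∀ m : ℕ, χ m = (J(m | N) : ℤ)) (hodd : Odd N)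
    (hsf : Squarefree N) : χ.IsPrimitive := by
  have : NeZero N := ⟨hodd.pos.ne'⟩
  rw [DirichletCharacter.isPrimitive_def]
  by_contra hne
  obtain ⟨e, he⟩ := χ.conductor_dvd_level
  obtain ⟨p, hp, f, rfl⟩ := Nat.exists_prime_and_dvd (n := e) (by rintro rfl; simp_all)
  have hN : N = p * (χ.conductor * f) := he.trans (mul_left_comm _ _ _)
  obtain ⟨hpodd, hdodd⟩ := Nat.odd_mul.mp (hodd.of_dvd_nat hN.symm.dvd)
  have hpd : p.Coprime (χ.conductor * f) :=
    Nat.coprime_of_squarefree_mul (hsf.squarefree_of_dvd hN.symm.dvd)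
  obtain ⟨m, hm, hJ⟩ := exists_modEq_one_jacobiSym_eq_neg_one hp
    (fun h ↦ hpodd.not_two_dvd_nat h.symm.dvd) hpd hdodd.pos.ne'
  rw [← hN] at hJ
  have hχm : χ m = -1 := by rw [hχ, hJ, Int.cast_neg, Int.cast_one]
  have hunit : IsUnit (m : ZMod N) := by
    by_contra h
    simp [χ.map_nonunit h] at hχm
  have hcop : IsCoprime (m : ℤ) N := Nat.isCoprime_iff_coprime.mpr
    ((ZMod.isUnit_iff_coprime m N).mp hunit)
  have hprim := χ.primitiveCharacter_apply_of_isCoprime hcop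
  have hone : (m : ZMod χ.conductor) = 1 := by
    simpa using (ZMod.natCast_eq_natCast_iff m 1 _).mpr (hm.of_dvd ⟨f, rfl⟩)
  rw [Int.cast_natCast, Int.cast_natCast, hone, map_one, hχm] at hprim
  norm_num at hprim

lemma inv_eq_self_of_eq_jacobiSym (hχ : ∀ m : ℕ, χ m = (J(m | N) : ℤ)) [NeZero N] : χ⁻¹ = χ := by
  ext u
  have hu := hχ (u : ZMod N).val
  rw [ZMod.natCast_zmod_val] at hu
  rw [MulChar.inv_apply_eq_inv', hu]
  rcases jacobiSym.trichotomy (u : ZMod N).val N with h | h | h <;> rw [h] <;> norm_num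

lemma exists_parity : ∃ a ∈ Finset.range 2, χ (-1) = (-1) ^ a := by
  rcases χ.even_or_odd with h | h
  · exact ⟨0, by simp, by rw [pow_zero]; exact h⟩
  · exact ⟨1, by simp, by rw [pow_one]; exact h⟩

lemma norm_LFunction_le_sum_mellinTail [NeZero N] (hχ : ∀ m : ℕ, χ m = (J(m | N) : ℤ))
    (hodd : Odd N) (hsf : Squarefree N) (hN : 1 < N) {X : ℝ} (hNX : N ≤ X) (s : ℂ) :
    ‖χ.LFunction s‖ ≤ X ^ max 0 (1 / 2 - s.re) * ∑ a ∈ Finset.range 2, 2 * ‖Gammaℝ (s + a)‖⁻¹ *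
      mellinTail a (fun n ↦ oddJacobi n N) ((max s.re (1 - s.re) + a) / 2) X := by
  set T := fun (a : ℕ) ↦
    mellinTail a (fun n ↦ oddJacobi n N) ((max s.re (1 - s.re) + a) / 2)
  have hN0 : 0 < (N : ℝ) := Nat.cast_pos.mpr (NeZero.pos N)
  have hX0 : 0 < X := hN0.trans_le hNX
  have hT (a) {Y : ℝ} (hY : 0 < Y) : 0 ≤ T a Y := mellinTail_nonneg a _ _ hY
  have hmono (a) : T a N ≤ T a X := mellinTail_mono a _ (fun n ↦ norm_oddJacobi_le n N)
    (by rw [oddJacobi_zero_left hN, Int.cast_zero]) hN0 hNX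
  have htheta : (fun n : ℕ ↦ χ n) = fun n ↦ (oddJacobi n N : ℂ) :=
    funext fun m ↦ by rw [hχ m, oddJacobi_of_odd m hodd]
  obtain ⟨a, ha, hpar⟩ := exists_parity (χ := χ)
  calc ‖χ.LFunction s‖ ≤ 2 * ‖Gammaℝ (s + a)‖⁻¹ * (N : ℝ) ^ max 0 (1 / 2 - s.re) * T a N := by
        simp only [T, ← htheta]
        exact norm_LFunction_le_mellinTail hN.ne' (Nat.lt_succ_iff.mp (Finset.mem_range.mp ha))
          (isPrimitive_of_eq_jacobiSym hχ hodd hsf) (inv_eq_self_of_eq_jacobiSym hχ) hpar s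
    _ ≤ 2 * ‖Gammaℝ (s + a)‖⁻¹ * X ^ max 0 (1 / 2 - s.re) * T a X := by
        gcongr
        exacts [hT a hN0, hmono a]
    _ = X ^ max 0 (1 / 2 - s.re) * (2 * ‖Gammaℝ (s + a)‖⁻¹ * T a X) := by ring
    _ ≤ X ^ max 0 (1 / 2 - s.re) * ∑ a ∈ Finset.range 2, 2 * ‖Gammaℝ (s + a)‖⁻¹ * T a X := by
        gcongr
        exact Finset.single_le_sum (f := fun a : ℕ ↦ 2 * ‖Gammaℝ (s + a)‖⁻¹ * T a X)
          (fun a _ ↦ mul_nonneg (by positivity) (hT a hX0)) ha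

end JacobiCharacter

/-! ### From squarefree to arbitrary moduli -/

lemma norm_one_sub_char_mul_cpow_le {N : ℕ} (χ : DirichletCharacter ℂ N) {p : ℕ} (hp : p.Prime)
    (s : ℂ) : ‖1 - χ p * (p : ℂ) ^ (-s)‖ ≤ (p : ℝ) ^ (1 + max 0 (-s.re)) := by
  have hp2 : (2 : ℝ) ≤ p := mod_cast hp.two_le
  have hp0 : (0 : ℝ) < p := by linarith
  have hone : 1 ≤ (p : ℝ) ^ max 0 (-s.re) := Real.one_le_rpow (by linarith) (le_max_left _ _)
  have hpow : (p : ℝ) ^ (-s.re) ≤ (p : ℝ) ^ max 0 (-s.re) :=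
    Real.rpow_le_rpow_of_exponent_le (by linarith) (le_max_right _ _)
  calc ‖1 - χ p * (p : ℂ) ^ (-s)‖ ≤ 1 + ‖χ p‖ * (p : ℝ) ^ (-s.re) := by
        refine (norm_sub_le _ _).trans_eq ?_
        rw [norm_one, norm_mul, norm_natCast_cpow_of_pos hp.pos, neg_re]
    _ ≤ (p : ℝ) ^ max 0 (-s.re) + 1 * (p : ℝ) ^ max 0 (-s.re) := by
        gcongr
        exact χ.norm_le_one _
    _ ≤ p * (p : ℝ) ^ max 0 (-s.re) := by nlinarith
    _ = (p : ℝ) ^ (1 + max 0 (-s.re)) := by rw [Real.rpow_add hp0, Real.rpow_one]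

lemma norm_LFunction_changeLevel_sq_mul_le {r b : ℕ} [NeZero r] [NeZero (b ^ 2 * r)]
    (χ : DirichletCharacter ℂ r) {s : ℂ} (hs : s ≠ 1) :
    ‖(χ.changeLevel (Nat.dvd_mul_left r (b ^ 2))).LFunction s‖ ≤
      (b : ℝ) ^ (1 + max 0 (-s.re)) * ‖χ.LFunction s‖ := by
  have hb : b ≠ 0 := fun h ↦ NeZero.ne (b ^ 2 * r) (by simp [h])
  have hsub : b.primeFactors ⊆ (b ^ 2 * r).primeFactors :=
    Nat.primeFactors_mono ((dvd_pow_self b two_ne_zero).mul_right r) (NeZero.ne _)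
  have htrivial (p) (hp : p ∈ (b ^ 2 * r).primeFactors) (hpb : p ∉ b.primeFactors) :
      ‖1 - χ p * (p : ℂ) ^ (-s)‖ = 1 := by
    obtain ⟨hprime, hdvd, -⟩ := Nat.mem_primeFactors.mp hp
    have hpr : p ∣ r := (hprime.dvd_mul.mp hdvd).resolve_left fun h ↦
      hpb (Nat.mem_primeFactors.mpr ⟨hprime, hprime.dvd_of_dvd_pow h, hb⟩)
    have hzero : χ p = 0 := χ.map_nonunit fun h ↦
      hprime.coprime_iff_not_dvd.mp ((ZMod.isUnit_iff_coprime p r).mp h) hpr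
    rw [hzero, zero_mul, sub_zero, norm_one]
  rw [DirichletCharacter.LFunction_changeLevel _ _ (.inr hs), norm_mul, norm_prod,
    ← Finset.prod_subset hsub htrivial, mul_comm]
  gcongr
  calc ∏ p ∈ b.primeFactors, ‖1 - χ p * (p : ℂ) ^ (-s)‖
      ≤ ∏ p ∈ b.primeFactors, (p : ℝ) ^ (1 + max 0 (-s.re)) :=
        Finset.prod_le_prod (fun _ _ ↦ norm_nonneg _) fun p hp ↦
          norm_one_sub_char_mul_cpow_le χ (Nat.prime_of_mem_primeFactors hp) s
    _ = ((∏ p ∈ b.primeFactors, p : ℕ) : ℝ) ^ (1 + max 0 (-s.re)) := by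
        rw [Real.finsetProd_rpow _ _ fun _ _ ↦ Nat.cast_nonneg _, Nat.cast_prod]
    _ ≤ (b : ℝ) ^ (1 + max 0 (-s.re)) := by
        gcongr
        exact Nat.le_of_dvd (Nat.pos_of_ne_zero hb) (Nat.prod_primeFactors_dvd b)

lemma eq_changeLevel_of_eq_jacobiSym {r b : ℕ} [NeZero r] [NeZero (b ^ 2 * r)]
    {χ : DirichletCharacter ℂ (b ^ 2 * r)} {ψ : DirichletCharacter ℂ r}
    (hχ : ∀ m : ℕ, χ m = (J(m | b ^ 2 * r) : ℤ)) (hψ : ∀ m : ℕ, ψ m = (J(m | r) : ℤ)) :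
    χ = ψ.changeLevel (Nat.dvd_mul_left r (b ^ 2)) := by
  have hb : b ≠ 0 := fun h ↦ NeZero.ne (b ^ 2 * r) (by simp [h])
  ext u
  obtain ⟨m, hm⟩ : ∃ m : ℕ, (m : ZMod (b ^ 2 * r)) = u := ⟨_, ZMod.natCast_zmod_val _⟩
  have hcop : m.Coprime (b ^ 2 * r) := (ZMod.isUnit_iff_coprime _ _).mp (hm ▸ u.isUnit)
  have hlevel := ψ.changeLevel_eq_cast_of_dvd' (Nat.dvd_mul_left r (b ^ 2)) (a := m)
    (Nat.isCoprime_iff_coprime.mpr hcop)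
  rw [Int.cast_natCast, Int.cast_natCast] at hlevel
  have hmb : Int.gcd m b = 1 := by
    rw [Int.gcd_natCast_natCast]
    exact hcop.coprime_dvd_right ((dvd_pow_self b two_ne_zero).mul_right r)
  rw [← hm, hlevel, hχ, hψ, jacobiSym.mul_right' _ (pow_ne_zero 2 hb) (NeZero.ne r),
    jacobiSym.pow_right, jacobiSym.sq_one hmb, one_mul]

/-- The absolute value of `L(s, χ)`, extended by zero to even moduli: a function of the modulus
that can be summed over all integers. -/
noncomputable def oddLNorm {n : ℕ} (χ : DirichletCharacter ℂ n) (s : ℂ) : ℝ :=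
  if h : Odd n then
    have : NeZero n := .of_pos h.pos
    ‖χ.LFunction s‖
  else 0

lemma oddLNorm_of_odd {n : ℕ} [NeZero n] (hn : Odd n) (χ : DirichletCharacter ℂ n) (s : ℂ) :
    oddLNorm χ s = ‖χ.LFunction s‖ := by
  rw [oddLNorm, dif_pos hn]

lemma oddLNorm_of_not_odd {n : ℕ} (hn : ¬Odd n) (χ : DirichletCharacter ℂ n) (s : ℂ) :
    oddLNorm χ s = 0 := by
  rw [oddLNorm, dif_neg hn]

lemma oddLNorm_nonneg {n : ℕ} (χ : DirichletCharacter ℂ n) (s : ℂ) : 0 ≤ oddLNorm χ s := by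
  unfold oddLNorm
  split_ifs <;> positivity

lemma sum_Icc_le_sum_sq_mul_squarefree {g : ℕ → ℝ} (hg : ∀ n, 0 ≤ g n) (X : ℝ) :
    ∑ n ∈ Finset.Icc 1 ⌊X⌋₊, g n ≤ ∑ b ∈ Finset.Icc 1 ⌊X⌋₊,
      ∑ r ∈ Finset.Icc 1 ⌊X / (b : ℝ) ^ 2⌋₊ with Squarefree r, g (b ^ 2 * r) := by
  set pairs := (Finset.Icc 1 ⌊X⌋₊).sigma
    fun b ↦ {r ∈ Finset.Icc 1 ⌊X / (b : ℝ) ^ 2⌋₊ | Squarefree r}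
  have hcover : Finset.Icc 1 ⌊X⌋₊ ⊆ pairs.image fun p ↦ p.1 ^ 2 * p.2 := by
    intro n hn
    obtain ⟨r, b, rfl, hr⟩ := Nat.sq_mul_squarefree n
    obtain ⟨hpos, hle⟩ := Finset.mem_Icc.mp hn
    have hX : ((b ^ 2 * r : ℕ) : ℝ) ≤ X := (Nat.le_floor_iff' (by lia)).mp hle
    have hb : 0 < b := Nat.pos_of_ne_zero (by rintro rfl; simp at hpos)
    have hr0 : 0 < r := Nat.pos_of_ne_zero hr.ne_zero
    refine Finset.mem_image.mpr ⟨⟨b, r⟩, ?_, rfl⟩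
    simp only [pairs, Finset.mem_sigma, Finset.mem_filter, Finset.mem_Icc]
    refine ⟨⟨hb, by nlinarith⟩, ⟨hr0, Nat.le_floor ?_⟩, hr⟩
    rw [le_div_iff₀ (by positivity), mul_comm]
    exact_mod_cast hX
  calc ∑ n ∈ Finset.Icc 1 ⌊X⌋₊, g n
      ≤ ∑ n ∈ pairs.image fun p ↦ p.1 ^ 2 * p.2, g n :=
        Finset.sum_le_sum_of_subset_of_nonneg hcover fun n _ _ ↦ hg n
    _ ≤ ∑ p ∈ pairs, g (p.1 ^ 2 * p.2) := Finset.sum_image_le_of_nonneg fun n _ ↦ hg n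
    _ = _ := Finset.sum_sigma _ _ _

lemma sum_le_of_sum_squarefree_le {g : ℕ → ℝ} (hg : ∀ n, 0 ≤ g n) {κ E : ℝ}
    (hsq : ∀ b r, g (b ^ 2 * r) ≤ (b : ℝ) ^ κ * g r) (hκE : κ + 1 < 2 * E) {C : ℝ} (hC : 0 ≤ C)
    (hsf : ∀ X : ℝ, 1 ≤ X → ∑ r ∈ Finset.Icc 1 ⌊X⌋₊ with Squarefree r, g r ≤ C * X ^ E)
    {X : ℝ} (hX : 0 ≤ X) :
    ∑ n ∈ Finset.Icc 1 ⌊X⌋₊, g n ≤ C * (∑' b : ℕ, (b : ℝ) ^ (κ - 2 * E)) * X ^ E := by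
  have hsf' (Y : ℝ) (hY : 0 ≤ Y) :
      ∑ r ∈ Finset.Icc 1 ⌊Y⌋₊ with Squarefree r, g r ≤ C * Y ^ E := by
    rcases lt_or_ge Y 1 with h | h
    · simp only [Nat.floor_eq_zero.mpr h, Finset.Icc_eq_empty_of_lt one_pos, Finset.filter_empty,
        Finset.sum_empty]
      positivity
    · exact hsf Y h
  have hinner (b) (hb : b ∈ Finset.Icc 1 ⌊X⌋₊) :
      ∑ r ∈ Finset.Icc 1 ⌊X / (b : ℝ) ^ 2⌋₊ with Squarefree r, g (b ^ 2 * r) ≤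
        C * X ^ E * (b : ℝ) ^ (κ - 2 * E) := by
    have hb0 : (0 : ℝ) < b := Nat.cast_pos.mpr (Finset.mem_Icc.mp hb).1
    calc _ ≤ (b : ℝ) ^ κ * (C * (X / (b : ℝ) ^ 2) ^ E) := by
          refine (Finset.sum_le_sum fun r _ ↦ hsq b r).trans ?_
          rw [← Finset.mul_sum]
          gcongr
          exact hsf' _ (by positivity)
      _ = C * X ^ E * (b : ℝ) ^ (κ - 2 * E) := by
          rw [Real.div_rpow hX (by positivity), Real.rpow_sub hb0, Real.rpow_mul hb0.le,
            Real.rpow_two]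
          ring
  calc ∑ n ∈ Finset.Icc 1 ⌊X⌋₊, g n ≤ _ := sum_Icc_le_sum_sq_mul_squarefree hg X
    _ ≤ ∑ b ∈ Finset.Icc 1 ⌊X⌋₊, C * X ^ E * (b : ℝ) ^ (κ - 2 * E) := Finset.sum_le_sum hinner
    _ ≤ C * X ^ E * ∑' b : ℕ, (b : ℝ) ^ (κ - 2 * E) := by
        rw [← Finset.mul_sum]
        gcongr
        exact (Real.summable_nat_rpow.mpr (by linarith)).sum_le_tsum _ fun _ _ ↦ by positivity
    _ = C * (∑' b : ℕ, (b : ℝ) ^ (κ - 2 * E)) * X ^ E := by ring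

lemma oddLNorm_le_sum_mellinTail {N : ℕ} {χ : DirichletCharacter ℂ N}
    (hχ : Odd N → ∀ m : ℕ, χ m = (J(m | N) : ℤ)) (hsf : Squarefree N) (hN : 1 < N) {X : ℝ}
    (hNX : N ≤ X) (s : ℂ) :
    oddLNorm χ s ≤ X ^ max 0 (1 / 2 - s.re) * ∑ a ∈ Finset.range 2, 2 * ‖Gammaℝ (s + a)‖⁻¹ *
      mellinTail a (fun n ↦ oddJacobi n N) ((max s.re (1 - s.re) + a) / 2) X := by
  have : NeZero N := ⟨hsf.ne_zero⟩
  have hX : 0 < X := (Nat.cast_pos.mpr (NeZero.pos N)).trans_le hNX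
  by_cases hodd : Odd N
  · rw [oddLNorm_of_odd hodd]
    exact norm_LFunction_le_sum_mellinTail (hχ hodd) hodd hsf hN hNX s
  · rw [oddLNorm_of_not_odd hodd]
    exact mul_nonneg (by positivity) (Finset.sum_nonneg fun a _ ↦
      mul_nonneg (by positivity) (mellinTail_nonneg a _ _ hX))

section JacobiFamily

variable {χ : (n : ℕ) → DirichletCharacter ℂ n}

lemma sum_squarefree_oddLNorm_le (hχ : ∀ n, Odd n → ∀ m : ℕ, χ n m = (J(m | n) : ℤ)) (s : ℂ)
    {η : ℝ} (hη : 0 < η) :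
    ∃ C : ℝ, 0 ≤ C ∧ ∀ X : ℝ, 1 ≤ X →
      ∑ r ∈ Finset.Icc 1 ⌊X⌋₊ with Squarefree r, oddLNorm (χ r) s ≤
        C * X ^ (max 0 (1 / 2 - s.re) + 1 + η) := by
  set v := fun a : ℕ ↦ (max s.re (1 - s.re) + a) / 2 with hv
  have hv_ge (a : ℕ) : (a : ℝ) / 2 + 1 / 4 ≤ v a := by
    simp only [hv]
    linarith [le_max_left s.re (1 - s.re), le_max_right s.re (1 - s.re)]
  choose C hC hmoment using fun a ↦ sum_mellinTail_oddJacobi_le (hv_ge a) hη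
  set G := fun a : ℕ ↦ 2 * ‖Gammaℝ (s + a)‖⁻¹
  have hG (a) : 0 ≤ G a := by positivity
  set M := max 0 (1 / 2 - s.re)
  refine ⟨oddLNorm (χ 1) s + ∑ a ∈ Finset.range 2, G a * C a, add_nonneg (oddLNorm_nonneg _ s)
    (Finset.sum_nonneg fun a _ ↦ mul_nonneg (hG a) (hC a)), fun X hX ↦ ?_⟩
  have hX0 : 0 < X := one_pos.trans_le hX
  set T := fun a r : ℕ ↦ mellinTail a (fun n ↦ oddJacobi n r) (v a) X
  have hterm (r) (hr : r ∈ Finset.Ioc 1 ⌊X⌋₊) : (if Squarefree r then oddLNorm (χ r) s else 0) ≤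
      X ^ M * ∑ a ∈ Finset.range 2, G a * T a r := by
    obtain ⟨hr1, hrX⟩ := Finset.mem_Ioc.mp hr
    split_ifs with hsf
    · exact oddLNorm_le_sum_mellinTail (hχ r) hsf hr1 ((Nat.le_floor_iff hX0.le).mp hrX) s
    · exact mul_nonneg (by positivity) (Finset.sum_nonneg fun a _ ↦
        mul_nonneg (hG a) (mellinTail_nonneg a _ _ hX0))
  calc ∑ r ∈ Finset.Icc 1 ⌊X⌋₊ with Squarefree r, oddLNorm (χ r) s
      ≤ oddLNorm (χ 1) s + ∑ r ∈ Finset.Ioc 1 ⌊X⌋₊, X ^ M * ∑ a ∈ Finset.range 2, G a * T a r := by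
        rw [Finset.sum_filter, ← Finset.add_sum_Ioc_eq_sum_Icc (Nat.one_le_floor_iff X |>.mpr hX),
          if_pos squarefree_one]
        gcongr with r hr
        exact hterm r hr
    _ = oddLNorm (χ 1) s + X ^ M * ∑ a ∈ Finset.range 2, G a * ∑ r ∈ Finset.Ioc 1 ⌊X⌋₊, T a r := by
        simp only [Finset.mul_sum]
        rw [Finset.sum_comm]
    _ ≤ oddLNorm (χ 1) s * X ^ (M + 1 + η) +
          X ^ M * ∑ a ∈ Finset.range 2, G a * (C a * X ^ (1 + η)) := by
        gcongr with a
        · exact le_mul_of_one_le_right (oddLNorm_nonneg _ s) (Real.one_le_rpow hX (by positivity))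
        · exact hmoment a X hX0
    _ = (oddLNorm (χ 1) s + ∑ a ∈ Finset.range 2, G a * C a) * X ^ (M + 1 + η) := by
        simp only [← mul_assoc, ← Finset.sum_mul]
        rw [add_assoc M, Real.rpow_add hX0]
        ring

lemma oddLNorm_sq_mul_le (hχ : ∀ n, Odd n → ∀ m : ℕ, χ n m = (J(m | n) : ℤ)) {s : ℂ} (hs : s ≠ 1)
    (b r : ℕ) :
    oddLNorm (χ (b ^ 2 * r)) s ≤ (b : ℝ) ^ (1 + max 0 (-s.re)) * oddLNorm (χ r) s := by
  by_cases hodd : Odd (b ^ 2 * r)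
  · have hr : Odd r := (Nat.odd_mul.mp hodd).2
    have : NeZero r := ⟨hr.pos.ne'⟩
    have : NeZero (b ^ 2 * r) := ⟨hodd.pos.ne'⟩
    have hχn (m : ℕ) : χ (b ^ 2 * r) m = (J(m | b ^ 2 * r) : ℤ) := hχ _ hodd m
    rw [oddLNorm_of_odd hodd, oddLNorm_of_odd hr,
      eq_changeLevel_of_eq_jacobiSym hχn (hχ r hr)]
    exact norm_LFunction_changeLevel_sq_mul_le _ hs
  · rw [oddLNorm_of_not_odd hodd]
    exact mul_nonneg (by positivity) (oddLNorm_nonneg _ _)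

theorem sum_oddLNorm_le (hχ : ∀ n, Odd n → ∀ m : ℕ, χ n m = (J(m | n) : ℤ)) {s : ℂ} (hs : s ≠ 1)
    {η : ℝ} (hη : 0 < η) :
    ∃ C : ℝ, 0 < C ∧ ∀ X : ℝ, 1 ≤ X → ∑ n ∈ Finset.Icc 1 ⌊X⌋₊, oddLNorm (χ n) s ≤
      C * X ^ (max 0 (1 / 2 - s.re) + 1 + η) := by
  obtain ⟨C, hC, hsf⟩ := sum_squarefree_oddLNorm_le hχ s hη
  set E := max 0 (1 / 2 - s.re) + 1 + η
  set K := ∑' b : ℕ, (b : ℝ) ^ (1 + max 0 (-s.re) - 2 * E)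
  have : 0 ≤ K := tsum_nonneg fun _ ↦ by positivity
  have hexp : 1 + max 0 (-s.re) + 1 < 2 * E := by
    have : max 0 (-s.re) ≤ 2 * max 0 (1 / 2 - s.re) := by
      rcases max_cases 0 (-s.re) with h | h <;> rcases max_cases 0 (1 / 2 - s.re) with h' | h' <;>
        linarith
    simp only [E]
    linarith
  refine ⟨C * K + 1, by positivity, fun X hX ↦ ?_⟩
  refine (sum_le_of_sum_squarefree_le (fun n ↦ oddLNorm_nonneg (χ n) s)
    (oddLNorm_sq_mul_le hχ hs) hexp hC hsf (by linarith)).trans ?_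
  gcongr
  linarith

end JacobiFamily

end QuadraticTwist

theorem statement5_general
    (χ : (n : ℕ) → DirichletCharacter ℂ n)
    (hχ : ∀ n : ℕ, Odd n → ∀ m : ℕ, χ n (m : ZMod n) = ((jacobiSym (m : ℤ) n : ℤ) : ℂ))
    (σ t : ℝ) (hst : (σ : ℂ) + (t : ℂ) * Complex.I ≠ 1) (ε : ℝ) (hε : 0 < ε) :
    ∃ C : ℝ, 0 < C ∧ ∀ X : ℝ, 1 ≤ X →
      (∑ n ∈ Finset.Icc 1 ⌊X⌋₊,
        if h : Odd n then
          haveI : NeZero n := .of_pos h.pos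
          ‖(χ n).LFunction ((σ : ℂ) + (t : ℂ) * Complex.I)‖ else 0)
        ≤ C * X ^ (max 1 (3 / 2 - σ) + ε) := by
  have hexp : max 0 (1 / 2 - ((σ : ℂ) + (t : ℂ) * Complex.I).re) + 1 + ε =
      max 1 (3 / 2 - σ) + ε := by
    have hre : ((σ : ℂ) + (t : ℂ) * Complex.I).re = σ := by simp
    rw [hre, ← max_add_add_right]
    ring_nf
  rw [← hexp]
  exact QuadraticTwist.sum_oddLNorm_le hχ hst hε

/-- average bound for `L(σ+it, (·/n))` over odd `n ≤ X`, where `(·/n)` is the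
Jacobi-symbol character modulo `n`. -/
theorem statement5
    (χ : (n : ℕ) → DirichletCharacter ℂ n)
    (hχ : ∀ n : ℕ, Odd n → ∀ m : ℕ, χ n (m : ZMod n) = ((jacobiSym (m : ℤ) n : ℤ) : ℂ))
    (σ t : ℝ) (hσ : 0 ≤ σ) (hst : (σ : ℂ) + (t : ℂ) * Complex.I ≠ 1)
    (ε : ℝ) (hε : 0 < ε) :
    ∃ C : ℝ, 0 < C ∧ ∀ X : ℝ, 2 ≤ X →
      (∑ n ∈ Finset.Icc 1 ⌊X⌋₊,
        if h : Odd n then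
          haveI : NeZero n := ⟨by rcases h with ⟨k, rfl⟩; omega⟩
          ‖(χ n).LFunction ((σ : ℂ) + (t : ℂ) * Complex.I)‖ else 0)
        ≤ C * X ^ (max 1 (3 / 2 - σ) + ε) := by
  obtain ⟨C, hC, hbound⟩ := statement5_general χ hχ σ t hst ε hε
  exact ⟨C, hC, fun X hX ↦ hbound X (by linarith)⟩
end
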